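/- Let Ω be a bounded open convex set in ℝ² containing the origin in its interior, and suppose that sup_{θ∈S¹} sup_{δ>0} δ^{-1/2} μ(θ,δ) < ∞ (curvature bounded below in the generalized sense). Then there is a constant C_Ω such that for all R ≥ 2 and all h with R^{1/2} ≤ h ≤ R one has 𝒢_Ω(R,h) ≤ C_Ω R^{1/2}. -/

import Mathlib

/-!
Write `R = Q ^ 4`. It is enough to show `∫ |E|² ≪ R √R` over `[R, R + √R]`, since a longer interval
is cut into pieces of length `√R`, and only large `R` matters.

*Smoothing.* By convexity, the count in `tΩ` lies between the averages of the counts in translates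
of `(t ± ε)Ω` over `±εΩ`, with `ε = R^(-1/2)`. By Parseval's identity on the torus these averages
are absolutely convergent series `∑ₖ T² χ̂(Tk) aₖ` with `T = t ± ε` and `|aₖ| ≪ min(1, √R / |k|)`.
The term `k = 0` is the area of `TΩ`, within `O(√R)` of that of `tΩ`.

*Chord lengths.* `χ̂(Tk)` is the one-dimensional Fourier transform at `T` of the function `S k` of
chord lengths orthogonal to `k`. This function is concave on its support, whose right end is
`ρ*(k)`, and the curvature hypothesis bounds it by a multiple of `|k|^(-3/2) √s` at depth `s`. For
`T` near `R`, replacing `S k` by its second difference with step `1 / (2R)` only multiplies the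
transform by a factor close to `-4`. The second difference has `L¹` mass `≪ R^(-3/2) |k|^(-3/2)`,
concentrated near the two ends of the support; the part at distance more than `R^(-1/2)` from both
ends is so small that it may be summed trivially.

*Large sieve.* Smoothing the integral over an interval of length about `√R` by a band-limited
majorant, only pairs of frequencies with `|ρ*(k) - ρ*(l)| ≪ R^(-1/2)` contribute. On a dyadic block
`|k| ~ r` the frequencies are divided into about `r / J` angular sectors, with Cauchy–Schwarz over
the sectors, so that the remaining pairs satisfy `|k - l| ≤ J`. For `r > √R` take `J = 1`; the decay
of `aₖ` makes the sum over blocks converge.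

*Gain for small frequencies.* For `r ≤ √R`, `J` is a small power of `r`, and the loss from
Cauchy–Schwarz is beaten if the pairs `(k, k + j)` with `0 < |j| ≤ J` contribute no more than the
diagonal. The mass at the right end of `S k` is governed by a chord at depth `1 / R`. A long chord
forces the second difference `ρ*(k + j) + ρ*(k - j) - 2 ρ*(k)` to be large, because `j` is
transversal to `k` whenever `ρ*(k + j)` is close to `ρ*(k)`. After truncating `ρ*(k + j) - ρ*(k)` at
height `≪ R^(-1/2)`, the second differences telescope along `j`, so their sum over a box is small.
The blocks are combined by a weighted Cauchy–Schwarz inequality.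
-/

open MeasureTheory Set
open scoped Pointwise RealInnerProductSpace NNReal ENNReal

noncomputable section

abbrev E2 := EuclideanSpace ℝ (Fin 2)

/-- The embedding of an integer vector into the Euclidean plane. -/
def ek (k : Fin 2 → ℤ) : E2 := (WithLp.equiv 2 (Fin 2 → ℝ)).symm fun i => (k i : ℝ)

/-- Number of lattice points in a set. -/
def latticeCount (S : Set E2) : ℕ := Nat.card {k : Fin 2 → ℤ | ek k ∈ S}

/-- The lattice rest `E_Ω(t) = card(tΩ ∩ ℤ²) − t²·area(Ω)`. -/
def latticeRest (Ω : Set E2) (t : ℝ) : ℝ :=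
  (latticeCount (t • Ω) : ℝ) - t ^ 2 * (volume Ω).toReal

/-- The mean square discrepancy `𝒢_Ω(R,h) = ((1/h)∫_R^{R+h} |E_Ω(t)|² dt)^{1/2}`. -/
def meanSquare (Ω : Set E2) (R h : ℝ) : ℝ :=
  Real.sqrt ((1 / h) * ∫ t in R..(R + h), (latticeRest Ω t) ^ 2)

/-- The support function `ρ*(ξ) = sup {⟨x,ξ⟩ : x ∈ Ω}`. -/
def suppFn (Ω : Set E2) (ξ : E2) : ℝ := sSup ((fun x => ⟪x, ξ⟫) '' Ω)

/-- `μ(θ,δ)`, the diameter of the cap `𝒞(θ,δ) = {x ∈ ∂Ω : ⟨x,θ⟩ ≥ ρ*(θ) − δ}`. -/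
def capDiam (Ω : Set E2) (θ : E2) (δ : ℝ) : ℝ :=
  Metric.diam {x ∈ frontier Ω | suppFn Ω θ - δ ≤ ⟪x, θ⟫}

/-- Curvature bounded below in the generalized sense:
`sup_{θ∈S¹} sup_{δ>0} δ^{-1/2} μ(θ,δ) < ∞`. -/
def CurvBddBelow (Ω : Set E2) : Prop :=
  ∃ K : ℝ, ∀ θ : E2, ‖θ‖ = 1 → ∀ δ : ℝ, 0 < δ → capDiam Ω θ δ ≤ K * Real.sqrt δ

open scoped FourierTransform ComplexConjugate

/-! ### The Fourier transform of integrable functions -/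

section Fourier

variable {V E : Type*} [NormedAddCommGroup V] [InnerProductSpace ℝ V] [MeasurableSpace V]
  [BorelSpace V] [FiniteDimensional ℝ V] [NormedAddCommGroup E] [NormedSpace ℂ E]

lemma continuous_fourier_of_integrable {f : V → E} (hf : Integrable f) : Continuous (𝓕 f) :=
  VectorFourier.fourierIntegral_continuous Real.continuous_fourierChar
    (by simpa using continuous_inner) hf

lemma norm_fourier_le_integral_norm (f : V → E) (w : V) : ‖𝓕 f w‖ ≤ ∫ v, ‖f v‖ :=
  VectorFourier.norm_fourierIntegral_le_integral_norm Real.fourierChar volume (innerₗ V) f w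

lemma fourier_add_apply {f g : V → E} (hf : Integrable f) (hg : Integrable g) (w : V) :
    𝓕 (fun v ↦ f v + g v) w = 𝓕 f w + 𝓕 g w :=
  congrFun (VectorFourier.fourierIntegral_add Real.continuous_fourierChar
    (by simpa using continuous_inner) hf hg) w

lemma fourier_const_mul_apply (a : ℂ) (f : V → ℂ) (w : V) :
    𝓕 (fun v ↦ a * f v) w = a * 𝓕 f w := by
  rw [Real.fourier_eq, Real.fourier_eq, ← integral_const_mul]
  simp only [mul_smul_comm]

lemma conj_fourierChar (x : ℝ) : conj (Real.fourierChar x : ℂ) = Real.fourierChar (-x) := by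
  rw [AddChar.map_neg_eq_inv, Circle.coe_inv_eq_conj]

lemma conj_fourier (f : V → ℂ) (w : V) : conj (𝓕 f w) = 𝓕 (fun v ↦ conj (f v)) (-w) := by
  rw [Real.fourier_eq, Real.fourier_eq, ← integral_conj]
  simp only [Circle.smul_def, smul_eq_mul, map_mul, conj_fourierChar, inner_neg_right]

lemma fourier_comp_neg (f : V → E) (w : V) : 𝓕 (fun v ↦ f (-v)) w = 𝓕 f (-w) := by
  rw [Real.fourier_eq, Real.fourier_eq, ← integral_neg_eq_self]
  simp only [inner_neg_left, inner_neg_right, neg_neg]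

lemma ofReal_re_fourier_of_even {f : V → ℝ} (hf : ∀ v, f (-v) = f v) (w : V) :
    ((𝓕 (fun v ↦ (f v : ℂ)) w).re : ℂ) = 𝓕 (fun v ↦ (f v : ℂ)) w := by
  rw [← Complex.conj_eq_iff_re, conj_fourier]
  simp only [Complex.conj_ofReal, ← fourier_comp_neg (fun v ↦ (f v : ℂ)), hf]

end Fourier

lemma fourier_comp_add_right_apply (f : ℝ → ℂ) (a T : ℝ) :
    𝓕 (fun u ↦ f (u + a)) T = Real.fourierChar (a * T) * 𝓕 f T := by
  refine (congrFun (VectorFourier.fourierIntegral_comp_add_right Real.fourierChar volume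
    (innerₗ ℝ) f a) T).trans ?_
  rw [innerₗ_apply_apply, real_inner_comm]
  rfl

lemma fourier_comp_sub_div {η : ℝ → ℝ} {L : ℝ} (hL : 0 < L) (T₀ y : ℝ) :
    𝓕 (fun T ↦ (η ((T - T₀) / L) : ℂ)) y
      = L * Real.fourierChar (-(T₀ * y)) * 𝓕 (fun x ↦ (η x : ℂ)) (L * y) := by
  have hscale : 𝓕 (fun T ↦ (η (T / L) : ℂ)) y = L * 𝓕 (fun x ↦ (η x : ℂ)) (L * y) := by
    rw [Real.fourier_real_eq, Real.fourier_real_eq]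
    have h := Measure.integral_comp_div
      (fun x ↦ Real.fourierChar (-(x * (L * y))) • (η x : ℂ)) L
    rw [abs_of_pos hL, Complex.real_smul] at h
    rw [← h]
    congr! 5 with x
    field_simp
  rw [mul_right_comm, ← hscale, mul_comm, ← neg_mul,
    ← fourier_comp_add_right_apply (fun T ↦ (η (T / L) : ℂ))]
  simp only [sub_eq_add_neg]

section PairIdentity

variable {f g φ : ℝ → ℂ}

lemma fourier_mul_conj_fourier (f g : ℝ → ℂ) (T : ℝ) :
    𝓕 f T * conj (𝓕 g T)
      = ∫ z : ℝ × ℝ, f z.1 * conj (g z.2) * Real.fourierChar (-((z.1 - z.2) * T)) := by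
  rw [conj_fourier, Real.fourier_real_eq, Real.fourier_real_eq, ← integral_prod_mul]
  congr 1 with z
  rw [show -((z.1 - z.2) * T) = -(z.1 * T) + -(z.2 * -T) by ring, AddChar.map_add_eq_mul,
    Circle.coe_mul]
  simp only [Circle.smul_def, smul_eq_mul]
  ring

lemma integral_fourier_mul_conj_fourier_mul (hf : Integrable f) (hg : Integrable g)
    (hφ : Integrable φ) :
    ∫ T, 𝓕 f T * conj (𝓕 g T) * φ T
      = ∫ z : ℝ × ℝ, f z.1 * conj (g z.2) * 𝓕 φ (z.1 - z.2) := by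
  have hconj : Integrable fun v ↦ conj (g v) :=
    Complex.conjCLE.toContinuousLinearMap.integrable_comp hg
  have hprod : Integrable fun q : ℝ × (ℝ × ℝ) ↦ f q.2.1 * conj (g q.2.2) *
      Real.fourierChar (-((q.2.1 - q.2.2) * q.1)) * φ q.1 := by
    have h := (hφ.mul_prod (hf.mul_prod hconj)).mul_bdd (c := 1)
      (g := fun q : ℝ × (ℝ × ℝ) ↦ (Real.fourierChar (-((q.2.1 - q.2.2) * q.1)) : ℂ))
      (by fun_prop) (.of_forall fun q ↦ (Circle.norm_coe _).le)
    refine h.congr (.of_forall fun q ↦ ?_)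
    dsimp only
    ring
  calc ∫ T, 𝓕 f T * conj (𝓕 g T) * φ T
      = ∫ T, ∫ z : ℝ × ℝ, f z.1 * conj (g z.2) *
          Real.fourierChar (-((z.1 - z.2) * T)) * φ T := by
        simp only [fourier_mul_conj_fourier, integral_mul_const]
    _ = ∫ z : ℝ × ℝ, ∫ T, f z.1 * conj (g z.2) *
          Real.fourierChar (-((z.1 - z.2) * T)) * φ T := integral_integral_swap hprod
    _ = ∫ z : ℝ × ℝ, f z.1 * conj (g z.2) * 𝓕 φ (z.1 - z.2) := by
        congr 1 with z
        simp only [mul_assoc, integral_const_mul, Real.fourier_real_eq, Circle.smul_def,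
          smul_eq_mul, mul_comm (z.1 - z.2)]

lemma integrable_fourier_mul_conj_fourier_mul (hf : Integrable f) (hg : Integrable g)
    (hφ : Integrable φ) : Integrable fun T ↦ 𝓕 f T * conj (𝓕 g T) * φ T := by
  refine hφ.bdd_mul (c := (∫ u, ‖f u‖) * ∫ u, ‖g u‖) ?_ (.of_forall fun T ↦ ?_)
  · exact ((continuous_fourier_of_integrable hf).mul
      (Complex.continuous_conj.comp (continuous_fourier_of_integrable hg))).aestronglyMeasurable
  · rw [norm_mul, RCLike.norm_conj]
    gcongr <;> exact norm_fourier_le_integral_norm _ _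

lemma norm_integral_fourier_mul_conj_fourier_mul_le (hf : Integrable f) (hg : Integrable g)
    (hφ : Integrable φ) :
    ‖∫ T, 𝓕 f T * conj (𝓕 g T) * φ T‖ ≤ (∫ T, ‖φ T‖) * ((∫ u, ‖f u‖) * ∫ u, ‖g u‖) := by
  rw [mul_comm, ← integral_prod_mul, ← integral_mul_const,
    integral_fourier_mul_conj_fourier_mul hf hg hφ]
  refine norm_integral_le_of_norm_le ((hf.norm.mul_prod hg.norm).mul_const _)
    (.of_forall fun z ↦ ?_)
  rw [norm_mul, norm_mul, RCLike.norm_conj]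
  gcongr
  exact norm_fourier_le_integral_norm _ _

end PairIdentity

/-! ### A band-limited majorant -/

/-- `η` is an integrable majorant of the indicator function of `I` whose Fourier transform is
supported in `[-β, β]`, as used in the large sieve to discard well separated frequencies. -/
structure IsBandLimitedMajorant (η : ℝ → ℝ) (I : Set ℝ) (β : ℝ) : Prop where
  integrable : Integrable η
  nonneg : ∀ x, 0 ≤ η x
  one_le : ∀ x ∈ I, 1 ≤ η x
  fourier_eq_zero : ∀ y, β ≤ |y| → 𝓕 (fun x ↦ (η x : ℂ)) y = 0

lemma IsBandLimitedMajorant.integrable_ofReal {η : ℝ → ℝ} {I : Set ℝ} {β : ℝ}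
    (hη : IsBandLimitedMajorant η I β) : Integrable fun x ↦ (η x : ℂ) :=
  hη.integrable.ofReal

lemma IsBandLimitedMajorant.comp_sub_div {η : ℝ → ℝ}
    (hη : IsBandLimitedMajorant η (Icc (-1) 1) 1) {L : ℝ} (hL : 0 < L) (T₀ : ℝ) :
    IsBandLimitedMajorant (fun T ↦ η ((T - T₀) / L)) (Icc (T₀ - L) (T₀ + L)) (1 / L) where
  integrable := (hη.integrable.comp_div hL.ne').comp_sub_right T₀
  nonneg _ := hη.nonneg _
  one_le T hT := by
    refine hη.one_le _ ⟨?_, ?_⟩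
    · rw [le_div_iff₀ hL]; linarith [hT.1]
    · rw [div_le_one hL]; linarith [hT.2]
  fourier_eq_zero y hy := by
    rw [fourier_comp_sub_div hL, hη.fourier_eq_zero, mul_zero]
    rwa [abs_mul, abs_of_pos hL, ← div_le_iff₀' hL]

lemma half_integral_le_re_fourier {f : ℝ → ℝ} (hf : Integrable f) (hnn : ∀ u, 0 ≤ f u)
    (hsupp : ∀ u, 1 / 6 ≤ |u| → f u = 0) {x : ℝ} (hx : |x| ≤ 1) :
    (∫ u, f u) / 2 ≤ (𝓕 (fun u ↦ (f u : ℂ)) x).re := by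
  have hint : Integrable fun u ↦ Real.fourierChar (-(u * x)) • (f u : ℂ) := by
    simpa [mul_comm] using (Real.fourierIntegral_convergent_iff (μ := volume) x).2 hf.ofReal
  rw [Real.fourier_real_eq, ← RCLike.re_eq_complex_re, ← integral_re hint, ← integral_div]
  refine integral_mono (hf.div_const 2) hint.re fun u ↦ ?_
  rw [RCLike.re_eq_complex_re, Circle.smul_def, smul_eq_mul, Complex.re_mul_ofReal,
    Real.fourierChar_apply, Complex.exp_ofReal_mul_I_re]
  rcases lt_or_ge |u| (1 / 6) with hu | hu
  · have hphase : |2 * Real.pi * -(u * x)| ≤ Real.pi / 3 := by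
      have hux : |u * x| ≤ 1 / 6 := by
        rw [abs_mul]
        nlinarith [abs_nonneg x, abs_nonneg u]
      rw [abs_mul, abs_neg, abs_of_pos Real.two_pi_pos]
      nlinarith [Real.pi_pos]
    have hcos : 1 / 2 ≤ Real.cos (2 * Real.pi * -(u * x)) := by
      rw [← Real.cos_abs, ← Real.cos_pi_div_three]
      exact Real.cos_le_cos_of_nonneg_of_le_pi (abs_nonneg _) (by linarith [Real.pi_pos]) hphase
    nlinarith [hnn u]
  · simp [hsupp u hu]

open SchwartzMap in
/-- The majorant is `4 b̂²` for a smooth even probability density `b` supported in `[-1/6, 1/6]`: by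
Fourier inversion its transform is `4 b ⋆ b` reflected. -/
lemma exists_isBandLimitedMajorant : ∃ η : ℝ → ℝ, IsBandLimitedMajorant η (Icc (-1) 1) 1 := by
  let φ : ContDiffBump (0 : ℝ) := ⟨1 / 12, 1 / 6, by norm_num, by norm_num⟩
  let b : ℝ → ℝ := φ.normed volume
  have hb_supp : ∀ u, 1 / 6 ≤ |u| → b u = 0 := fun u hu ↦ Function.notMem_support.1 <| by
    rwa [φ.support_normed_eq (μ := volume), Metric.mem_ball, dist_zero_right, not_lt]
  let B : 𝓢(ℝ, ℂ) := ((φ.hasCompactSupport_normed (μ := volume)).comp_left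
    Complex.ofReal_zero).toSchwartzMap
    (Complex.ofRealCLM.contDiff.comp φ.contDiff_normed)
  have hB_real : ∀ x, ((𝓕 B x).re : ℂ) = 𝓕 B x := fun x ↦ by
    rw [SchwartzMap.fourier_coe]
    exact ofReal_re_fourier_of_even φ.normed_neg x
  let g : 𝓢(ℝ, ℂ) := convolution (ContinuousLinearMap.mul ℂ ℂ) B B
  have hFg : ∀ x, 𝓕 g x = ((𝓕 B x).re : ℂ) ^ 2 := fun x ↦ by
    rw [hB_real]
    simp [g, fourier_convolution, sq]
  have hg_inv : ∀ y, 𝓕 (fun x ↦ 𝓕 g x) y = g (-y) := fun y ↦ by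
    conv_rhs => rw [← FourierTransform.fourierInv_fourier_eq (F := 𝓢(ℝ, ℂ)) g]
    rw [SchwartzMap.fourierInv_coe, Real.fourierInv_eq_fourier_neg, neg_neg]
  have hg_supp : ∀ y, 1 ≤ |y| → g y = 0 := fun y hy ↦ by
    rw [convolution_apply]
    refine integral_eq_zero_of_ae (.of_forall fun t ↦ ?_)
    change (b t : ℂ) * (b (y - t) : ℂ) = 0
    rcases lt_or_ge |t| (1 / 6) with ht | ht
    · rw [hb_supp (y - t) (by linarith [abs_sub_abs_le_abs_sub y t]), Complex.ofReal_zero, mul_zero]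
    · rw [hb_supp t ht, Complex.ofReal_zero, zero_mul]
  refine ⟨fun x ↦ 4 * (𝓕 B x).re ^ 2, ?_, fun x ↦ by positivity, fun x hx ↦ ?_, fun y hy ↦ ?_⟩
  · refine ((𝓕 g).integrable (μ := volume)).re.const_mul 4 |>.congr (.of_forall fun x ↦ ?_)
    simp [hFg, ← Complex.ofReal_pow]
  · have hlow := half_integral_le_re_fourier φ.integrable_normed φ.nonneg_normed hb_supp
      (abs_le.2 hx)
    rw [φ.integral_normed] at hlow
    change 1 / 2 ≤ (𝓕 (⇑B) x).re at hlow
    rw [← SchwartzMap.fourier_coe] at hlow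
    nlinarith
  · have hη : (fun x ↦ ((4 * (𝓕 B x).re ^ 2 : ℝ) : ℂ)) = fun x ↦ 4 * 𝓕 g x := by
      ext x
      rw [hFg]
      push_cast
      ring
    rw [hη, fourier_const_mul_apply, hg_inv, hg_supp _ (by rwa [abs_neg]), mul_zero]

/-! ### The large sieve -/

section LargeSieve

variable {ι : Type*} {η : ℝ → ℝ} {I : Set ℝ} {β : ℝ} {s : Finset ι} {G : ι → ℝ → ℂ}

lemma norm_sum_sq_mul_eq_sum_mul_conj (z : ι → ℂ) (s : Finset ι) (x : ℝ) :
    ((‖∑ i ∈ s, z i‖ ^ 2 * x : ℝ) : ℂ) = ∑ i ∈ s, ∑ j ∈ s, z i * conj (z j) * x := by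
  push_cast
  rw [← Complex.mul_conj', map_sum, Finset.sum_mul_sum, Finset.sum_mul]
  simp only [Finset.sum_mul]

namespace IsBandLimitedMajorant

lemma integral_fourier_mul_conj_fourier_eq_zero (hη : IsBandLimitedMajorant η I β) {f g : ℝ → ℂ}
    (hf : Integrable f) (hg : Integrable g)
    (hsep : ∀ u v, f u ≠ 0 → g v ≠ 0 → β ≤ |u - v|) :
    ∫ T, 𝓕 f T * conj (𝓕 g T) * (η T : ℂ) = 0 := by
  rw [integral_fourier_mul_conj_fourier_mul hf hg hη.integrable_ofReal]
  refine integral_eq_zero_of_ae (.of_forall fun z ↦ ?_)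
  by_cases hu : f z.1 = 0
  · simp [hu]
  by_cases hv : g z.2 = 0
  · simp [hv]
  · simp [hη.fourier_eq_zero _ (hsep _ _ hu hv)]

lemma integrable_norm_sum_fourier_sq_mul (hη : IsBandLimitedMajorant η I β)
    (hG : ∀ i ∈ s, Integrable (G i)) :
    Integrable fun T ↦ ‖∑ i ∈ s, 𝓕 (G i) T‖ ^ 2 * η T := by
  have h : Integrable fun T ↦ ((‖∑ i ∈ s, 𝓕 (G i) T‖ ^ 2 * η T : ℝ) : ℂ) := by
    simp only [norm_sum_sq_mul_eq_sum_mul_conj]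
    exact integrable_finsetSum _ fun i hi ↦ integrable_finsetSum _ fun j hj ↦
      integrable_fourier_mul_conj_fourier_mul (hG i hi) (hG j hj) hη.integrable_ofReal
  exact h.re

lemma setIntegral_norm_sum_fourier_sq_le_norm_integral (hη : IsBandLimitedMajorant η I β)
    (hI : MeasurableSet I) (hG : ∀ i ∈ s, Integrable (G i)) :
    ∫ T in I, ‖∑ i ∈ s, 𝓕 (G i) T‖ ^ 2
      ≤ ‖∑ i ∈ s, ∑ j ∈ s, ∫ T, 𝓕 (G i) T * conj (𝓕 (G j) T) * (η T : ℂ)‖ := by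
  have hint := hη.integrable_norm_sum_fourier_sq_mul hG
  have hpair := fun i (hi : i ∈ s) j (hj : j ∈ s) ↦
    integrable_fourier_mul_conj_fourier_mul (hG i hi) (hG j hj) hη.integrable_ofReal
  calc ∫ T in I, ‖∑ i ∈ s, 𝓕 (G i) T‖ ^ 2
      ≤ ∫ T in I, ‖∑ i ∈ s, 𝓕 (G i) T‖ ^ 2 * η T := by
        refine integral_mono_of_nonneg (.of_forall fun T ↦ by positivity) hint.integrableOn ?_
        filter_upwards [ae_restrict_mem hI] with T hT
        exact le_mul_of_one_le_right (by positivity) (hη.one_le T hT)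
    _ ≤ ∫ T, ‖∑ i ∈ s, 𝓕 (G i) T‖ ^ 2 * η T :=
        setIntegral_le_integral hint
          (.of_forall fun T ↦ mul_nonneg (by positivity) (hη.nonneg T))
    _ ≤ ‖∫ T, ((‖∑ i ∈ s, 𝓕 (G i) T‖ ^ 2 * η T : ℝ) : ℂ)‖ := by
        rw [integral_complex_ofReal, Complex.norm_real]
        exact le_abs_self _
    _ = ‖∑ i ∈ s, ∑ j ∈ s, ∫ T, 𝓕 (G i) T * conj (𝓕 (G j) T) * (η T : ℂ)‖ := by
        simp only [norm_sum_sq_mul_eq_sum_mul_conj]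
        rw [integral_finsetSum _ fun i hi ↦ integrable_finsetSum _ (hpair i hi)]
        congr 1
        exact Finset.sum_congr rfl fun i hi ↦ integral_finsetSum _ (hpair i hi)

theorem setIntegral_norm_sum_fourier_sq_le (hη : IsBandLimitedMajorant η I β)
    (hI : MeasurableSet I) (hG : ∀ i ∈ s, Integrable (G i)) {m c : ι → ℝ}
    (hm : ∀ i ∈ s, ∫ u, ‖G i u‖ ≤ m i) {w p : ℝ}
    (hsupp : ∀ i ∈ s, ∀ u, G i u ≠ 0 → u ∈ Icc (c i - w) (c i + p)) :
    ∫ T in I, ‖∑ i ∈ s, 𝓕 (G i) T‖ ^ 2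
      ≤ (∫ T, η T) * ∑ i ∈ s, ∑ j ∈ s, if |c i - c j| < w + p + β then m i * m j else 0 := by
  refine (hη.setIntegral_norm_sum_fourier_sq_le_norm_integral hI hG).trans ?_
  simp only [Finset.mul_sum]
  refine (norm_sum_le _ _).trans (Finset.sum_le_sum fun i hi ↦
    (norm_sum_le _ _).trans (Finset.sum_le_sum fun j hj ↦ ?_))
  have hη_norm : ∫ T, ‖(η T : ℂ)‖ = ∫ T, η T := by
    simp only [Complex.norm_real, Real.norm_of_nonneg (hη.nonneg _)]
  split_ifs with hclose
  · refine (norm_integral_fourier_mul_conj_fourier_mul_le (hG i hi) (hG j hj)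
      hη.integrable_ofReal).trans ?_
    rw [hη_norm]
    gcongr
    · exact integral_nonneg hη.nonneg
    · exact (integral_nonneg fun u ↦ norm_nonneg _).trans (hm i hi)
    · exact hm i hi
    · exact hm j hj
  · rw [hη.integral_fourier_mul_conj_fourier_eq_zero (hG i hi) (hG j hj), norm_zero, mul_zero]
    intro u v hu hv
    obtain ⟨hu₁, hu₂⟩ := hsupp i hi u hu
    obtain ⟨hv₁, hv₂⟩ := hsupp j hj v hv
    rcases le_abs.1 (not_lt.1 hclose) with h | h
    · exact le_abs.2 (.inl (by linarith))
    · exact le_abs.2 (.inr (by linarith))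

end IsBandLimitedMajorant

/-- The constant of `large_sieve`: the mass of a majorant of `[-1, 1]` whose Fourier transform is
supported in `[-1, 1]`. -/
def largeSieveConst : ℝ := ∫ x, exists_isBandLimitedMajorant.choose x

lemma largeSieveConst_nonneg : 0 ≤ largeSieveConst :=
  integral_nonneg exists_isBandLimitedMajorant.choose_spec.nonneg

/-- If `G i` lives on `[c i - w, c i + p]`, then only the pairs with `|c i - c j| < w + p + 1 / L`
contribute to the mean square of `∑ a i * 𝓕 (G i)` over an interval of length `2L`. -/
theorem large_sieve (hG : ∀ i ∈ s, Integrable (G i)) (a : ι → ℂ) {m c : ι → ℝ}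
    (hm : ∀ i ∈ s, ∫ u, ‖G i u‖ ≤ m i) {w p : ℝ}
    (hsupp : ∀ i ∈ s, ∀ u, G i u ≠ 0 → u ∈ Icc (c i - w) (c i + p))
    {L : ℝ} (hL : 0 < L) (T₀ : ℝ) :
    ∫ T in (T₀ - L)..(T₀ + L), ‖∑ i ∈ s, a i * 𝓕 (G i) T‖ ^ 2
      ≤ largeSieveConst * L * ∑ i ∈ s, ∑ j ∈ s,
        if |c i - c j| < w + p + 1 / L then ‖a i‖ * m i * (‖a j‖ * m j) else 0 := by
  have hmass : ∫ T, exists_isBandLimitedMajorant.choose ((T - T₀) / L)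
      = largeSieveConst * L := by
    rw [integral_sub_right_eq_self (fun T ↦ exists_isBandLimitedMajorant.choose (T / L)),
      Measure.integral_comp_div, abs_of_pos hL, smul_eq_mul, mul_comm, largeSieveConst]
  rw [← hmass, intervalIntegral.integral_of_le (by linarith), ← integral_Icc_eq_integral_Ioc]
  simp only [← fourier_const_mul_apply]
  refine (exists_isBandLimitedMajorant.choose_spec.comp_sub_div hL T₀)
    |>.setIntegral_norm_sum_fourier_sq_le measurableSet_Icc (fun i hi ↦ (hG i hi).const_mul (a i))
    (fun i hi ↦ ?_) (fun i hi u hu ↦ hsupp i hi u (right_ne_zero_of_mul hu))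
  simp only [norm_mul, integral_const_mul]
  exact mul_le_mul_of_nonneg_left (hm i hi) (norm_nonneg _)

end LargeSieve

/-! ### Concave profiles and their second differences -/

/-- The symmetric second difference of `S` with step `p`. -/
def secondDiff (S : ℝ → ℝ) (p u : ℝ) : ℝ := S (u + p) + S (u - p) - 2 * S u

section SecondDiff

variable {S : ℝ → ℝ}

lemma integrable_secondDiff (hS : Integrable S) (p : ℝ) : Integrable (secondDiff S p) :=
  ((hS.comp_add_right p).add (hS.comp_sub_right p)).sub (hS.const_mul 2)

lemma secondDiff_comp_neg (S : ℝ → ℝ) (p u : ℝ) :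
    secondDiff (fun v ↦ S (-v)) p u = secondDiff S p (-u) := by
  simp only [secondDiff, neg_add, neg_sub', sub_neg_eq_add, ← sub_eq_add_neg]
  ring

lemma fourier_secondDiff (hS : Integrable S) (p T : ℝ) :
    𝓕 (fun u ↦ (secondDiff S p u : ℂ)) T
      = ((2 * Real.cos (2 * Real.pi * (p * T)) - 2 : ℝ) : ℂ) * 𝓕 (fun u ↦ (S u : ℂ)) T := by
  have hshift : ∀ a, Integrable fun u ↦ (S (u + a) : ℂ) := fun a ↦ (hS.comp_add_right a).ofReal
  have hpair : Integrable fun u ↦ (S (u + p) : ℂ) + S (u + -p) := (hshift p).add (hshift (-p))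
  have hcenter : Integrable fun u ↦ -2 * (S u : ℂ) := Integrable.const_mul hS.ofReal _
  have hsum : (fun u ↦ (secondDiff S p u : ℂ))
      = fun u ↦ ((S (u + p) : ℂ) + S (u + -p)) + (-2) * S u := by
    ext u
    simp only [secondDiff, sub_eq_add_neg]
    push_cast
    ring
  have hcos : (Real.fourierChar (p * T) : ℂ) + Real.fourierChar (-p * T)
      = ((2 * Real.cos (2 * Real.pi * (p * T)) : ℝ) : ℂ) := by
    rw [Real.fourierChar_apply, Real.fourierChar_apply]
    push_cast
    rw [Complex.two_cos]
    ring_nf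
  rw [hsum, fourier_add_apply hpair hcenter,
    fourier_add_apply (hshift p) (hshift (-p)), fourier_const_mul_apply,
    fourier_comp_add_right_apply (fun u ↦ (S u : ℂ)),
    fourier_comp_add_right_apply (fun u ↦ (S u : ℂ))]
  push_cast at hcos ⊢
  linear_combination 𝓕 (fun u ↦ (S u : ℂ)) T * hcos

lemma integral_Ioi_secondDiff (hS : Integrable S) (p x : ℝ) :
    ∫ u in Ioi x, secondDiff S p u = ∫ u in (x - p)..x, (S u - S (u + p)) := by
  have hadd := hS.comp_add_right p
  have hsub := hS.comp_sub_right p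
  have hpair : Integrable fun u ↦ S (u + p) + S (u - p) := hadd.add hsub
  have hshift : ∀ a, ∫ u in Ioi x, S (u + a) = ∫ u in Ioi (x + a), S u := fun a ↦ by
    rw [← (measurePreserving_add_right volume a).setIntegral_preimage_emb
      (measurableEmbedding_addRight a) S, preimage_add_const_Ioi, add_sub_cancel_right]
  have hleft := intervalIntegral.integral_interval_add_Ioi (a := x - p) (b := x)
    hS.integrableOn hS.integrableOn
  have hright := intervalIntegral.integral_interval_add_Ioi (a := x) (b := x + p)
    hS.integrableOn hS.integrableOn
  calc ∫ u in Ioi x, secondDiff S p u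
      = ((∫ u in Ioi x, S (u + p)) + ∫ u in Ioi x, S (u - p)) - 2 * ∫ u in Ioi x, S u := by
        simp only [secondDiff]
        rw [integral_sub hpair.integrableOn (hS.const_mul 2).integrableOn,
          integral_add hadd.integrableOn hsub.integrableOn, integral_const_mul]
    _ = (∫ u in (x - p)..x, S u) - ∫ u in x..(x + p), S u := by
        simp only [sub_eq_add_neg x p, sub_eq_add_neg _ p, hshift] at hleft ⊢
        linarith
    _ = ∫ u in (x - p)..x, (S u - S (u + p)) := by
        rw [intervalIntegral.integral_sub hS.intervalIntegrable hadd.intervalIntegrable,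
          intervalIntegral.integral_comp_add_right, sub_add_cancel]

lemma integral_secondDiff (hS : Integrable S) (p : ℝ) : ∫ u, secondDiff S p u = 0 := by
  have hadd := hS.comp_add_right p
  have hsub := hS.comp_sub_right p
  have hpair : Integrable fun u ↦ S (u + p) + S (u - p) := hadd.add hsub
  simp only [secondDiff]
  rw [integral_sub hpair (hS.const_mul 2), integral_add hadd hsub,
    integral_add_right_eq_self S, integral_sub_right_eq_self S, integral_const_mul]
  ring

end SecondDiff

/-- What matters about the function sending `u` to the length of the chord of a planar convex body
at height `u` in a fixed direction: it is supported in `(lo, hi)`, concave there, and at most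
`M * √t` at distance `t` from either end. -/
structure IsConcaveProfile (S : ℝ → ℝ) (lo hi M : ℝ) : Prop where
  nonneg : ∀ u, 0 ≤ S u
  integrable : Integrable S
  lo_lt_hi : lo < hi
  eq_zero_of_le : ∀ u ≤ lo, S u = 0
  eq_zero_of_ge : ∀ u, hi ≤ u → S u = 0
  concaveOn : ConcaveOn ℝ (Ioo lo hi) S
  const_nonneg : 0 ≤ M
  hi_sub_le : ∀ t, 0 < t → S (hi - t) ≤ M * √t
  lo_add_le : ∀ t, 0 < t → S (lo + t) ≤ M * √t

namespace IsConcaveProfile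

variable {S : ℝ → ℝ} {lo hi M p w τ τ' : ℝ}

lemma comp_neg (h : IsConcaveProfile S lo hi M) :
    IsConcaveProfile (fun u ↦ S (-u)) (-hi) (-lo) M where
  nonneg _ := h.nonneg _
  integrable := h.integrable.comp_neg
  lo_lt_hi := neg_lt_neg h.lo_lt_hi
  eq_zero_of_le u hu := h.eq_zero_of_ge _ (by linarith)
  eq_zero_of_ge u hu := h.eq_zero_of_le _ (by linarith)
  concaveOn := by
    rw [← neg_Ioo]
    exact h.concaveOn.comp_linearMap (-LinearMap.id)
  const_nonneg := h.const_nonneg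
  hi_sub_le t ht := by simpa [add_comm] using h.lo_add_le t ht
  lo_add_le t ht := by simpa [neg_add_eq_sub] using h.hi_sub_le t ht

lemma le_of_hi_sub_le (h : IsConcaveProfile S lo hi M) {u : ℝ} (hu : hi - p ≤ u) :
    S u ≤ M * √p := by
  have hM := h.const_nonneg
  rcases lt_or_ge u hi with hlt | hge
  · calc S u = S (hi - (hi - u)) := by rw [sub_sub_cancel]
      _ ≤ M * √(hi - u) := h.hi_sub_le _ (sub_pos.2 hlt)
      _ ≤ M * √p := by gcongr; linarith
  · rw [h.eq_zero_of_ge u hge]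
    positivity

lemma le_of_le_lo_add (h : IsConcaveProfile S lo hi M) {u : ℝ} (hu : u ≤ lo + p) :
    S u ≤ M * √p := by
  simpa using h.comp_neg.le_of_hi_sub_le (p := p) (u := -u) (by linarith)

lemma secondDiff_nonpos (h : IsConcaveProfile S lo hi M) {u : ℝ} (hp : 0 < p) (hlo : lo < u - p)
    (hhi : u + p < hi) : secondDiff S p u ≤ 0 := by
  have hmid := h.concaveOn.2 (show u + p ∈ Ioo lo hi from ⟨by linarith, hhi⟩)
    (show u - p ∈ Ioo lo hi from ⟨hlo, by linarith⟩)
    (one_half_pos (α := ℝ)).le (one_half_pos (α := ℝ)).le (add_halves 1)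
  simp only [smul_eq_mul] at hmid
  rw [show 1 / 2 * (u + p) + 1 / 2 * (u - p) = u by ring] at hmid
  unfold secondDiff
  linarith

lemma secondDiff_eq_zero_of_ge (h : IsConcaveProfile S lo hi M) {u : ℝ} (hp : 0 < p)
    (hu : hi + p ≤ u) : secondDiff S p u = 0 := by
  simp [secondDiff, h.eq_zero_of_ge (u + p) (by linarith), h.eq_zero_of_ge (u - p) (by linarith),
    h.eq_zero_of_ge u (by linarith)]

/-- By concavity the second difference is positive only within `p` of the ends. -/
lemma posPart_secondDiff_le (h : IsConcaveProfile S lo hi M) (hp : 0 < p)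
    (hτ : ∀ u, hi - 2 * p ≤ u → S u ≤ τ) (hτ' : ∀ u, u ≤ lo + 2 * p → S u ≤ τ') (u : ℝ) :
    (secondDiff S p u)⁺ ≤ (Icc (hi - p) (hi + p)).indicator (fun _ ↦ τ) u
      + (Icc (lo - p) (lo + p)).indicator (fun _ ↦ τ') u := by
  have hτ0 : 0 ≤ τ := (h.nonneg hi).trans (hτ hi (by linarith))
  have hτ'0 : 0 ≤ τ' := (h.nonneg lo).trans (hτ' lo (by linarith))
  have hR : 0 ≤ (Icc (hi - p) (hi + p)).indicator (fun _ ↦ τ) u :=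
    indicator_nonneg (fun _ _ ↦ hτ0) _
  have hL : 0 ≤ (Icc (lo - p) (lo + p)).indicator (fun _ ↦ τ') u :=
    indicator_nonneg (fun _ _ ↦ hτ'0) _
  have hu := h.nonneg u
  refine max_le ?_ (add_nonneg hR hL)
  unfold secondDiff
  by_cases hright : hi ≤ u + p
  · rw [h.eq_zero_of_ge _ hright]
    by_cases hmem : u ≤ hi + p
    · rw [indicator_of_mem (show u ∈ Icc (hi - p) (hi + p) from ⟨by linarith, hmem⟩)]
      linarith [hτ (u - p) (by linarith)]
    · linarith [h.eq_zero_of_ge (u - p) (by linarith)]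
  by_cases hleft : u - p ≤ lo
  · rw [h.eq_zero_of_le _ hleft]
    by_cases hmem : lo - p ≤ u
    · rw [indicator_of_mem (show u ∈ Icc (lo - p) (lo + p) from ⟨hmem, by linarith⟩)]
      linarith [hτ' (u + p) (by linarith)]
    · linarith [h.eq_zero_of_le (u + p) (by linarith)]
  · exact (h.secondDiff_nonpos hp (not_le.1 hleft) (not_le.1 hright)).trans (add_nonneg hR hL)

lemma integral_indicator_Icc_const (hp : 0 < p) (x τ : ℝ) :
    ∫ u, (Icc (x - p) (x + p)).indicator (fun _ ↦ τ) u = 2 * p * τ := by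
  rw [integral_indicator_const _ measurableSet_Icc, Real.volume_real_Icc_of_le (by linarith),
    smul_eq_mul]
  ring

lemma integrable_indicator_Icc_const (a b τ : ℝ) :
    Integrable ((Icc a b).indicator fun _ ↦ τ) :=
  integrableOn_const measure_Icc_lt_top.ne |>.integrable_indicator measurableSet_Icc

/-- The second difference has mean zero, so its `L¹` norm is twice the mass of its positive part,
which lives near the ends. -/
lemma integral_abs_secondDiff_le (h : IsConcaveProfile S lo hi M) (hp : 0 < p) :
    ∫ u, |secondDiff S p u| ≤ 8 * p * (M * √(2 * p)) := by
  have hpos : ∫ u, (secondDiff S p u)⁺ ≤ 4 * p * (M * √(2 * p)) :=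
    calc ∫ u, (secondDiff S p u)⁺
        ≤ ∫ u, ((Icc (hi - p) (hi + p)).indicator (fun _ ↦ M * √(2 * p)) u
          + (Icc (lo - p) (lo + p)).indicator (fun _ ↦ M * √(2 * p)) u) :=
          integral_mono_of_nonneg (.of_forall fun u ↦ posPart_nonneg _)
            ((integrable_indicator_Icc_const _ _ _).add (integrable_indicator_Icc_const _ _ _))
            (.of_forall (h.posPart_secondDiff_le hp (fun u ↦ h.le_of_hi_sub_le)
              fun u ↦ h.le_of_le_lo_add))
      _ = 4 * p * (M * √(2 * p)) := by
          rw [integral_add (integrable_indicator_Icc_const _ _ _)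
            (integrable_indicator_Icc_const _ _ _), integral_indicator_Icc_const hp,
            integral_indicator_Icc_const hp]
          ring
  rw [integral_abs_eq_two_mul_integral_posPart_sub_integral (integrable_secondDiff h.integrable p),
    integral_secondDiff h.integrable]
  linarith

/-- The second difference with step `p = 1 / (2T)` multiplies the transform at `T` by `-4`. -/
lemma norm_fourier_le (h : IsConcaveProfile S lo hi M) {T : ℝ} (hT : 0 < T) :
    ‖𝓕 (fun u ↦ (S u : ℂ)) T‖ ≤ M / (T * √T) := by
  have hfour : 4 * ‖𝓕 (fun u ↦ (S u : ℂ)) T‖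
      = ‖𝓕 (fun u ↦ (secondDiff S (1 / (2 * T)) u : ℂ)) T‖ := by
    rw [fourier_secondDiff h.integrable,
      show 2 * Real.pi * (1 / (2 * T) * T) = Real.pi by field_simp, Real.cos_pi, norm_mul,
      Complex.norm_real]
    norm_num
  have hmass := h.integral_abs_secondDiff_le (p := 1 / (2 * T)) (by positivity)
  have hsqrt : √(2 * (1 / (2 * T))) = 1 / √T := by
    rw [show 2 * (1 / (2 * T)) = T⁻¹ by field_simp, Real.sqrt_inv, one_div]
  calc ‖𝓕 (fun u ↦ (S u : ℂ)) T‖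
      = ‖𝓕 (fun u ↦ (secondDiff S (1 / (2 * T)) u : ℂ)) T‖ / 4 := by linarith
    _ ≤ 8 * (1 / (2 * T)) * (M * (1 / √T)) / 4 := by
        gcongr
        rw [← hsqrt]
        refine (norm_fourier_le_integral_norm _ T).trans ?_
        simpa only [Complex.norm_real, Real.norm_eq_abs] using hmass
    _ = M / (T * √T) := by ring

lemma mul_forward_diff_le (h : IsConcaveProfile S lo hi M) {u v : ℝ} (hp : 0 < p)
    (hv : v ∈ Ioo lo u) (hhi : u + p < hi) : (u - v) * (S (u + p) - S u) ≤ p * S u := by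
  obtain ⟨hlo, hvu⟩ := hv
  have hslope := h.concaveOn.slope_anti_adjacent (x := v) (y := u) (z := u + p)
    ⟨hlo, by linarith⟩ ⟨by linarith, hhi⟩ hvu (by linarith)
  rw [add_sub_cancel_left, div_le_div_iff₀ hp (sub_pos.2 hvu)] at hslope
  nlinarith [h.nonneg v]

/-- Letting the left end of the chord in `mul_forward_diff_le` tend to `lo`. -/
lemma forward_diff_le (h : IsConcaveProfile S lo hi M) {u : ℝ} (hp : 0 < p) (hlo : lo < u)
    (hhi : u + p < hi) : S (u + p) - S u ≤ p * M / √(u - lo) := by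
  have hlim : (u - lo) * (S (u + p) - S u) ≤ p * S u := by
    have htendsto : Filter.Tendsto (fun v ↦ (u - v) * (S (u + p) - S u)) (nhdsWithin lo (Ioi lo))
        (nhds ((u - lo) * (S (u + p) - S u))) :=
      (Continuous.tendsto (by fun_prop) lo).mono_left nhdsWithin_le_nhds
    refine le_of_tendsto htendsto ?_
    filter_upwards [Ioo_mem_nhdsGT hlo] with v hv using h.mul_forward_diff_le hp hv hhi
  have hsqrt : 0 < √(u - lo) := Real.sqrt_pos.2 (sub_pos.2 hlo)
  have hsq : √(u - lo) * √(u - lo) = u - lo := Real.mul_self_sqrt (sub_pos.2 hlo).le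
  rw [le_div_iff₀ hsqrt]
  refine le_of_mul_le_mul_left ?_ hsqrt
  calc √(u - lo) * ((S (u + p) - S u) * √(u - lo)) = (u - lo) * (S (u + p) - S u) := by
        linear_combination (S (u + p) - S u) * hsq
    _ ≤ p * S u := hlim
    _ ≤ p * (M * √(u - lo)) := by
        gcongr
        exact h.le_of_le_lo_add (by linarith)
    _ = √(u - lo) * (p * M) := by ring

lemma integral_forward_diff_le (h : IsConcaveProfile S lo hi M) {r x : ℝ} (hp : 0 < p)
    (hr : 0 < r) (hlo : lo + r ≤ x - p) (hhi : x + p < hi) :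
    ∫ u in (x - p)..x, (S (u + p) - S u) ≤ p ^ 2 * M / √r := by
  have hM := h.const_nonneg
  calc ∫ u in (x - p)..x, (S (u + p) - S u) ≤ ∫ _ in (x - p)..x, p * M / √r := by
        refine intervalIntegral.integral_mono_on (by linarith)
          ((h.integrable.comp_add_right p).sub h.integrable).intervalIntegrable (by simp)
          fun _ hu ↦ ?_
        refine (h.forward_diff_le hp (by linarith [hu.1]) (by linarith [hu.2])).trans ?_
        gcongr
        linarith [hu.1]
    _ = p ^ 2 * M / √r := by
        rw [intervalIntegral.integral_const, smul_eq_mul]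
        ring

lemma integral_backward_diff_le (h : IsConcaveProfile S lo hi M) {r x : ℝ} (hp : 0 < p)
    (hr : 0 < r) (hlo : lo < x - p) (hhi : x + p + r ≤ hi) :
    ∫ u in (x - p)..x, (S u - S (u + p)) ≤ p ^ 2 * M / √r := by
  calc ∫ u in (x - p)..x, (S u - S (u + p))
      = ∫ u in (x - p)..x, (S (-(-p - u + p)) - S (-(-p - u))) := by
        refine intervalIntegral.integral_congr fun u _ ↦ ?_
        ring_nf
    _ = ∫ u in (-x - p)..-x, (S (-(u + p)) - S (-u)) := by
        rw [intervalIntegral.integral_comp_sub_left (fun u ↦ S (-(u + p)) - S (-u)) (-p)]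
        ring_nf
    _ ≤ p ^ 2 * M / √r :=
        h.comp_neg.integral_forward_diff_le hp hr (by linarith) (by linarith)

lemma integral_abs_indicator_Ioi_secondDiff_le (h : IsConcaveProfile S lo hi M) (hp : 0 < p)
    (hpw : 2 * p ≤ w) (hw : 2 * w ≤ hi - lo) (hτ : ∀ u, hi - 2 * p ≤ u → S u ≤ τ) :
    ∫ u, |(Ioi (hi - w)).indicator (secondDiff S p) u| ≤ 4 * p * τ + p ^ 2 * M / √(w / 2) := by
  have hdiff := integrable_secondDiff h.integrable p
  have hτ0 : 0 ≤ τ := (h.nonneg hi).trans (hτ hi (by linarith))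
  have hpos : ∫ u in Ioi (hi - w), (secondDiff S p u)⁺ ≤ 2 * p * τ := by
    rw [← integral_indicator_Icc_const hp hi τ]
    refine (setIntegral_mono_on hdiff.pos_part.integrableOn
      (integrable_indicator_Icc_const _ _ _).integrableOn measurableSet_Ioi fun u hu ↦ ?_).trans
      (setIntegral_le_integral (integrable_indicator_Icc_const _ _ _)
        (.of_forall (indicator_nonneg fun _ _ ↦ hτ0)))
    have hbound := h.posPart_secondDiff_le hp hτ (fun u ↦ h.le_of_le_lo_add) u
    rwa [indicator_of_notMem (s := Icc (lo - p) (lo + p))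
      (fun hu' ↦ by linarith [hu'.2, mem_Ioi.1 hu]), add_zero] at hbound
  have hedge : -∫ u in Ioi (hi - w), secondDiff S p u ≤ p ^ 2 * M / √(w / 2) := by
    rw [integral_Ioi_secondDiff h.integrable, ← intervalIntegral.integral_neg]
    simp only [neg_sub]
    exact h.integral_forward_diff_le hp (by linarith) (by linarith) (by linarith)
  simp only [← Real.norm_eq_abs, norm_indicator_eq_indicator_norm]
  simp only [Real.norm_eq_abs]
  rw [integral_indicator measurableSet_Ioi,
    integral_abs_eq_two_mul_integral_posPart_sub_integral hdiff.integrableOn]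
  linarith

lemma integral_abs_indicator_Icc_secondDiff_le (h : IsConcaveProfile S lo hi M) (hp : 0 < p)
    (hpw : 2 * p ≤ w) (hw : 2 * w ≤ hi - lo) :
    ∫ u, |(Icc (lo + w) (hi - w)).indicator (secondDiff S p) u|
      ≤ 2 * (p ^ 2 * M / √(w / 2)) := by
  have hdiff := integrable_secondDiff h.integrable p
  have habs : ∀ u, |(Icc (lo + w) (hi - w)).indicator (secondDiff S p) u|
      = (Icc (lo + w) (hi - w)).indicator (fun u ↦ -secondDiff S p u) u := fun u ↦ by
    by_cases hu : u ∈ Icc (lo + w) (hi - w)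
    · rw [indicator_of_mem hu, indicator_of_mem hu, abs_of_nonpos]
      exact h.secondDiff_nonpos hp (by linarith [hu.1]) (by linarith [hu.2])
    · simp [hu]
  have hsplit := intervalIntegral.integral_interval_add_Ioi (a := lo + w) (b := hi - w)
    hdiff.integrableOn hdiff.integrableOn
  rw [integral_Ioi_secondDiff h.integrable, integral_Ioi_secondDiff h.integrable] at hsplit
  have hhi := h.integral_backward_diff_le (r := w / 2) (x := hi - w) hp (by linarith)
    (by linarith) (by linarith)
  have hlo := h.integral_forward_diff_le (r := w / 2) (x := lo + w) hp (by linarith)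
    (by linarith) (by linarith)
  have hflip : ∫ u in (lo + w - p)..(lo + w), (S (u + p) - S u)
      = -∫ u in (lo + w - p)..(lo + w), (S u - S (u + p)) := by
    rw [← intervalIntegral.integral_neg]
    simp only [neg_sub]
  simp only [habs]
  rw [integral_indicator measurableSet_Icc, integral_neg, integral_Icc_eq_integral_Ioc,
    ← intervalIntegral.integral_of_le (by linarith)]
  linarith

end IsConcaveProfile

/-! ### The support function -/

/-- The domains of the theorem: bounded open convex sets containing the origin. -/
structure IsConvexDomain (Ω : Set E2) : Prop where
  convex : Convex ℝ Ω
  isOpen : IsOpen Ω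
  isBounded : Bornology.IsBounded Ω
  zero_mem : (0 : E2) ∈ Ω

namespace IsConvexDomain

variable {Ω : Set E2} {x ξ : E2} {c : ℝ}

lemma bddAbove_image_inner (h : IsConvexDomain Ω) (ξ : E2) : BddAbove ((⟪·, ξ⟫) '' Ω) := by
  obtain ⟨r, hr⟩ := h.isBounded.exists_norm_le
  refine ⟨r * ‖ξ‖, forall_mem_image.2 fun x hx ↦ (real_inner_le_norm x ξ).trans ?_⟩
  gcongr
  exact hr x hx

lemma inner_le_suppFn (h : IsConvexDomain Ω) (hx : x ∈ Ω) (ξ : E2) : ⟪x, ξ⟫ ≤ suppFn Ω ξ :=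
  le_csSup (h.bddAbove_image_inner ξ) ⟨x, hx, rfl⟩

lemma inner_le_suppFn_of_mem_closure (h : IsConvexDomain Ω) (hx : x ∈ closure Ω) (ξ : E2) :
    ⟪x, ξ⟫ ≤ suppFn Ω ξ :=
  closure_minimal (t := {y | ⟪y, ξ⟫ ≤ suppFn Ω ξ}) (fun _ hy ↦ h.inner_le_suppFn hy ξ)
    (isClosed_le (by fun_prop) continuous_const) hx

lemma suppFn_le (h : IsConvexDomain Ω) (hc : ∀ x ∈ Ω, ⟪x, ξ⟫ ≤ c) : suppFn Ω ξ ≤ c :=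
  csSup_le (Nonempty.image _ ⟨0, h.zero_mem⟩) (forall_mem_image.2 hc)

lemma exists_lt_inner (h : IsConvexDomain Ω) (hc : c < suppFn Ω ξ) : ∃ x ∈ Ω, c < ⟪x, ξ⟫ := by
  obtain ⟨_, ⟨x, hx, rfl⟩, hcx⟩ := exists_lt_of_lt_csSup (Nonempty.image _ ⟨0, h.zero_mem⟩) hc
  exact ⟨x, hx, hcx⟩

lemma exists_inner_add_mul_norm_le_suppFn (h : IsConvexDomain Ω) (hx : x ∈ Ω) :
    ∃ s > 0, ∀ ξ, ⟪x, ξ⟫ + s * ‖ξ‖ ≤ suppFn Ω ξ := by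
  obtain ⟨r, hr, hball⟩ := Metric.isOpen_iff.1 h.isOpen x hx
  refine ⟨r / 2, half_pos hr, fun ξ ↦ ?_⟩
  have hmem : x + (r / 2) • (‖ξ‖⁻¹ • ξ) ∈ Ω := hball <| by
    rw [Metric.mem_ball, dist_eq_norm, add_sub_cancel_left, norm_smul, norm_smul, norm_inv,
      norm_norm, Real.norm_of_nonneg (half_pos hr).le]
    nlinarith [inv_mul_le_one (a := ‖ξ‖)]
  have hinner : ⟪x + (r / 2) • (‖ξ‖⁻¹ • ξ), ξ⟫ = ⟪x, ξ⟫ + r / 2 * ‖ξ‖ := by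
    rw [inner_add_left, real_inner_smul_left, real_inner_smul_left, real_inner_self_eq_norm_sq,
      sq, ← mul_assoc ‖ξ‖⁻¹, inv_mul_mul_self]
  exact hinner ▸ h.inner_le_suppFn hmem ξ

lemma inner_lt_suppFn (h : IsConvexDomain Ω) (hx : x ∈ Ω) (hξ : ξ ≠ 0) : ⟪x, ξ⟫ < suppFn Ω ξ := by
  obtain ⟨s, hs, hle⟩ := h.exists_inner_add_mul_norm_le_suppFn hx
  have := mul_pos hs (norm_pos_iff.2 hξ)
  linarith [hle ξ]

lemma suppFn_pos (h : IsConvexDomain Ω) (hξ : ξ ≠ 0) : 0 < suppFn Ω ξ := by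
  simpa using h.inner_lt_suppFn h.zero_mem hξ

lemma suppFn_add_le (h : IsConvexDomain Ω) (ξ η : E2) :
    suppFn Ω (ξ + η) ≤ suppFn Ω ξ + suppFn Ω η :=
  h.suppFn_le fun x hx ↦ by
    rw [inner_add_right]
    exact add_le_add (h.inner_le_suppFn hx ξ) (h.inner_le_suppFn hx η)

lemma exists_norm_bounds_suppFn (h : IsConvexDomain Ω) : ∃ c C : ℝ, 0 < c ∧ 0 < C ∧
    ∀ ξ : E2, c * ‖ξ‖ ≤ suppFn Ω ξ ∧ suppFn Ω ξ ≤ C * ‖ξ‖ := by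
  obtain ⟨r, hr, hnorm⟩ := h.isBounded.exists_pos_norm_le
  obtain ⟨s, hs, hle⟩ := h.exists_inner_add_mul_norm_le_suppFn h.zero_mem
  refine ⟨s, r, hs, hr, fun ξ ↦ ⟨by simpa using hle ξ, h.suppFn_le fun x hx ↦ ?_⟩⟩
  exact (real_inner_le_norm x ξ).trans (by gcongr; exact hnorm x hx)

end IsConvexDomain

lemma suppFn_smul (Ω : Set E2) {c : ℝ} (hc : 0 ≤ c) (ξ : E2) :
    suppFn Ω (c • ξ) = c * suppFn Ω ξ := by
  rw [suppFn, suppFn, ← smul_eq_mul, ← Real.sSup_smul_of_nonneg hc, ← image_smul, image_image]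
  simp only [real_inner_smul_right, smul_eq_mul]

/-! ### Chords orthogonal to a direction -/

/-- Rotation of the plane by a right angle. -/
def perp (ξ : E2) : E2 := !₂[-ξ 1, ξ 0]

/-- The point with coordinates `(u, v)` in the frame attached to `ξ`: `u` is the inner product with
`ξ`, and `v` runs along the line orthogonal to `ξ`. The normalisation makes the frame unimodular. -/
def framePoint (ξ : E2) (u v : ℝ) : E2 := (u / ‖ξ‖ ^ 2) • ξ + v • perp ξ

section Frame

variable {ξ : E2}

lemma E2_norm_sq (ξ : E2) : ‖ξ‖ ^ 2 = ξ 0 ^ 2 + ξ 1 ^ 2 := by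
  rw [EuclideanSpace.real_norm_sq_eq, Fin.sum_univ_two]

lemma E2_inner (x ξ : E2) : ⟪x, ξ⟫ = x 0 * ξ 0 + x 1 * ξ 1 := by
  simp [PiLp.inner_apply, Fin.sum_univ_two, mul_comm]

lemma inner_perp_self (ξ : E2) : ⟪perp ξ, ξ⟫ = 0 := by
  simp [perp, E2_inner]
  ring

lemma norm_perp (ξ : E2) : ‖perp ξ‖ = ‖ξ‖ := by
  rw [← sq_eq_sq₀ (norm_nonneg _) (norm_nonneg _), E2_norm_sq, E2_norm_sq]
  simp [perp, add_comm]

lemma perp_neg (ξ : E2) : perp (-ξ) = -perp ξ := by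
  ext i; fin_cases i <;> simp [perp]

lemma framePoint_neg (ξ : E2) (u v : ℝ) : framePoint (-ξ) u v = framePoint ξ (-u) (-v) := by
  simp [framePoint, perp_neg, neg_div]

lemma inner_framePoint (hξ : ξ ≠ 0) (u v : ℝ) : ⟪framePoint ξ u v, ξ⟫ = u := by
  rw [framePoint, inner_add_left, real_inner_smul_left, real_inner_smul_left, inner_perp_self,
    real_inner_self_eq_norm_sq, mul_zero, add_zero, div_mul_cancel₀ _ (by simpa using hξ)]

lemma framePoint_sub_framePoint (ξ : E2) (u v v' : ℝ) :
    framePoint ξ u v' - framePoint ξ u v = (v' - v) • perp ξ := by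
  rw [framePoint, framePoint, add_sub_add_left_eq_sub, ← sub_smul]

lemma continuous_framePoint (ξ : E2) (u : ℝ) : Continuous (framePoint ξ u) := by
  unfold framePoint; fun_prop

lemma smul_framePoint_add_smul (ξ : E2) (a b u v u' v' : ℝ) :
    a • framePoint ξ u v + b • framePoint ξ u' v' =
      framePoint ξ (a * u + b * u') (a * v + b * v') := by
  simp only [framePoint]
  module

lemma exists_eq_framePoint (hξ : ξ ≠ 0) (x : E2) : ∃ v, x = framePoint ξ ⟪x, ξ⟫ v := by
  have : ‖ξ‖ ^ 2 ≠ 0 := by simpa using hξ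
  refine ⟨⟪x, perp ξ⟫ / ‖ξ‖ ^ 2, ?_⟩
  ext i
  fin_cases i <;> simp [framePoint, perp, E2_inner] <;> field_simp <;> rw [E2_norm_sq] <;> ring

lemma measurePreserving_framePoint (hξ : ξ ≠ 0) :
    MeasurePreserving fun z : ℝ × ℝ ↦ framePoint ξ z.1 z.2 := by
  have : ‖ξ‖ ^ 2 ≠ 0 := by simpa using hξ
  let A : Matrix (Fin 2) (Fin 2) ℝ := !![ξ 0 / ‖ξ‖ ^ 2, -ξ 1; ξ 1 / ‖ξ‖ ^ 2, ξ 0]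
  have hdet : A.det = 1 := by
    rw [Matrix.det_fin_two_of]
    field_simp
    rw [E2_norm_sq]
    ring
  have hA : MeasurePreserving (Matrix.toLin' A) := by
    refine ⟨(LinearMap.continuous_of_finiteDimensional _).measurable, ?_⟩
    rw [Real.map_matrix_volume_pi_eq_smul_volume_pi (by rw [hdet]; exact one_ne_zero), hdet]
    simp
  have hframe : (fun z : ℝ × ℝ ↦ framePoint ξ z.1 z.2) =
      WithLp.toLp 2 ∘ Matrix.toLin' A ∘ MeasurableEquiv.finTwoArrow.symm := by
    ext z i
    fin_cases i <;>
      simp [framePoint, perp, A, Matrix.toLin'_apply, MeasurableEquiv.finTwoArrow] <;> ring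
  rw [hframe]
  exact (PiLp.volume_preserving_toLp (Fin 2)).comp
    (hA.comp (volume_preserving_finTwoArrow ℝ).symm)

lemma integrable_comp_framePoint (hξ : ξ ≠ 0) {f : E2 → ℂ} (hf : Integrable f) :
    Integrable fun z : ℝ × ℝ ↦ f (framePoint ξ z.1 z.2) :=
  (measurePreserving_framePoint hξ).integrable_comp_of_integrable hf

lemma fourier_smul_eq_fourier_integral_framePoint (hξ : ξ ≠ 0) {f : E2 → ℂ} (hf : Integrable f)
    (T : ℝ) : 𝓕 f (T • ξ) = 𝓕 (fun u ↦ ∫ v, f (framePoint ξ u v)) T := by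
  let g (x : E2) : ℂ := Real.fourierChar (-⟪x, T • ξ⟫) • f x
  have hg : Integrable g := (Real.fourierIntegral_convergent_iff (T • ξ)).2 hf
  calc 𝓕 f (T • ξ) = ∫ x, g x := Real.fourier_eq f _
    _ = ∫ z : ℝ × ℝ, g (framePoint ξ z.1 z.2) := by
        have hm := measurePreserving_framePoint hξ
        rw [← hm.map_eq, integral_map hm.measurable.aemeasurable
          (hm.map_eq ▸ hg.aestronglyMeasurable)]
    _ = ∫ u, ∫ v, g (framePoint ξ u v) := integral_prod _ (integrable_comp_framePoint hξ hg)
    _ = 𝓕 (fun u ↦ ∫ v, f (framePoint ξ u v)) T := by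
        simp only [g, real_inner_smul_right, inner_framePoint hξ, Real.fourier_eq, Circle.smul_def,
          integral_smul, RCLike.inner_apply, conj_trivial]

end Frame

/-- The chord of `Ω` at height `u` in direction `ξ`, in the coordinate `v` of `framePoint`. -/
def chord (Ω : Set E2) (ξ : E2) (u : ℝ) : Set ℝ := framePoint ξ u ⁻¹' Ω

/-- The length of `chord Ω ξ u`; the Euclidean length of the chord is `‖ξ‖` times as large. -/
def chordLen (Ω : Set E2) (ξ : E2) (u : ℝ) : ℝ := volume.real (chord Ω ξ u)

lemma chordLen_neg (Ω : Set E2) (ξ : E2) (u : ℝ) : chordLen Ω (-ξ) u = chordLen Ω ξ (-u) := by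
  have hneg : chord Ω (-ξ) u = -chord Ω ξ (-u) := by
    ext v; simp [chord, framePoint_neg]
  rw [chordLen, hneg, measureReal_def, Measure.measure_neg, chordLen, measureReal_def]

lemma volume_real_eq_sSup_sub_sInf {I : Set ℝ} (hI : Convex ℝ I) (hb : Bornology.IsBounded I) :
    volume.real I = sSup I - sInf I := by
  rcases I.eq_empty_or_nonempty with rfl | hne
  · simp
  obtain ⟨hbelow, habove⟩ := isBounded_iff_bddBelow_bddAbove.1 hb
  have hIoo := IsConnected.Ioo_csInf_csSup_subset ⟨hne, hI.isPreconnected⟩ hbelow habove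
  have hvol : volume I = ENNReal.ofReal (sSup I - sInf I) :=
    le_antisymm ((measure_mono (subset_Icc_csInf_csSup hbelow habove)).trans_eq Real.volume_Icc)
      (Real.volume_Ioo.symm.trans_le (measure_mono hIoo))
  rw [measureReal_def, hvol,
    ENNReal.toReal_ofReal (sub_nonneg.2 (csInf_le_csSup hne hbelow habove))]

lemma csSup_mem_frontier {s : Set ℝ} (hne : s.Nonempty) (hb : BddAbove s) : sSup s ∈ frontier s :=
  ⟨csSup_mem_closure hne hb, fun hint ↦
    have ⟨_, hlt, hx⟩ := Filter.Eventually.exists_gt (mem_interior_iff_mem_nhds.1 hint)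
    hlt.not_ge (le_csSup hb hx)⟩

lemma csInf_mem_frontier {s : Set ℝ} (hne : s.Nonempty) (hb : BddBelow s) : sInf s ∈ frontier s :=
  ⟨csInf_mem_closure hne hb, fun hint ↦
    have ⟨_, hlt, hx⟩ := Filter.Eventually.exists_lt (mem_interior_iff_mem_nhds.1 hint)
    hlt.not_ge (csInf_le hb hx)⟩

namespace IsConvexDomain

variable {Ω : Set E2} {ξ : E2} {u s K M : ℝ}

lemma convex_chord (h : IsConvexDomain Ω) (ξ : E2) (u : ℝ) : Convex ℝ (chord Ω ξ u) := by
  intro v hv v' hv' a b ha hb hab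
  have hcomb := h.convex hv hv' ha hb hab
  rwa [smul_framePoint_add_smul, ← add_mul, hab, one_mul] at hcomb

lemma isOpen_chord (h : IsConvexDomain Ω) (ξ : E2) (u : ℝ) : IsOpen (chord Ω ξ u) :=
  h.isOpen.preimage (continuous_framePoint ξ u)

lemma isBounded_chord (h : IsConvexDomain Ω) (hξ : ξ ≠ 0) (u : ℝ) :
    Bornology.IsBounded (chord Ω ξ u) := by
  obtain ⟨r, hr⟩ := h.isBounded.exists_norm_le
  have hn : 0 < ‖ξ‖ := norm_pos_iff.2 hξ
  refine isBounded_iff_forall_norm_le.2 ⟨(r + ‖framePoint ξ u 0‖) / ‖ξ‖, fun v hv ↦ ?_⟩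
  rw [le_div_iff₀ hn]
  calc ‖v‖ * ‖ξ‖ = ‖framePoint ξ u v - framePoint ξ u 0‖ := by
        rw [framePoint_sub_framePoint, sub_zero, norm_smul, norm_perp]
    _ ≤ r + ‖framePoint ξ u 0‖ := (norm_sub_le _ _).trans (by gcongr; exact hr _ hv)

lemma bddBelow_bddAbove_chord (h : IsConvexDomain Ω) (hξ : ξ ≠ 0) (u : ℝ) :
    BddBelow (chord Ω ξ u) ∧ BddAbove (chord Ω ξ u) :=
  isBounded_iff_bddBelow_bddAbove.1 (h.isBounded_chord hξ u)

lemma chordLen_eq (h : IsConvexDomain Ω) (hξ : ξ ≠ 0) (u : ℝ) :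
    chordLen Ω ξ u = sSup (chord Ω ξ u) - sInf (chord Ω ξ u) :=
  volume_real_eq_sSup_sub_sInf (h.convex_chord ξ u) (h.isBounded_chord hξ u)

lemma chord_eq_empty (h : IsConvexDomain Ω) (hξ : ξ ≠ 0) (hu : suppFn Ω ξ ≤ u) :
    chord Ω ξ u = ∅ := by
  refine eq_empty_of_forall_notMem fun v hv ↦ (h.inner_lt_suppFn hv hξ).not_ge ?_
  rwa [inner_framePoint hξ]

lemma nonempty_chord (h : IsConvexDomain Ω) (hξ : ξ ≠ 0)
    (hu : u ∈ Ioo (-suppFn Ω (-ξ)) (suppFn Ω ξ)) : (chord Ω ξ u).Nonempty := by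
  obtain ⟨x, hx, hux⟩ := h.exists_lt_inner hu.2
  obtain ⟨y, hy, hyu⟩ := h.exists_lt_inner (neg_lt.1 hu.1)
  rw [inner_neg_right, neg_lt_neg_iff] at hyu
  obtain ⟨z, hz, rfl⟩ : u ∈ (⟪·, ξ⟫) '' Ω :=
    h.convex.isPreconnected.intermediate_value hy hx (by fun_prop) ⟨hyu.le, hux.le⟩
  obtain ⟨v, hv⟩ := exists_eq_framePoint hξ z
  exact ⟨v, show framePoint ξ ⟪z, ξ⟫ v ∈ Ω from hv ▸ hz⟩

lemma exists_chord_endpoints (h : IsConvexDomain Ω) (hξ : ξ ≠ 0) (hne : (chord Ω ξ u).Nonempty) :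
    ∃ v v', framePoint ξ u v ∈ frontier Ω ∧ framePoint ξ u v' ∈ frontier Ω ∧
      chordLen Ω ξ u = v' - v := by
  obtain ⟨hbelow, habove⟩ := h.bddBelow_bddAbove_chord hξ u
  have hsub := (continuous_framePoint ξ u).frontier_preimage_subset Ω
  exact ⟨sInf (chord Ω ξ u), sSup (chord Ω ξ u), hsub (csInf_mem_frontier hne hbelow),
    hsub (csSup_mem_frontier hne habove), h.chordLen_eq hξ u⟩

lemma norm_mul_chordLen_le_capDiam (h : IsConvexDomain Ω) (hξ : ξ ≠ 0) (s : ℝ) :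
    ‖ξ‖ * chordLen Ω ξ (suppFn Ω ξ - s) ≤ capDiam Ω (‖ξ‖⁻¹ • ξ) (s / ‖ξ‖) := by
  rcases (chord Ω ξ (suppFn Ω ξ - s)).eq_empty_or_nonempty with he | hne
  · rw [chordLen, he, measureReal_empty, mul_zero]
    exact Metric.diam_nonneg
  obtain ⟨v, v', hv, hv', hlen⟩ := h.exists_chord_endpoints hξ hne
  have hcap {v : ℝ} : suppFn Ω (‖ξ‖⁻¹ • ξ) - s / ‖ξ‖ ≤
      ⟪framePoint ξ (suppFn Ω ξ - s) v, ‖ξ‖⁻¹ • ξ⟫ := by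
    rw [suppFn_smul Ω (by positivity), real_inner_smul_right, inner_framePoint hξ]
    exact le_of_eq (by ring)
  calc ‖ξ‖ * chordLen Ω ξ (suppFn Ω ξ - s)
      ≤ dist (framePoint ξ (suppFn Ω ξ - s) v') (framePoint ξ (suppFn Ω ξ - s) v) := by
        rw [dist_eq_norm, framePoint_sub_framePoint, norm_smul, norm_perp, hlen, mul_comm]
        gcongr
        exact Real.le_norm_self _
    _ ≤ capDiam Ω (‖ξ‖⁻¹ • ξ) (s / ‖ξ‖) := Metric.dist_le_diam_of_mem
        (h.isBounded.closure.subset fun _ hx ↦ frontier_subset_closure hx.1)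
        (show _ ∧ _ from ⟨hv', hcap⟩) (show _ ∧ _ from ⟨hv, hcap⟩)

lemma chordLen_suppFn_sub_le (h : IsConvexDomain Ω) (hξ : ξ ≠ 0)
    (hK : ∀ θ : E2, ‖θ‖ = 1 → ∀ δ : ℝ, 0 < δ → capDiam Ω θ δ ≤ K * √δ) (hs : 0 < s) :
    chordLen Ω ξ (suppFn Ω ξ - s) ≤ K / (‖ξ‖ * √‖ξ‖) * √s := by
  have hn : 0 < ‖ξ‖ := norm_pos_iff.2 hξ
  refine le_of_mul_le_mul_left (a := ‖ξ‖) ?_ hn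
  calc ‖ξ‖ * chordLen Ω ξ (suppFn Ω ξ - s) ≤ K * √(s / ‖ξ‖) :=
        (h.norm_mul_chordLen_le_capDiam hξ s).trans
          (hK _ (norm_smul_inv_norm hξ) _ (by positivity))
    _ = ‖ξ‖ * (K / (‖ξ‖ * √‖ξ‖) * √s) := by
        rw [Real.sqrt_div hs.le]
        field_simp

/-- The endpoints of the chord at depth `s` below the supporting line bound
`suppFn Ω (ξ + η) + suppFn Ω (ξ - η)` from below: a long chord means that the support function bends
a lot across `ξ`. -/
lemma chordLen_mul_abs_inner_perp_le (h : IsConvexDomain Ω) (hξ : ξ ≠ 0) (η : E2)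
    (hs : suppFn Ω ξ - s ∈ Ioo (-suppFn Ω (-ξ)) (suppFn Ω ξ)) :
    chordLen Ω ξ (suppFn Ω ξ - s) * |⟪perp ξ, η⟫| ≤
      suppFn Ω (ξ + η) + suppFn Ω (ξ - η) - 2 * suppFn Ω ξ + 2 * s := by
  obtain ⟨v, v', hv, hv', hlen⟩ := h.exists_chord_endpoints hξ (h.nonempty_chord hξ hs)
  have hpair {w w' : ℝ} (hw : framePoint ξ (suppFn Ω ξ - s) w ∈ frontier Ω)
      (hw' : framePoint ξ (suppFn Ω ξ - s) w' ∈ frontier Ω) : (w' - w) * ⟪perp ξ, η⟫ ≤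
        suppFn Ω (ξ + η) + suppFn Ω (ξ - η) - 2 * suppFn Ω ξ + 2 * s := by
    have hplus := h.inner_le_suppFn_of_mem_closure (frontier_subset_closure hw') (ξ + η)
    have hminus := h.inner_le_suppFn_of_mem_closure (frontier_subset_closure hw) (ξ - η)
    rw [inner_add_right, inner_framePoint hξ] at hplus
    rw [inner_sub_right, inner_framePoint hξ] at hminus
    rw [← real_inner_smul_left, ← framePoint_sub_framePoint ξ (suppFn Ω ξ - s), inner_sub_left]
    linarith
  rw [hlen]
  rcases abs_choice ⟪perp ξ, η⟫ with habs | habs <;> rw [habs]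
  · exact hpair hv hv'
  · linarith [hpair hv' hv]

lemma concaveOn_chordLen (h : IsConvexDomain Ω) (hξ : ξ ≠ 0) :
    ConcaveOn ℝ (Ioo (-suppFn Ω (-ξ)) (suppFn Ω ξ)) (chordLen Ω ξ) := by
  refine ⟨convex_Ioo _ _, fun u hu u' hu' a b ha hb hab ↦ ?_⟩
  obtain ⟨hbelow, habove⟩ := h.bddBelow_bddAbove_chord hξ u
  obtain ⟨hbelow', habove'⟩ := h.bddBelow_bddAbove_chord hξ u'
  obtain ⟨hbelow'', habove''⟩ := h.bddBelow_bddAbove_chord hξ (a • u + b • u')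
  have hne := h.nonempty_chord hξ hu
  have hne' := h.nonempty_chord hξ hu'
  have hsub : a • chord Ω ξ u + b • chord Ω ξ u' ⊆ chord Ω ξ (a • u + b • u') := by
    rintro _ ⟨_, ⟨v, hv, rfl⟩, _, ⟨v', hv', rfl⟩, rfl⟩
    have hcomb := h.convex hv hv' ha hb hab
    rwa [smul_framePoint_add_smul] at hcomb
  have hsumne := hne.smul_set (a := a) |>.add (hne'.smul_set (a := b))
  have hsup := csSup_le_csSup habove'' hsumne hsub
  have hinf := csInf_le_csInf hbelow'' hsumne hsub
  rw [csSup_add hne.smul_set (habove.smul_of_nonneg ha) hne'.smul_set (habove'.smul_of_nonneg hb),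
    Real.sSup_smul_of_nonneg ha, Real.sSup_smul_of_nonneg hb] at hsup
  rw [csInf_add hne.smul_set (hbelow.smul_of_nonneg ha) hne'.smul_set (hbelow'.smul_of_nonneg hb),
    Real.sInf_smul_of_nonneg ha, Real.sInf_smul_of_nonneg hb] at hinf
  simp only [h.chordLen_eq hξ, smul_eq_mul] at hsup hinf ⊢
  linarith

lemma integrable_indicator_one (h : IsConvexDomain Ω) :
    Integrable (Ω.indicator 1 : E2 → ℂ) :=
  (integrable_indicator_iff h.isOpen.measurableSet).2
    (integrableOn_const h.isBounded.measure_lt_top.ne)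

lemma integral_indicator_framePoint (h : IsConvexDomain Ω) (ξ : E2) (u : ℝ) :
    ∫ v, (Ω.indicator 1 (framePoint ξ u v) : ℂ) = chordLen Ω ξ u := by
  have hchord (v : ℝ) : (Ω.indicator 1 (framePoint ξ u v) : ℂ) =
      (chord Ω ξ u).indicator (fun _ ↦ 1) v := rfl
  simp only [hchord]
  rw [integral_indicator_const _ (h.isOpen_chord ξ u).measurableSet, Complex.real_smul, mul_one,
    chordLen]

lemma integrable_chordLen (h : IsConvexDomain Ω) (hξ : ξ ≠ 0) : Integrable (chordLen Ω ξ) := by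
  have hslice := (integrable_comp_framePoint hξ h.integrable_indicator_one).integral_prod_left
  simp only [h.integral_indicator_framePoint] at hslice
  exact hslice.re

lemma fourier_indicator_smul (h : IsConvexDomain Ω) (hξ : ξ ≠ 0) (T : ℝ) :
    𝓕 (Ω.indicator 1 : E2 → ℂ) (T • ξ) = 𝓕 (fun u ↦ (chordLen Ω ξ u : ℂ)) T := by
  rw [fourier_smul_eq_fourier_integral_framePoint hξ h.integrable_indicator_one]
  simp only [h.integral_indicator_framePoint]

lemma chordLen_eq_zero_of_ge (h : IsConvexDomain Ω) (hξ : ξ ≠ 0) {u : ℝ} (hu : suppFn Ω ξ ≤ u) :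
    chordLen Ω ξ u = 0 := by
  rw [chordLen, h.chord_eq_empty hξ hu, measureReal_empty]

lemma chordLen_eq_zero_of_le (h : IsConvexDomain Ω) (hξ : ξ ≠ 0) {u : ℝ}
    (hu : u ≤ -suppFn Ω (-ξ)) : chordLen Ω ξ u = 0 := by
  rw [← neg_neg ξ, chordLen_neg]
  exact h.chordLen_eq_zero_of_ge (neg_ne_zero.2 hξ) (le_neg.1 hu)

lemma isConcaveProfile_chordLen (h : IsConvexDomain Ω) (hξ : ξ ≠ 0) (hK₀ : 0 ≤ K)
    (hK : ∀ θ : E2, ‖θ‖ = 1 → ∀ δ : ℝ, 0 < δ → capDiam Ω θ δ ≤ K * √δ)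
    (hM : K / (‖ξ‖ * √‖ξ‖) ≤ M) :
    IsConcaveProfile (chordLen Ω ξ) (-suppFn Ω (-ξ)) (suppFn Ω ξ) M where
  nonneg _ := measureReal_nonneg
  integrable := h.integrable_chordLen hξ
  lo_lt_hi := by linarith [h.suppFn_pos hξ, h.suppFn_pos (neg_ne_zero.2 hξ)]
  eq_zero_of_le _ hu := h.chordLen_eq_zero_of_le hξ hu
  eq_zero_of_ge _ hu := h.chordLen_eq_zero_of_ge hξ hu
  concaveOn := h.concaveOn_chordLen hξ
  const_nonneg := le_trans (by positivity) hM
  hi_sub_le t ht := (h.chordLen_suppFn_sub_le hξ hK ht).trans (by gcongr)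
  lo_add_le t ht := by
    have hend := h.chordLen_suppFn_sub_le (neg_ne_zero.2 hξ) hK ht
    rw [chordLen_neg, norm_neg, neg_sub, sub_eq_add_neg, add_comm] at hend
    exact hend.trans (by gcongr)

end IsConvexDomain

/-! ### Parseval's identity for lattice counts -/

section Torus

variable {ι : Type*}

/-- The integer vector `n` as a point of `ℝ^ι`. -/
def latticeVec (n : ι → ℤ) (i : ι) : ℝ := n i

/-- The fundamental domain `(0, 1]^ι` of the integer lattice. -/
def unitCube (ι : Type*) : Set (ι → ℝ) := {x | ∀ i, x i ∈ Ioc (0 : ℝ) (0 + 1)}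

/-- The lattice vector whose translate of `unitCube` contains `x`. -/
def cellIndex (x : ι → ℝ) (i : ι) : ℤ := ⌈x i⌉ - 1

lemma latticeVec_add (m n : ι → ℤ) : latticeVec (m + n) = latticeVec m + latticeVec n := by
  ext i; simp [latticeVec]

lemma latticeVec_neg (n : ι → ℤ) : latticeVec (-n) = -latticeVec n := by
  ext i; simp [latticeVec]

lemma sub_latticeVec_mem_unitCube_iff (x : ι → ℝ) (n : ι → ℤ) :
    x - latticeVec n ∈ unitCube ι ↔ n = cellIndex x := by
  rw [funext_iff, unitCube, mem_ofPred_eq]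
  refine forall_congr' fun i ↦ ?_
  rw [cellIndex, eq_sub_iff_add_eq, eq_comm, Int.ceil_eq_iff]
  simp [latticeVec, add_comm]

/-- The number of integer translates of `y` lying in `A`. -/
def translateCount (A : Set (ι → ℝ)) (y : ι → ℝ) : ℕ :=
  Nat.card {n : ι → ℤ | y + latticeVec n ∈ A}

lemma translateCount_add_latticeVec (A : Set (ι → ℝ)) (y : ι → ℝ) (n : ι → ℤ) :
    translateCount A (y + latticeVec n) = translateCount A y :=
  Nat.card_congr <| (Equiv.addLeft n).subtypeEquiv fun m ↦ by
    simp [latticeVec_add, add_assoc]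

lemma sub_latticeVec_cellIndex_mem_unitCube (y : ι → ℝ) :
    y - latticeVec (cellIndex y) ∈ unitCube ι :=
  (sub_latticeVec_mem_unitCube_iff _ _).2 rfl

lemma translateCount_sub_latticeVec_cellIndex (A : Set (ι → ℝ)) (y : ι → ℝ) :
    translateCount A (y - latticeVec (cellIndex y)) = translateCount A y := by
  rw [sub_eq_add_neg, ← latticeVec_neg, translateCount_add_latticeVec]

lemma mem_image_cellIndex {A : Set (ι → ℝ)} {y : ι → ℝ} (hy : y ∈ unitCube ι)
    {n : ι → ℤ} (hn : y + latticeVec n ∈ A) : n ∈ cellIndex '' A :=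
  ⟨_, hn, ((sub_latticeVec_mem_unitCube_iff _ n).1 (by rwa [add_sub_cancel_right])).symm⟩

section Finite

variable [Finite ι] {A : Set (ι → ℝ)}

lemma measurableSet_unitCube : MeasurableSet (unitCube ι) :=
  MeasurableSet.univ_pi' fun _ ↦ measurableSet_Ioc

lemma finite_cellIndex_image (hb : Bornology.IsBounded A) : (cellIndex '' A).Finite := by
  have hcoord (i : ι) : ∃ r : ℝ, ∀ x ∈ A, |x i| ≤ r := by
    obtain ⟨r, hr⟩ := (hb.image_eval i).exists_norm_le
    exact ⟨r, fun x hx ↦ hr _ (mem_image_of_mem _ hx)⟩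
  choose r hr using hcoord
  refine (Set.Finite.pi' fun i ↦ finite_Icc (⌈-r i⌉ - 1) (⌈r i⌉ - 1)).subset ?_
  rintro _ ⟨x, hx, rfl⟩ i
  obtain ⟨hlo, hhi⟩ := abs_le.1 (hr i x hx)
  exact ⟨sub_le_sub_right (Int.ceil_mono hlo) 1, sub_le_sub_right (Int.ceil_mono hhi) 1⟩

lemma translateCount_eq_sum (hb : Bornology.IsBounded A) {y : ι → ℝ} (hy : y ∈ unitCube ι) :
    (translateCount A y : ℂ) =
      ∑ n ∈ (finite_cellIndex_image hb).toFinset, A.indicator 1 (y + latticeVec n) := by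
  classical
  have hset : {n | y + latticeVec n ∈ A} =
      ((finite_cellIndex_image hb).toFinset.filter (y + latticeVec · ∈ A) : Finset (ι → ℤ)) := by
    ext n
    simpa using fun hn ↦ mem_image_cellIndex hy hn
  rw [translateCount, hset, Nat.card_coe_set_eq, ncard_coe_finset, Finset.card_filter]
  push_cast
  rfl

lemma measurable_translateCount (hA : MeasurableSet A) (hb : Bornology.IsBounded A) :
    Measurable fun y ↦ (translateCount A y : ℂ) := by
  have hred : Measurable fun y : ι → ℝ ↦ y - latticeVec (cellIndex y) := by
    refine measurable_pi_lambda _ fun i ↦ ?_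
    simp only [Pi.sub_apply, latticeVec, cellIndex]
    fun_prop
  have hsum (y : ι → ℝ) : (translateCount A y : ℂ) =
      ∑ n ∈ (finite_cellIndex_image hb).toFinset,
        A.indicator 1 (y - latticeVec (cellIndex y) + latticeVec n) := by
    rw [← translateCount_sub_latticeVec_cellIndex,
      translateCount_eq_sum hb (sub_latticeVec_cellIndex_mem_unitCube y)]
  simp only [hsum]
  exact Finset.measurable_fun_sum _ fun n _ ↦
    (measurable_one.indicator hA).comp (hred.add_const _)

lemma exists_norm_translateCount_le (hb : Bornology.IsBounded A) :
    ∃ C : ℝ, ∀ y, ‖(translateCount A y : ℂ)‖ ≤ C := by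
  refine ⟨(finite_cellIndex_image hb).toFinset.card, fun y ↦ ?_⟩
  rw [← translateCount_sub_latticeVec_cellIndex,
    translateCount_eq_sum hb (sub_latticeVec_cellIndex_mem_unitCube y)]
  refine (norm_sum_le_of_le _ (n := fun _ ↦ 1) fun n _ ↦ ?_).trans_eq (by simp)
  exact (norm_indicator_le_norm_self _ _).trans_eq norm_one

end Finite

variable [Fintype ι] {A B : Set (ι → ℝ)}

lemma norm_latticeVec (n : ι → ℤ) : ‖latticeVec n‖ = ‖n‖ := by
  have hcoord (i : ι) : ‖latticeVec n i‖₊ = ‖n i‖₊ := NNReal.eq (Int.norm_cast_real (n i))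
  simp only [Pi.norm_def, hcoord]

lemma one_le_norm_of_ne_zero {n : ι → ℤ} (hn : n ≠ 0) : 1 ≤ ‖n‖ := by
  obtain ⟨i, hi⟩ := Function.ne_iff.1 hn
  refine le_trans ?_ (norm_le_pi_norm n i)
  rw [Int.norm_eq_abs]
  exact_mod_cast Int.one_le_abs hi

/-- Unfolding: integrating a lattice-periodic function against the periodisation of `A`. -/
lemma setIntegral_unitCube_translateCount_mul (hA : MeasurableSet A)
    (hb : Bornology.IsBounded A) {g : (ι → ℝ) → ℂ} (hg : IntegrableOn g A)
    (hper : ∀ x n, g (x + latticeVec n) = g x) :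
    ∫ x in unitCube ι, (translateCount A x : ℂ) * g x = ∫ x in A, g x := by
  let s := (finite_cellIndex_image hb).toFinset
  have hH : Integrable (A.indicator g) := (integrable_indicator_iff hA).2 hg
  let cell (n : ι → ℤ) := (unitCube ι).indicator fun x ↦ A.indicator g (x + latticeVec n)
  have hcell (n : ι → ℤ) : Integrable (cell n) :=
    (hH.comp_add_right (latticeVec n)).indicator measurableSet_unitCube
  have hsum (x : ι → ℝ) : ∑ n ∈ s, cell n (x - latticeVec n) = A.indicator g x := by
    by_cases hx : x ∈ A
    · rw [Finset.sum_eq_single_of_mem (cellIndex x)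
        ((finite_cellIndex_image hb).mem_toFinset.2 (mem_image_of_mem _ hx))]
      · simp [cell, sub_latticeVec_cellIndex_mem_unitCube]
      · intro n _ hn
        exact indicator_of_notMem (by rwa [sub_latticeVec_mem_unitCube_iff]) _
    · rw [indicator_of_notMem hx]
      refine Finset.sum_eq_zero fun n _ ↦ ?_
      by_cases hn : x - latticeVec n ∈ unitCube ι <;> simp [cell, hx, hn]
  calc ∫ x in unitCube ι, (translateCount A x : ℂ) * g x
      = ∫ x in unitCube ι, ∑ n ∈ s, A.indicator g (x + latticeVec n) := by
        refine setIntegral_congr_fun measurableSet_unitCube fun x hx ↦ ?_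
        simp only [translateCount_eq_sum hb hx, Finset.sum_mul]
        refine Finset.sum_congr rfl fun n _ ↦ ?_
        by_cases h : x + latticeVec n ∈ A <;> simp [h, hper]
    _ = ∑ n ∈ s, ∫ x, cell n x := by
        rw [integral_finsetSum _ fun n _ ↦ (hH.comp_add_right (latticeVec n)).integrableOn]
        simp only [cell, integral_indicator measurableSet_unitCube]
    _ = ∑ n ∈ s, ∫ x, cell n (x - latticeVec n) := by simp only [integral_sub_right_eq_self]
    _ = ∫ x in A, g x := by
        rw [← integral_finsetSum _ fun n _ ↦ (hcell n).comp_sub_right (latticeVec n)]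
        simp only [hsum, integral_indicator hA]

lemma integrableOn_translateCount (hA : MeasurableSet A) (hbA : Bornology.IsBounded A)
    (hbB : Bornology.IsBounded B) : IntegrableOn (fun y ↦ (translateCount A y : ℂ)) B :=
  have ⟨_, hC⟩ := exists_norm_translateCount_le hbA
  Measure.integrableOn_of_bounded hbB.measure_lt_top.ne
    (measurable_translateCount hA hbA).aestronglyMeasurable (.of_forall hC)

section Parseval

attribute [local instance] instMeasureSpaceUnitAddCircle

lemma hasSum_conj_mFourierCoeff_mul {F G : UnitAddTorus ι → ℂ} (hF : MemLp F 2)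
    (hG : MemLp G 2) :
    HasSum (fun k ↦ conj (UnitAddTorus.mFourierCoeff F k) * UnitAddTorus.mFourierCoeff G k)
      (∫ t, conj (F t) * G t) := by
  have hcoeff {H : UnitAddTorus ι → ℂ} (hH : MemLp H 2) (k : ι → ℤ) :
      UnitAddTorus.mFourierCoeff (hH.toLp H) k = UnitAddTorus.mFourierCoeff H k :=
    integral_congr_ae <| by
      filter_upwards [hH.coeFn_toLp] with t ht
      rw [ht]
  have hint : ∫ t, conj (hF.toLp F t) * hG.toLp G t = ∫ t, conj (F t) * G t :=
    integral_congr_ae <| by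
      filter_upwards [hF.coeFn_toLp, hG.coeFn_toLp] with t htF htG
      rw [htF, htG]
  simpa only [hcoeff, hint] using
    UnitAddTorus.hasSum_prod_mFourierCoeff (hF.toLp F) (hG.toLp G)

lemma mFourier_neg_coe (k : ι → ℤ) (x : ι → ℝ) :
    UnitAddTorus.mFourier (-k) (fun i ↦ (x i : UnitAddCircle)) =
      Real.fourierChar (-(x ⬝ᵥ latticeVec k)) := by
  simp only [UnitAddTorus.mFourier, ContinuousMap.coe_mk, fourier_coe_apply,
    Real.fourierChar_apply, ← Complex.exp_sum, dotProduct, latticeVec]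
  congr 1
  push_cast
  rw [← Finset.sum_neg_distrib, Finset.mul_sum, Finset.sum_mul]
  refine Finset.sum_congr rfl fun i _ ↦ ?_
  simp
  ring

lemma hasSum_conj_setIntegral_unitCube_mul {F G : (ι → ℝ) → ℂ} (hF : Measurable F)
    (hG : Measurable G) {C C' : ℝ} (hFC : ∀ x, ‖F x‖ ≤ C) (hGC : ∀ x, ‖G x‖ ≤ C') :
    HasSum (fun k : ι → ℤ ↦
        conj (∫ x in unitCube ι, (Real.fourierChar (-(x ⬝ᵥ latticeVec k)) : ℂ) * F x) *
          ∫ x in unitCube ι, (Real.fourierChar (-(x ⬝ᵥ latticeVec k)) : ℂ) * G x)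
      (∫ x in unitCube ι, conj (F x) * G x) := by
  have : IsProbabilityMeasure (volume : Measure UnitAddCircle) :=
    inferInstanceAs (IsProbabilityMeasure AddCircle.haarAddCircle)
  let e := UnitAddTorus.measurableEquivPiIoc fun _ : ι ↦ (0 : ℝ)
  have he (x : ι → ℝ) (hx : x ∈ unitCube ι) : (e fun i ↦ (x i : UnitAddCircle) : ι → ℝ) = x :=
    congrArg Subtype.val (e.apply_symm_apply ⟨x, hx⟩)
  have hmem {H : (ι → ℝ) → ℂ} (hH : Measurable H) {C : ℝ} (hHC : ∀ x, ‖H x‖ ≤ C) :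
      MemLp (fun t ↦ H (e t)) 2 (volume : Measure (UnitAddTorus ι)) :=
    .of_bound (hH.comp (measurable_subtype_coe.comp e.measurable)).aestronglyMeasurable C
      (.of_forall fun _ ↦ hHC _)
  have hcoeff (H : (ι → ℝ) → ℂ) (k : ι → ℤ) : UnitAddTorus.mFourierCoeff (fun t ↦ H (e t)) k =
      ∫ x in unitCube ι, (Real.fourierChar (-(x ⬝ᵥ latticeVec k)) : ℂ) * H x := by
    rw [UnitAddTorus.mFourierCoeff_eq_integral _ _ fun _ ↦ 0]
    exact setIntegral_congr_fun measurableSet_unitCube fun x hx ↦ by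
      simp only [mFourier_neg_coe, he x hx, smul_eq_mul]
  have hparseval := hasSum_conj_mFourierCoeff_mul (hmem hF hFC) (hmem hG hGC)
  simp only [hcoeff] at hparseval
  convert hparseval using 1
  rw [UnitAddTorus.integral_preimage _ fun _ ↦ 0]
  exact setIntegral_congr_fun measurableSet_unitCube fun x hx ↦ by simp only [he x hx]

end Parseval

lemma fourierChar_neg_dotProduct_add_latticeVec (x : ι → ℝ) (n k : ι → ℤ) :
    Real.fourierChar (-((x + latticeVec n) ⬝ᵥ latticeVec k)) =
      Real.fourierChar (-(x ⬝ᵥ latticeVec k)) := by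
  have hint : latticeVec n ⬝ᵥ latticeVec k = ((n ⬝ᵥ k : ℤ) : ℝ) := by
    simp [dotProduct, latticeVec]
  have hone : Real.fourierChar (-((n ⬝ᵥ k : ℤ) : ℝ)) = 1 := by
    rw [Circle.ext_iff, Real.fourierChar_apply, Circle.coe_one, Complex.exp_eq_one_iff]
    exact ⟨-(n ⬝ᵥ k), by push_cast; ring⟩
  rw [add_dotProduct, neg_add, AddChar.map_add_eq_mul, hint, hone, mul_one]

lemma hasSum_setIntegral_fourierChar_mul_conj (hA : MeasurableSet A) (hB : MeasurableSet B)
    (hbA : Bornology.IsBounded A) (hbB : Bornology.IsBounded B) :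
    HasSum (fun k : ι → ℤ ↦ (∫ x in A, (Real.fourierChar (-(x ⬝ᵥ latticeVec k)) : ℂ)) *
        conj (∫ x in B, (Real.fourierChar (-(x ⬝ᵥ latticeVec k)) : ℂ)))
      (∫ y in B, (translateCount A y : ℂ)) := by
  obtain ⟨CA, hCA⟩ := exists_norm_translateCount_le hbA
  obtain ⟨CB, hCB⟩ := exists_norm_translateCount_le hbB
  have hcoeff {D : Set (ι → ℝ)} (hD : MeasurableSet D) (hbD : Bornology.IsBounded D)
      (k : ι → ℤ) : ∫ x in unitCube ι, (Real.fourierChar (-(x ⬝ᵥ latticeVec k)) : ℂ) *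
        translateCount D x = ∫ x in D, (Real.fourierChar (-(x ⬝ᵥ latticeVec k)) : ℂ) := by
    rw [← setIntegral_unitCube_translateCount_mul hD hbD]
    · simp only [mul_comm]
    · have hcont : Continuous fun x : ι → ℝ ↦ (Real.fourierChar (-(x ⬝ᵥ latticeVec k)) : ℂ) :=
        continuous_subtype_val.comp <| Real.continuous_fourierChar.comp <|
          (continuous_id.dotProduct continuous_const).neg
      exact Measure.integrableOn_of_bounded (M := 1) hbD.measure_lt_top.ne
        hcont.aestronglyMeasurable (.of_forall fun _ ↦ (Circle.norm_coe _).le)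
    · simp only [fourierChar_neg_dotProduct_add_latticeVec, implies_true]
  have hparseval := hasSum_conj_setIntegral_unitCube_mul (measurable_translateCount hB hbB)
    (measurable_translateCount hA hbA) hCB hCA
  simp only [hcoeff hA hbA, hcoeff hB hbB, Complex.conj_natCast] at hparseval
  rw [setIntegral_unitCube_translateCount_mul hB hbB
    (integrableOn_translateCount hA hbA hbB)
    fun x n ↦ by rw [translateCount_add_latticeVec]] at hparseval
  simpa only [mul_comm] using hparseval

end Torus

/-! ### Lattice counts in the plane and their Fourier series -/

section LatticeCount

variable {A B S T : Set E2}

lemma ek_eq_toLp (k : Fin 2 → ℤ) : ek k = WithLp.toLp 2 (latticeVec k) := rfl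

lemma ek_zero : ek 0 = 0 := by
  ext i
  simp [ek]

lemma norm_le_norm_toLp (x : Fin 2 → ℝ) : ‖x‖ ≤ ‖(WithLp.toLp 2 x : E2)‖ :=
  (pi_norm_le_iff_of_nonneg (norm_nonneg _)).2 fun i ↦
    PiLp.norm_apply_le (WithLp.toLp 2 x : E2) i

lemma norm_toLp_le_two_mul_norm (x : Fin 2 → ℝ) : ‖(WithLp.toLp 2 x : E2)‖ ≤ 2 * ‖x‖ := by
  have hcoord (i : Fin 2) : x i ^ 2 ≤ ‖x‖ ^ 2 := sq_le_sq.2 <|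
    (norm_le_pi_norm x i).trans_eq (abs_norm x).symm
  refine le_of_sq_le_sq ?_ (by positivity)
  rw [E2_norm_sq]
  linarith [hcoord 0, hcoord 1, sq_nonneg ‖x‖]

lemma norm_le_norm_ek (k : Fin 2 → ℤ) : ‖k‖ ≤ ‖ek k‖ :=
  (norm_latticeVec k).symm.trans_le (norm_le_norm_toLp _)

lemma ek_ne_zero {k : Fin 2 → ℤ} (hk : k ≠ 0) : ek k ≠ 0 :=
  norm_pos_iff.1 (by linarith [one_le_norm_of_ne_zero hk, norm_le_norm_ek k])

lemma finite_setOf_ek_mem (hS : Bornology.IsBounded S) : {k | ek k ∈ S}.Finite := by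
  obtain ⟨r, hr⟩ := hS.exists_norm_le
  exact (isCompact_closedBall (0 : Fin 2 → ℤ) r).finite_of_discrete.subset fun k hk ↦
    mem_closedBall_zero_iff.2 ((norm_le_norm_ek k).trans (hr _ hk))

lemma latticeCount_mono (hT : Bornology.IsBounded T) (hST : S ⊆ T) :
    latticeCount S ≤ latticeCount T :=
  Nat.card_mono (finite_setOf_ek_mem hT) fun _ hk ↦ hST hk

/-- The Fourier transform of the indicator function of `A`. -/
def indicatorFourier (A : Set E2) (ξ : E2) : ℂ := 𝓕 (A.indicator 1 : E2 → ℂ) ξ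

lemma indicatorFourier_eq_setIntegral (hA : MeasurableSet A) (ξ : E2) :
    indicatorFourier A ξ = ∫ x in A, (Real.fourierChar (-⟪x, ξ⟫) : ℂ) := by
  rw [indicatorFourier, Real.fourier_eq, ← integral_indicator hA]
  refine integral_congr_ae (.of_forall fun x ↦ ?_)
  by_cases hx : x ∈ A <;> simp only [indicator, hx, if_true, if_false] <;> simp [Circle.smul_def]

lemma norm_indicatorFourier_le (hA : MeasurableSet A) (ξ : E2) :
    ‖indicatorFourier A ξ‖ ≤ volume.real A := by
  rw [indicatorFourier_eq_setIntegral hA]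
  exact (norm_integral_le_integral_norm _).trans_eq (by simp [Circle.norm_coe])

lemma indicatorFourier_zero (hA : MeasurableSet A) : indicatorFourier A 0 = volume.real A := by
  simp [indicatorFourier_eq_setIntegral hA]

lemma indicatorFourier_neg (A : Set E2) (ξ : E2) :
    indicatorFourier A (-ξ) = conj (indicatorFourier A ξ) := by
  have hreal (x : E2) : conj (A.indicator (1 : E2 → ℂ) x) = A.indicator 1 x := by
    by_cases hx : x ∈ A <;> simp [hx]
  rw [indicatorFourier, indicatorFourier, conj_fourier]
  simp only [hreal]

lemma indicatorFourier_smul_set {t : ℝ} (ht : t ≠ 0) (A : Set E2) (ξ : E2) :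
    indicatorFourier (t • A) ξ = (t : ℂ) ^ 2 * indicatorFourier A (t • ξ) := by
  have hscale := Measure.integral_comp_smul (volume : Measure E2)
    (fun x ↦ Real.fourierChar (-⟪x, ξ⟫) • (t • A).indicator (1 : E2 → ℂ) x) t
  have hind (x : E2) : (t • A).indicator (1 : E2 → ℂ) (t • x) = A.indicator 1 x := by
    by_cases hx : x ∈ A <;> simp [indicator, smul_mem_smul_set_iff₀ ht, hx]
  simp only [hind, real_inner_smul_left, finrank_euclideanSpace_fin] at hscale
  simp only [indicatorFourier, Real.fourier_eq, real_inner_smul_right, hscale,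
    abs_of_nonneg (inv_nonneg.2 (sq_nonneg t)), Complex.real_smul]
  push_cast
  rw [mul_inv_cancel_left₀ (pow_ne_zero 2 (Complex.ofReal_ne_zero.2 ht))]

lemma isBounded_preimage_toLp (hA : Bornology.IsBounded A) :
    Bornology.IsBounded ((WithLp.toLp 2 : (Fin 2 → ℝ) → E2) ⁻¹' A) := by
  obtain ⟨r, hr⟩ := hA.exists_norm_le
  exact isBounded_iff_forall_norm_le.2 ⟨r, fun x hx ↦ (norm_le_norm_toLp x).trans (hr _ hx)⟩

lemma measurableEmbedding_toLp : MeasurableEmbedding (WithLp.toLp 2 : (Fin 2 → ℝ) → E2) :=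
  (MeasurableEquiv.toLp 2 (Fin 2 → ℝ)).measurableEmbedding

lemma integrableOn_latticeCount_preimage (hA : MeasurableSet A) (hbA : Bornology.IsBounded A)
    (hbB : Bornology.IsBounded B) :
    IntegrableOn (fun y ↦ (latticeCount ((y + ·) ⁻¹' A) : ℝ)) B := by
  have hpi := integrableOn_translateCount (PiLp.volume_preserving_toLp (Fin 2) |>.measurable hA)
    (isBounded_preimage_toLp hbA) (isBounded_preimage_toLp hbB)
  simpa [IntegrableOn] using (((PiLp.volume_preserving_toLp (Fin 2)).integrableOn_comp_preimage
    measurableEmbedding_toLp (f := fun y ↦ (latticeCount ((y + ·) ⁻¹' A) : ℂ))).1 hpi).re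

lemma hasSum_indicatorFourier_mul_conj (hA : MeasurableSet A) (hB : MeasurableSet B)
    (hbA : Bornology.IsBounded A) (hbB : Bornology.IsBounded B) :
    HasSum (fun k ↦ indicatorFourier A (ek k) * conj (indicatorFourier B (ek k)))
      ((∫ y in B, (latticeCount ((y + ·) ⁻¹' A) : ℝ) : ℝ) : ℂ) := by
  have hmp := PiLp.volume_preserving_toLp (Fin 2)
  have hdot (x : Fin 2 → ℝ) (k : Fin 2 → ℤ) :
      x ⬝ᵥ latticeVec k = ⟪(WithLp.toLp 2 x : E2), ek k⟫ := by
    simp [E2_inner, ek, latticeVec, dotProduct]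
  have hcoeff {D : Set E2} (hD : MeasurableSet D) (k : Fin 2 → ℤ) :
      ∫ x in (WithLp.toLp 2 : (Fin 2 → ℝ) → E2) ⁻¹' D,
        (Real.fourierChar (-(x ⬝ᵥ latticeVec k)) : ℂ) = indicatorFourier D (ek k) := by
    simp only [hdot, indicatorFourier_eq_setIntegral hD]
    exact hmp.setIntegral_preimage_emb measurableEmbedding_toLp
      (fun x ↦ (Real.fourierChar (-⟪x, ek k⟫) : ℂ)) D
  have hpi := hasSum_setIntegral_fourierChar_mul_conj (hmp.measurable hA) (hmp.measurable hB)
    (isBounded_preimage_toLp hbA) (isBounded_preimage_toLp hbB)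
  simp only [hcoeff hA, hcoeff hB] at hpi
  convert hpi using 1
  rw [← integral_complex_ofReal]
  exact (hmp.setIntegral_preimage_emb measurableEmbedding_toLp
    (fun y ↦ (latticeCount ((y + ·) ⁻¹' A) : ℂ)) B).symm

end LatticeCount

namespace IsConvexDomain

variable {Ω : Set E2} {t ε : ℝ}

lemma volume_real_pos (h : IsConvexDomain Ω) : 0 < volume.real Ω :=
  ENNReal.toReal_pos (h.isOpen.measure_pos _ ⟨0, h.zero_mem⟩).ne' h.isBounded.measure_lt_top.ne

lemma volume_real_smul (Ω : Set E2) (t : ℝ) : volume.real (t • Ω) = t ^ 2 * volume.real Ω := by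
  rw [Measure.real, Measure.addHaar_smul, finrank_euclideanSpace_fin, abs_of_nonneg (sq_nonneg t),
    ENNReal.toReal_mul, ENNReal.toReal_ofReal (sq_nonneg t), Measure.real]

lemma hasSum_average_latticeCount (h : IsConvexDomain Ω) (ht : t ≠ 0) (hε : ε ≠ 0) :
    HasSum (fun k ↦ (t : ℂ) ^ 2 * indicatorFourier Ω (t • ek k) *
        (conj (indicatorFourier Ω (ε • ek k)) / volume.real Ω))
      ((⨍ y in ε • Ω, (latticeCount ((y + ·) ⁻¹' (t • Ω)) : ℝ) : ℝ) : ℂ) := by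
  have hparseval := (hasSum_indicatorFourier_mul_conj (h.isOpen.smul₀ ht).measurableSet
    (h.isOpen.smul₀ hε).measurableSet (h.isBounded.smul₀ t) (h.isBounded.smul₀ ε)).div_const
    ((volume.real (ε • Ω) : ℝ) : ℂ)
  rw [setAverage_eq, smul_eq_mul, inv_mul_eq_div, Complex.ofReal_div]
  refine hparseval.congr_fun fun k ↦ ?_
  have hvol : (volume.real Ω : ℂ) ≠ 0 := Complex.ofReal_ne_zero.2 h.volume_real_pos.ne'
  have hε' : (ε : ℂ) ≠ 0 := Complex.ofReal_ne_zero.2 hε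
  rw [indicatorFourier_smul_set ht, indicatorFourier_smul_set hε, volume_real_smul]
  simp only [map_mul, map_pow, Complex.conj_ofReal]
  push_cast
  field_simp

lemma latticeCount_preimage_integrableOn (h : IsConvexDomain Ω) (ht : t ≠ 0) (ε : ℝ) :
    IntegrableOn (fun y ↦ (latticeCount ((y + ·) ⁻¹' (t • Ω)) : ℝ)) (ε • Ω) :=
  integrableOn_latticeCount_preimage (h.isOpen.smul₀ ht).measurableSet (h.isBounded.smul₀ t)
    (h.isBounded.smul₀ ε)

lemma latticeCount_le_average (h : IsConvexDomain Ω) (ht : 0 < t) (hε : 0 < ε) :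
    (latticeCount (t • Ω) : ℝ) ≤
      ⨍ y in ε • Ω, (latticeCount ((y + ·) ⁻¹' ((t + ε) • Ω)) : ℝ) := by
  have hbdd (s : ℝ) : Bornology.IsBounded (s • Ω) := h.isBounded.smul₀ s
  have hvol : 0 < volume.real (ε • Ω) := by
    rw [volume_real_smul]
    exact mul_pos (pow_pos hε 2) h.volume_real_pos
  rw [setAverage_eq, smul_eq_mul, inv_mul_eq_div, le_div_iff₀ hvol, mul_comm, ← smul_eq_mul,
    ← setIntegral_const]
  refine setIntegral_mono_on (integrableOn_const (hbdd ε).measure_lt_top.ne)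
    (h.latticeCount_preimage_integrableOn (by positivity) ε)
    (h.isOpen.smul₀ hε.ne').measurableSet fun y hy ↦ ?_
  refine Nat.cast_le.2 (latticeCount_mono ?_ fun x hx ↦ ?_)
  · exact (isometry_add_left y).antilipschitz.isBounded_preimage (hbdd (t + ε))
  · rw [mem_preimage, add_comm y, h.convex.add_smul ht.le hε.le]
    exact add_mem_add hx hy

lemma average_le_latticeCount (h : IsConvexDomain Ω) (hε : 0 < ε) (hεt : ε < t) :
    ⨍ y in (-ε) • Ω, (latticeCount ((y + ·) ⁻¹' ((t - ε) • Ω)) : ℝ) ≤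
      (latticeCount (t • Ω) : ℝ) := by
  have hbdd (s : ℝ) : Bornology.IsBounded (s • Ω) := h.isBounded.smul₀ s
  have hvol : 0 < volume.real (-ε • Ω) := by
    rw [volume_real_smul, neg_sq]
    exact mul_pos (pow_pos hε 2) h.volume_real_pos
  rw [setAverage_eq, smul_eq_mul, inv_mul_eq_div, div_le_iff₀ hvol, mul_comm _ (volume.real _),
    ← smul_eq_mul, ← setIntegral_const]
  refine setIntegral_mono_on (h.latticeCount_preimage_integrableOn (by linarith) (-ε))
    (integrableOn_const (hbdd _).measure_lt_top.ne)
    (h.isOpen.smul₀ (neg_ne_zero.2 hε.ne')).measurableSet fun y hy ↦ ?_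
  refine Nat.cast_le.2 (latticeCount_mono (hbdd t) fun x hx ↦ ?_)
  have hy' : -y ∈ ε • Ω := by rwa [neg_smul_set, mem_neg] at hy
  have hsum := add_mem_add (mem_preimage.1 hx) hy'
  rw [← h.convex.add_smul (by linarith) hε.le] at hsum
  simpa using hsum

end IsConvexDomain

/-! ### Chord systems -/

/-- The determinant of two integer vectors. -/
def cross (k j : Fin 2 → ℤ) : ℤ := k 0 * j 1 - k 1 * j 0

/-- What the estimates use of a domain: its support function `ρ`, a nonsymmetric norm on the plane,
and, for each integer frequency `k`, the length `S k u` of the chord `{⟪x, k⟫ = u}`. The field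
`chord` says that a long chord near the top of the domain in the direction `k` forces the second
differences of `ρ` at `k` to be large. -/
structure ChordSystem (ρ : (Fin 2 → ℝ) → ℝ) (S : (Fin 2 → ℤ) → ℝ → ℝ) (K c C : ℝ) : Prop where
  K_nonneg : 0 ≤ K
  c_pos : 0 < c
  C_pos : 0 < C
  add_le x y : ρ (x + y) ≤ ρ x + ρ y
  smul a x : 0 ≤ a → ρ (a • x) = a * ρ x
  lower x : c * ‖x‖ ≤ ρ x
  upper x : ρ x ≤ C * ‖x‖
  profile k : k ≠ 0 →
    IsConcaveProfile (S k) (-ρ (-latticeVec k)) (ρ (latticeVec k)) (K / (‖k‖ * √‖k‖))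
  neg k u : S (-k) u = S k (-u)
  chord k j u s : k ≠ 0 → 0 < s → ρ (latticeVec k) - s ≤ u →
    S k u * |(cross k j : ℝ)| ≤ ρ (latticeVec k + latticeVec j) +
      ρ (latticeVec k - latticeVec j) - 2 * ρ (latticeVec k) + 2 * s

lemma inner_perp_ek (k j : Fin 2 → ℤ) : ⟪perp (ek k), ek j⟫ = (cross k j : ℝ) := by
  simp [E2_inner, perp, ek_eq_toLp, latticeVec, cross]
  ring

lemma IsConvexDomain.two_mul_suppFn_le {Ω : Set E2} (h : IsConvexDomain Ω) (ξ η : E2) :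
    2 * suppFn Ω ξ ≤ suppFn Ω (ξ + η) + suppFn Ω (ξ - η) := by
  have hadd := h.suppFn_add_le (ξ + η) (ξ - η)
  rwa [add_add_sub_cancel, ← two_smul ℝ, suppFn_smul Ω zero_le_two] at hadd

lemma IsConvexDomain.chordLen_mul_abs_cross_le {Ω : Set E2} (h : IsConvexDomain Ω)
    {k : Fin 2 → ℤ} (hk : k ≠ 0) (j : Fin 2 → ℤ) {u s : ℝ} (hs : 0 < s)
    (hu : suppFn Ω (ek k) - s ≤ u) :
    chordLen Ω (ek k) u * |(cross k j : ℝ)| ≤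
      suppFn Ω (ek k + ek j) + suppFn Ω (ek k - ek j) - 2 * suppFn Ω (ek k) + 2 * s := by
  have hconv := h.two_mul_suppFn_le (ek k) (ek j)
  rcases le_or_gt u (-suppFn Ω (-ek k)) with hlo | hlo
  · rw [h.chordLen_eq_zero_of_le (ek_ne_zero hk) hlo]
    linarith
  rcases le_or_gt (suppFn Ω (ek k)) u with hhi | hhi
  · rw [h.chordLen_eq_zero_of_ge (ek_ne_zero hk) hhi]
    linarith
  · have hchord := h.chordLen_mul_abs_inner_perp_le (ek_ne_zero hk) (ek j)
      (s := suppFn Ω (ek k) - u) (by rw [sub_sub_cancel]; exact ⟨hlo, hhi⟩)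
    rw [sub_sub_cancel, inner_perp_ek] at hchord
    linarith

lemma IsConvexDomain.exists_chordSystem {Ω : Set E2} (h : IsConvexDomain Ω)
    (hc : CurvBddBelow Ω) :
    ∃ K c C : ℝ, ChordSystem (fun x ↦ suppFn Ω (WithLp.toLp 2 x)) (fun k ↦ chordLen Ω (ek k))
      K c C := by
  obtain ⟨K₀, hK₀⟩ := hc
  obtain ⟨c, C, hc, hC, hbounds⟩ := h.exists_norm_bounds_suppFn
  refine ⟨max K₀ 0, c, C * 2, ?_⟩
  exact {
    K_nonneg := le_max_right _ _
    c_pos := hc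
    C_pos := by positivity
    add_le x y := h.suppFn_add_le _ _
    smul a x ha := suppFn_smul Ω ha _
    lower x := (mul_le_mul_of_nonneg_left (norm_le_norm_toLp x) hc.le).trans (hbounds _).1
    upper x := (hbounds _).2.trans <| by
      rw [mul_assoc]
      exact mul_le_mul_of_nonneg_left (norm_toLp_le_two_mul_norm x) hC.le
    profile k hk := by
      have hnorm := norm_le_norm_ek k
      have := one_le_norm_of_ne_zero hk
      have hK : 0 ≤ max K₀ 0 := le_max_right _ _
      exact h.isConcaveProfile_chordLen (ek_ne_zero hk) hK
        (fun θ hθ δ hδ ↦ (hK₀ θ hθ δ hδ).trans (by gcongr; exact le_max_left _ _)) (by gcongr)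
    neg k u := by
      rw [← chordLen_neg]
      congr
      rw [ek_eq_toLp, latticeVec_neg]
      rfl
    chord k j u s hk hs hu := h.chordLen_mul_abs_cross_le hk j hs hu }

namespace ChordSystem

variable {ρ : (Fin 2 → ℝ) → ℝ} {S : (Fin 2 → ℤ) → ℝ → ℝ} {K c C : ℝ}

lemma nonneg (h : ChordSystem ρ S K c C) (x : Fin 2 → ℝ) : 0 ≤ ρ x :=
  (mul_nonneg h.c_pos.le (norm_nonneg x)).trans (h.lower x)

lemma sub_le_mul_norm_sub (h : ChordSystem ρ S K c C) (x y : Fin 2 → ℝ) :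
    ρ x - ρ y ≤ C * ‖x - y‖ := by
  have hadd := h.add_le (x - y) y
  rw [sub_add_cancel] at hadd
  linarith [h.upper (x - y)]

lemma abs_sub_le_mul_norm_sub (h : ChordSystem ρ S K c C) (x y : Fin 2 → ℝ) :
    |ρ x - ρ y| ≤ C * ‖x - y‖ := by
  refine abs_sub_le_iff.2 ⟨h.sub_le_mul_norm_sub x y, ?_⟩
  rw [norm_sub_rev]
  exact h.sub_le_mul_norm_sub y x

end ChordSystem

/-! ### Frequencies on which the support function nearly agrees -/

section Sector

/-- The `ℓ¹` norm on the plane. -/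
def l1Norm (x : Fin 2 → ℝ) : ℝ := |x 0| + |x 1|

/-- The angular sector of a vector, out of about `4N` sectors: on each half of the `ℓ¹` unit sphere
a sector is an interval of first coordinates of length `1 / N`. -/
def sector (N : ℕ) (x : Fin 2 → ℝ) : Bool × ℤ := (decide (0 ≤ x 1), ⌊(N : ℝ) * (x 0 / l1Norm x)⌋)

variable {x y : Fin 2 → ℝ} {N : ℕ}

lemma norm_le_of_abs_apply_le {m : ℝ} (h₀ : |x 0| ≤ m) (h₁ : |x 1| ≤ m) : ‖x‖ ≤ m :=
  (pi_norm_le_iff_of_nonneg ((abs_nonneg _).trans h₀)).2 (Fin.forall_fin_two.2 ⟨h₀, h₁⟩)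

lemma norm_le_l1Norm (x : Fin 2 → ℝ) : ‖x‖ ≤ l1Norm x :=
  norm_le_of_abs_apply_le (le_add_of_nonneg_right (abs_nonneg _))
    (le_add_of_nonneg_left (abs_nonneg _))

lemma l1Norm_le_two_mul_norm (x : Fin 2 → ℝ) : l1Norm x ≤ 2 * ‖x‖ := by
  rw [two_mul]
  exact add_le_add (norm_le_pi_norm x 0) (norm_le_pi_norm x 1)

lemma l1Norm_pos (hx : x ≠ 0) : 0 < l1Norm x :=
  (norm_pos_iff.2 hx).trans_le (norm_le_l1Norm x)

lemma l1Norm_inv_smul_self (hx : x ≠ 0) : l1Norm ((l1Norm x)⁻¹ • x) = 1 := by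
  have hpos := l1Norm_pos hx
  rw [l1Norm, Pi.smul_apply, Pi.smul_apply, smul_eq_mul, smul_eq_mul, abs_mul, abs_mul, ← mul_add,
    abs_of_pos (inv_pos.2 hpos)]
  exact inv_mul_cancel₀ hpos.ne'

lemma sector_mem (N : ℕ) (x : Fin 2 → ℝ) :
    sector N x ∈ (Finset.univ : Finset Bool) ×ˢ Finset.Icc (-(N : ℤ)) N := by
  have hratio : |x 0 / l1Norm x| ≤ 1 := by
    have hnonneg : 0 ≤ l1Norm x := (norm_nonneg x).trans (norm_le_l1Norm x)
    rw [abs_div, abs_of_nonneg hnonneg]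
    exact div_le_one_of_le₀ (le_add_of_nonneg_right (abs_nonneg _)) hnonneg
  obtain ⟨hlo, hhi⟩ := abs_le.1 hratio
  have hN : (0 : ℝ) ≤ N := N.cast_nonneg
  simp only [sector, Finset.mem_product, Finset.mem_univ, true_and, Finset.mem_Icc]
  constructor
  · rw [Int.le_floor]
    push_cast
    nlinarith
  · rw [← Int.cast_le (R := ℝ)]
    push_cast
    exact (Int.floor_le _).trans (mul_le_of_le_one_right hN hhi)

lemma norm_sub_le_of_l1Norm_eq (hnorm : l1Norm x = l1Norm y) (hsign : 0 ≤ x 1 ↔ 0 ≤ y 1) :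
    ‖x - y‖ ≤ |x 0 - y 0| := by
  refine norm_le_of_abs_apply_le le_rfl ?_
  have habs : |x 1 - y 1| = |(|x 1| - |y 1|)| := by
    rcases le_or_gt 0 (x 1) with hx | hx
    · rw [abs_of_nonneg hx, abs_of_nonneg (hsign.1 hx)]
    · have hy : y 1 < 0 := not_le.1 fun hy ↦ hx.not_ge (hsign.2 hy)
      rw [abs_of_neg hx, abs_of_neg hy, neg_sub_neg, abs_sub_comm]
  have hswap : |x 1| - |y 1| = |y 0| - |x 0| := by
    unfold l1Norm at hnorm
    linarith
  rw [Pi.sub_apply, habs, hswap, abs_sub_comm]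
  exact abs_abs_sub_abs_le _ _

lemma norm_normalize_sub_le_of_sector_eq (hN : 0 < N) (hx : x ≠ 0) (hy : y ≠ 0)
    (hsector : sector N x = sector N y) :
    ‖(l1Norm x)⁻¹ • x - (l1Norm y)⁻¹ • y‖ ≤ 1 / N := by
  have hN' : (0 : ℝ) < N := Nat.cast_pos.2 hN
  simp only [sector, Prod.mk.injEq, decide_eq_decide] at hsector
  refine (norm_sub_le_of_l1Norm_eq ?_ ?_).trans ?_
  · rw [l1Norm_inv_smul_self hx, l1Norm_inv_smul_self hy]
  · simpa [l1Norm_pos hx, l1Norm_pos hy] using hsector.1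
  · have hfloor := Int.abs_sub_lt_one_of_floor_eq_floor hsector.2
    rw [← mul_sub, abs_mul, abs_of_pos hN'] at hfloor
    rw [le_div_iff₀ hN', mul_comm]
    simpa [div_eq_inv_mul] using hfloor.le

lemma exists_eq_smul_add_of_norm_le (hyx : ‖y‖ ≤ ‖x‖) :
    ∃ (a : ℝ) (z : Fin 2 → ℝ), |a| ≤ 1 ∧ y = a • x + z ∧
      ‖z‖ * ‖x‖ ≤ |x 0 * y 1 - x 1 * y 0| := by
  obtain ⟨i, hi⟩ : ∃ i, |x i| = ‖x‖ := by
    obtain ⟨i, hi⟩ := Finite.exists_max fun i ↦ |x i|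
    exact ⟨i, (norm_le_pi_norm x i).antisymm
      ((pi_norm_le_iff_of_nonneg (abs_nonneg _)).2 hi)⟩
  rcases eq_or_ne (x i) 0 with hxi | hxi
  · rw [hxi, abs_zero] at hi
    refine ⟨0, y, by simp, by simp, ?_⟩
    rw [← hi, mul_zero]
    exact abs_nonneg _
  refine ⟨y i / x i, y - (y i / x i) • x, ?_, by simp, ?_⟩
  · rw [abs_div, hi]
    exact div_le_one_of_le₀ ((norm_le_pi_norm y i).trans hyx) (norm_nonneg _)
  · have hcross (l : Fin 2) : |(y - (y i / x i) • x) l| * |x i| = |y l * x i - y i * x l| := by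
      rw [← abs_mul, Pi.sub_apply, Pi.smul_apply, smul_eq_mul, sub_mul, mul_right_comm,
        div_mul_cancel₀ _ hxi]
    rw [← hi, ← le_div_iff₀ (abs_pos.2 hxi), pi_norm_le_iff_of_nonneg (by positivity)]
    intro l
    rw [Real.norm_eq_abs, le_div_iff₀ (abs_pos.2 hxi), hcross]
    fin_cases i <;> fin_cases l <;> simp [mul_comm, abs_sub_comm]

end Sector

namespace ChordSystem

variable {ρ : (Fin 2 → ℝ) → ℝ} {S : (Fin 2 → ℤ) → ℝ → ℝ} {K c C : ℝ} {x y : Fin 2 → ℝ} {δ : ℝ}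

lemma abs_sub_mul_le (h : ChordSystem ρ S K c C) {a b : ℝ} (ha : 0 ≤ a) (hb : 0 ≤ b)
    (x y : Fin 2 → ℝ) :
    |a - b| * ρ x ≤ |ρ (a • x) - ρ (b • y)| + b * (C * ‖x - y‖) := by
  calc |a - b| * ρ x = |(ρ (a • x) - ρ (b • y)) + b * (ρ y - ρ x)| := by
        rw [← abs_of_nonneg (h.nonneg x), ← abs_mul, abs_of_nonneg (h.nonneg x), h.smul _ _ ha,
          h.smul _ _ hb]
        congr 1
        ring
    _ ≤ |ρ (a • x) - ρ (b • y)| + |b * (ρ y - ρ x)| := abs_add_le _ _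
    _ ≤ _ := by
        rw [abs_mul, abs_of_nonneg hb, norm_sub_rev x y]
        gcongr
        exact h.abs_sub_le_mul_norm_sub y x

lemma norm_sub_le_of_sector_eq (h : ChordSystem ρ S K c C) {r : ℝ} {N : ℕ} (hN : 0 < N)
    (hx : x ≠ 0) (hy : y ≠ 0) (hyr : ‖y‖ ≤ 2 * r) (hsector : sector N x = sector N y)
    (hδ : |ρ x - ρ y| ≤ δ) :
    ‖x - y‖ ≤ (8 * C / c + 4 + 2 / c) * (r / N + δ) := by
  have hc := h.c_pos
  have hC := h.C_pos
  have : (0 : ℝ) < N := Nat.cast_pos.2 hN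
  set a := l1Norm x
  set b := l1Norm y
  set x' := a⁻¹ • x
  set y' := b⁻¹ • y
  have ha : 0 < a := l1Norm_pos hx
  have hb : 0 < b := l1Norm_pos hy
  have hbr : b ≤ 4 * r := by linarith [l1Norm_le_two_mul_norm y]
  have hxa : x = a • x' := (smul_inv_smul₀ ha.ne' x).symm
  have hyb : y = b • y' := (smul_inv_smul₀ hb.ne' y).symm
  have hone : l1Norm x' = 1 := l1Norm_inv_smul_self hx
  have hclose : ‖x' - y'‖ ≤ 1 / N := norm_normalize_sub_le_of_sector_eq hN hx hy hsector
  have hr : 0 < r := by linarith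
  have hab : |a - b| ≤ (δ + 4 * r * (C * (1 / N))) / (c / 2) := by
    have hρ : c / 2 ≤ ρ x' := by nlinarith [h.lower x', l1Norm_le_two_mul_norm x']
    rw [le_div_iff₀ (by positivity)]
    calc |a - b| * (c / 2) ≤ |a - b| * ρ x' := by gcongr
      _ ≤ |ρ x - ρ y| + b * (C * ‖x' - y'‖) := by
          have := h.abs_sub_mul_le ha.le hb.le x' y'
          rwa [← hxa, ← hyb] at this
      _ ≤ _ := by gcongr
  have hδ₀ : 0 ≤ δ := (abs_nonneg _).trans hδ
  calc ‖x - y‖ = ‖(a - b) • x' + b • (x' - y')‖ := by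
        nth_rw 1 [hxa, hyb]
        congr 1
        module
    _ ≤ |a - b| * ‖x'‖ + b * ‖x' - y'‖ := by
        refine (norm_add_le _ _).trans_eq ?_
        rw [norm_smul (a - b) x', norm_smul b, Real.norm_eq_abs, Real.norm_eq_abs, abs_of_pos hb]
    _ ≤ (δ + 4 * r * (C * (1 / N))) / (c / 2) * 1 + 4 * r * (1 / N) := by
        gcongr
        exact (norm_le_l1Norm x').trans_eq hone
    _ = (8 * C / c + 4) * (r / N) + 2 / c * δ := by
        field_simp
        ring
    _ ≤ (8 * C / c + 4) * (r / N) + 2 / c * δ + (2 / c * (r / N) + (8 * C / c + 4) * δ) :=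
        le_add_of_nonneg_right (by positivity)
    _ = _ := by ring

/-- Moving along `x` changes `ρ` at a definite rate, so `y` must point away from `x`. -/
lemma norm_mul_norm_le_abs_cross (h : ChordSystem ρ S K c C) (hyx : ‖y‖ ≤ ‖x‖)
    (hδ : δ / c ≤ ‖y‖ / 2) (hρ : |ρ (x + y) - ρ x| ≤ δ) :
    ‖x‖ * ‖y‖ ≤ 2 * (C / c + 1) * |x 0 * y 1 - x 1 * y 0| := by
  have hc := h.c_pos
  have hC := h.C_pos
  obtain ⟨a, z, ha, hy, hz⟩ := exists_eq_smul_add_of_norm_le hyx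
  have hmove : |a| * ρ x ≤ δ + C * ‖z‖ := by
    calc |a| * ρ x = |(ρ (x + y) - ρ x) + (ρ ((1 + a) • x) - ρ (x + y))| := by
          rw [← abs_of_nonneg (h.nonneg x), ← abs_mul, abs_of_nonneg (h.nonneg x),
            h.smul _ _ (by linarith [abs_le.1 ha])]
          congr 1
          ring
      _ ≤ |ρ (x + y) - ρ x| + |ρ ((1 + a) • x) - ρ (x + y)| := abs_add_le _ _
      _ ≤ δ + C * ‖z‖ := by
          refine add_le_add hρ ((h.abs_sub_le_mul_norm_sub _ _).trans_eq ?_)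
          rw [hy, ← norm_neg z]
          congr 2
          module
  have hax : |a| * ‖x‖ ≤ δ / c + C / c * ‖z‖ := by
    rw [div_mul_eq_mul_div, ← add_div, le_div_iff₀ hc]
    nlinarith [h.lower x, abs_nonneg a]
  have hyz : ‖y‖ ≤ |a| * ‖x‖ + ‖z‖ := by
    nth_rw 1 [hy]
    refine (norm_add_le _ _).trans_eq ?_
    rw [norm_smul, Real.norm_eq_abs]
  have hyz' : ‖y‖ ≤ 2 * (C / c + 1) * ‖z‖ := by linarith
  calc ‖x‖ * ‖y‖ ≤ ‖x‖ * (2 * (C / c + 1) * ‖z‖) := by gcongr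
    _ = 2 * (C / c + 1) * (‖z‖ * ‖x‖) := by ring
    _ ≤ _ := by gcongr

end ChordSystem

/-! ### Boxes and telescoping -/

section Box

variable {ι : Type*} [Fintype ι] [DecidableEq ι]

/-- The integer vectors of supremum norm at most `m`. -/
def intBox (ι : Type*) [Fintype ι] [DecidableEq ι] (m : ℕ) : Finset (ι → ℤ) :=
  Finset.Icc (fun _ ↦ -(m : ℤ)) fun _ ↦ (m : ℤ)

lemma mem_intBox {m : ℕ} {k : ι → ℤ} : k ∈ intBox ι m ↔ ‖k‖ ≤ m := by
  rw [intBox, Finset.mem_Icc, pi_norm_le_iff_of_nonneg m.cast_nonneg, Pi.le_def, Pi.le_def,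
    ← forall_and]
  refine forall_congr' fun i ↦ ?_
  rw [← abs_le, Int.norm_eq_abs]
  exact_mod_cast Iff.rfl

lemma card_intBox (m : ℕ) : (intBox ι m).card = (2 * m + 1) ^ Fintype.card ι := by
  rw [intBox, Pi.card_Icc]
  simp only [Int.card_Icc, Finset.prod_const, Finset.card_univ]
  congr
  omega

lemma sum_sub_sum_le_of_subset {α : Type*} {A B D : Finset α} (hDA : D ⊆ A) (hDB : D ⊆ B)
    (hAB : A.card = B.card) {F : α → ℝ} {b : ℝ} (hF : ∀ k, |F k| ≤ b) :
    ∑ k ∈ A, F k - ∑ k ∈ B, F k ≤ 2 * b * (A.card - D.card) := by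
  classical
  have hbound (U : Finset α) : |∑ k ∈ U, F k| ≤ U.card * b := by
    rw [← nsmul_eq_mul]
    exact (Finset.abs_sum_le_sum_abs _ _).trans (Finset.sum_le_card_nsmul _ _ _ fun k _ ↦ hF k)
  have hA := abs_le.1 (hbound (A \ D))
  have hB := abs_le.1 (hbound (B \ D))
  rw [Finset.cast_card_sdiff hDA] at hA
  rw [Finset.cast_card_sdiff hDB, ← hAB] at hB
  rw [← Finset.sum_sdiff hDA, ← Finset.sum_sdiff hDB]
  linarith

/-- Telescoping over a box: only a boundary layer of width `n` contributes. -/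
lemma sum_intBox_sub_translate_le {F : (ι → ℤ) → ℝ} {b : ℝ} (hF : ∀ k, |F k| ≤ b) {m n : ℕ}
    (hnm : n ≤ m) {j : ι → ℤ} (hj : ‖j‖ ≤ n) :
    ∑ k ∈ intBox ι m, (F k - F (k - j)) ≤
      2 * b * ((2 * m + 1) ^ Fintype.card ι - (2 * (m - n) + 1) ^ Fintype.card ι) := by
  have hcast : ((m - n : ℕ) : ℝ) = m - n := Nat.cast_sub hnm
  have hsub : intBox ι (m - n) ⊆ intBox ι m := fun k hk ↦ by
    rw [mem_intBox] at hk ⊢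
    linarith [n.cast_nonneg (α := ℝ)]
  have hsub' : intBox ι (m - n) ⊆ (intBox ι m).map (Equiv.subRight j).toEmbedding := fun k hk ↦ by
    rw [Finset.mem_map_equiv, Equiv.subRight_symm_apply, mem_intBox]
    rw [mem_intBox] at hk
    linarith [norm_add_le k j]
  have hle := sum_sub_sum_le_of_subset hsub hsub' (Finset.card_map _).symm hF
  rw [Finset.sum_map, card_intBox, card_intBox] at hle
  push_cast [hcast] at hle
  rw [Finset.sum_sub_distrib]
  exact hle

lemma card_le_of_norm_le {r : ℕ} (hr : 1 ≤ r) {s : Finset (Fin 2 → ℤ)} (hs : ∀ k ∈ s, ‖k‖ ≤ 2 * r) :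
    (s.card : ℝ) ≤ 25 * (r : ℝ) ^ 2 := by
  have hle : s.card ≤ (intBox (Fin 2) (2 * r)).card := Finset.card_le_card fun k hk ↦ by
    rw [mem_intBox]
    exact_mod_cast hs k hk
  rw [card_intBox, Fintype.card_fin] at hle
  exact_mod_cast hle.trans (by nlinarith : (2 * (2 * r) + 1) ^ 2 ≤ 25 * r ^ 2)

end Box

/-! ### Masses near the right end of the profiles -/

section TailSup

/-- The supremum of `S` on `[a, ∞)`. -/
def tailSup (S : ℝ → ℝ) (a : ℝ) : ℝ := sSup (S '' Ici a)

variable {S : ℝ → ℝ} {a b u : ℝ}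

lemma tailSup_le (hb : ∀ u, a ≤ u → S u ≤ b) : tailSup S a ≤ b :=
  csSup_le (nonempty_Ici.image S) (forall_mem_image.2 hb)

lemma le_tailSup (hb : ∀ u, a ≤ u → S u ≤ b) (hu : a ≤ u) : S u ≤ tailSup S a :=
  le_csSup ⟨b, forall_mem_image.2 hb⟩ (mem_image_of_mem S hu)

end TailSup

section Cutoff

/-- Truncation of a real number to `[-b, b]`. -/
def cutoff (b x : ℝ) : ℝ := max (-b) (min b x)

variable {b x y : ℝ}

lemma abs_cutoff_le (hb : 0 ≤ b) (x : ℝ) : |cutoff b x| ≤ b :=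
  abs_le.2 ⟨le_max_left _ _, max_le (by linarith) (min_le_left _ _)⟩

lemma cutoff_mono (b : ℝ) : Monotone (cutoff b) := fun _ _ hxy ↦
  max_le_max le_rfl (min_le_min le_rfl hxy)

lemma cutoff_of_abs_le (hx : |x| ≤ b) : cutoff b x = x := by
  rw [cutoff, min_eq_right (abs_le.1 hx).2, max_eq_right (abs_le.1 hx).1]

lemma cutoff_of_le_neg (hb : 0 ≤ b) (hx : x ≤ -b) : cutoff b x = -b := by
  rw [cutoff, min_eq_right (by linarith), max_eq_left hx]

end Cutoff

/-- The normalised mass of the second difference of `S k`, with step `1 / (2 Q ^ 4)`, near the right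
end of its support, for a frequency `k` of size at least `r`; it is at most `3 K`. In the proof of
the theorem `Q ^ 4` is the radius `R`. -/
def endMass (ρ : (Fin 2 → ℝ) → ℝ) (S : (Fin 2 → ℤ) → ℝ → ℝ) (K Q r : ℝ) (k : Fin 2 → ℤ) : ℝ :=
  2 * Q ^ 2 * (r * √r) * tailSup (S k) (ρ (latticeVec k) - 1 / Q ^ 4) + K / Q

namespace ChordSystem

variable {ρ : (Fin 2 → ℝ) → ℝ} {S : (Fin 2 → ℤ) → ℝ → ℝ} {K c C Q r : ℝ} {k j : Fin 2 → ℤ}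

lemma apply_le_of_sub_le (h : ChordSystem ρ S K c C) (hk : k ≠ 0) (hr : 0 < r) (hrk : r ≤ ‖k‖)
    (hQ : 0 < Q) {u : ℝ} (hu : ρ (latticeVec k) - 1 / Q ^ 4 ≤ u) :
    S k u ≤ K / (r * √r) / Q ^ 2 := by
  have := h.K_nonneg
  refine ((h.profile k hk).le_of_hi_sub_le hu).trans ?_
  rw [show 1 / Q ^ 4 = (1 / Q ^ 2) ^ 2 by ring, Real.sqrt_sq (by positivity), mul_one_div]
  gcongr

lemma tailSup_nonneg (h : ChordSystem ρ S K c C) (hk : k ≠ 0) (hQ : 0 < Q) :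
    0 ≤ tailSup (S k) (ρ (latticeVec k) - 1 / Q ^ 4) :=
  ((h.profile k hk).nonneg _).trans
    (le_tailSup (fun _ ↦ h.apply_le_of_sub_le hk (norm_pos_iff.2 hk) le_rfl hQ) le_rfl)

lemma endMass_nonneg (h : ChordSystem ρ S K c C) (hk : k ≠ 0) (hQ : 0 < Q) (hr : 0 < r) :
    0 ≤ endMass ρ S K Q r k := by
  have := h.tailSup_nonneg hk hQ
  have := h.K_nonneg
  unfold endMass
  positivity

lemma endMass_le (h : ChordSystem ρ S K c C) (hk : k ≠ 0) (hQ : 1 ≤ Q) (hr : 0 < r)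
    (hrk : r ≤ ‖k‖) : endMass ρ S K Q r k ≤ 3 * K := by
  have hQ₀ : 0 < Q := by linarith
  have htail := tailSup_le fun _ ↦ h.apply_le_of_sub_le hk hr hrk hQ₀
  have hKQ : K / Q ≤ K := div_le_self h.K_nonneg hQ
  have : 0 < √r := Real.sqrt_pos.2 hr
  calc endMass ρ S K Q r k ≤ 2 * Q ^ 2 * (r * √r) * (K / (r * √r) / Q ^ 2) + K / Q := by
        unfold endMass
        gcongr
    _ = 2 * K + K / Q := by field_simp
    _ ≤ 3 * K := by linarith

lemma integral_abs_indicator_Ioi_secondDiff_le (h : ChordSystem ρ S K c C) (hk : k ≠ 0)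
    (hQ : 2 ≤ Q) (hr : 0 < r) (hrk : r ≤ ‖k‖) (hQc : 1 / Q ^ 2 ≤ c) :
    ∫ u, |(Ioi (ρ (latticeVec k) - 1 / Q ^ 2)).indicator (secondDiff (S k) (1 / (2 * Q ^ 4))) u| ≤
      endMass ρ S K Q r k / (Q ^ 6 * (r * √r)) := by
  have hK := h.K_nonneg
  have hQ₀ : 0 < Q := by linarith
  have hQ₁ : 1 / Q ^ 2 ≤ 1 := (div_le_one (by positivity)).2 (by nlinarith)
  have : 0 < √r := Real.sqrt_pos.2 hr
  have hstep : 2 * (1 / (2 * Q ^ 4)) = 1 / Q ^ 4 := by field_simp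
  set τ := tailSup (S k) (ρ (latticeVec k) - 1 / Q ^ 4)
  have hmass := (h.profile k hk).integral_abs_indicator_Ioi_secondDiff_le (p := 1 / (2 * Q ^ 4))
    (w := 1 / Q ^ 2) (τ := τ) (by positivity)
    (by
      rw [hstep, show 1 / Q ^ 4 = 1 / Q ^ 2 * (1 / Q ^ 2) by field_simp]
      exact mul_le_of_le_one_right (by positivity) hQ₁)
    (by
      have hnorm := one_le_norm_of_ne_zero hk
      have hhi := h.lower (latticeVec k)
      have hlo := h.lower (-latticeVec k)
      rw [norm_neg] at hlo
      rw [norm_latticeVec] at hhi hlo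
      nlinarith [h.c_pos])
    (by
      rw [hstep]
      exact fun u hu ↦ le_tailSup (fun _ ↦ h.apply_le_of_sub_le hk hr hrk hQ₀) hu)
  have hsqrt : 1 / (2 * Q) ≤ √(1 / Q ^ 2 / 2) := by
    apply Real.le_sqrt_of_sq_le
    rw [div_pow, mul_pow, div_div, one_pow]
    exact one_div_le_one_div_of_le (by positivity) (by nlinarith)
  calc _ ≤ _ := hmass
    _ ≤ 4 * (1 / (2 * Q ^ 4)) * τ + (1 / (2 * Q ^ 4)) ^ 2 * (K / (r * √r)) / (1 / (2 * Q)) := by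
        gcongr
    _ = (2 * Q ^ 2 * (r * √r) * τ + K / Q / 2) / (Q ^ 6 * (r * √r)) := by
        field_simp
        ring
    _ ≤ (2 * Q ^ 2 * (r * √r) * τ + K / Q) / (Q ^ 6 * (r * √r)) := by
        have : 0 ≤ K / Q := by positivity
        gcongr ?_ / _
        linarith

lemma two_mul_le_add_add_sub (h : ChordSystem ρ S K c C) (x y : Fin 2 → ℝ) :
    2 * ρ x ≤ ρ (x + y) + ρ (x - y) := by
  have hadd := h.add_le (x + y) (x - y)
  rwa [add_add_sub_cancel, ← two_smul ℝ, h.smul _ _ zero_le_two] at hadd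

lemma tailSup_mul_norm_mul_norm_le (h : ChordSystem ρ S K c C) (hj : j ≠ 0) (hjk : ‖j‖ ≤ ‖k‖)
    {δ s : ℝ} (hδ : δ / c ≤ 1 / 2) (hs : 0 < s)
    (hρ : |ρ (latticeVec k + latticeVec j) - ρ (latticeVec k)| ≤ δ)
    (hτ : 0 ≤ tailSup (S k) (ρ (latticeVec k) - s)) :
    tailSup (S k) (ρ (latticeVec k) - s) * (‖k‖ * ‖j‖) ≤
      2 * (C / c + 1) * (ρ (latticeVec k + latticeVec j) + ρ (latticeVec k - latticeVec j) -
        2 * ρ (latticeVec k) + 2 * s) := by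
  have hc := h.c_pos
  have hC := h.C_pos
  have hj₁ := one_le_norm_of_ne_zero hj
  have hk : k ≠ 0 := norm_pos_iff.1 (by linarith)
  have hcross : ‖k‖ * ‖j‖ ≤ 2 * (C / c + 1) * |(cross k j : ℝ)| := by
    have hreal := h.norm_mul_norm_le_abs_cross (x := latticeVec k) (y := latticeVec j)
      (by simpa only [norm_latticeVec] using hjk) (by rw [norm_latticeVec]; linarith) hρ
    simpa [norm_latticeVec, latticeVec, cross] using hreal
  have hpos : 0 < |(cross k j : ℝ)| :=
    pos_of_mul_pos_right ((mul_pos (norm_pos_iff.2 hk) (by linarith)).trans_le hcross)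
      (by positivity)
  calc _ ≤ tailSup (S k) (ρ (latticeVec k) - s) * (2 * (C / c + 1) * |(cross k j : ℝ)|) := by
        gcongr
    _ = 2 * (C / c + 1) * (tailSup (S k) (ρ (latticeVec k) - s) * |(cross k j : ℝ)|) := by ring
    _ ≤ _ := by
        gcongr
        rw [← le_div_iff₀ hpos]
        refine tailSup_le fun u hu ↦ ?_
        rw [le_div_iff₀ hpos]
        exact h.chord k j u s hk hs hu

end ChordSystem

/-- The increment of `ρ` at `k` in the direction `j`, truncated to `[-b, b]` so that only a small
boundary term survives when its differences are summed over a box. -/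
def cutIncrement (ρ : (Fin 2 → ℝ) → ℝ) (b : ℝ) (j k : Fin 2 → ℤ) : ℝ :=
  cutoff b (ρ (latticeVec k + latticeVec j) - ρ (latticeVec k))

lemma cutIncrement_sub (ρ : (Fin 2 → ℝ) → ℝ) (b : ℝ) (j k : Fin 2 → ℤ) :
    cutIncrement ρ b j (k - j) = cutoff b (ρ (latticeVec k) - ρ (latticeVec k - latticeVec j)) := by
  rw [cutIncrement, sub_eq_add_neg k, latticeVec_add, latticeVec_neg, ← sub_eq_add_neg,
    sub_add_cancel]

namespace ChordSystem

variable {ρ : (Fin 2 → ℝ) → ℝ} {S : (Fin 2 → ℤ) → ℝ → ℝ} {K c C Q : ℝ} {k j : Fin 2 → ℤ}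

lemma cutIncrement_sub_le (h : ChordSystem ρ S K c C) (b : ℝ) (j k : Fin 2 → ℤ) :
    cutIncrement ρ b j (k - j) ≤ cutIncrement ρ b j k := by
  rw [cutIncrement_sub]
  exact cutoff_mono b (by linarith [h.two_mul_le_add_add_sub (latticeVec k) (latticeVec j)])

lemma three_div_sq_le_cutIncrement_sub (hQ : 0 < Q)
    (hρ : |ρ (latticeVec k + latticeVec j) - ρ (latticeVec k)| ≤ 3 / Q ^ 2)
    (hle : ρ (latticeVec k) - ρ (latticeVec k - latticeVec j) ≤ -(6 / Q ^ 2)) :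
    3 / Q ^ 2 ≤ cutIncrement ρ (6 / Q ^ 2) j k - cutIncrement ρ (6 / Q ^ 2) j (k - j) := by
  have hk : cutIncrement ρ (6 / Q ^ 2) j k =
      ρ (latticeVec k + latticeVec j) - ρ (latticeVec k) :=
    cutoff_of_abs_le (hρ.trans (by gcongr; norm_num))
  have hkj : cutIncrement ρ (6 / Q ^ 2) j (k - j) = -(6 / Q ^ 2) :=
    (cutIncrement_sub ρ _ j k).trans (cutoff_of_le_neg (by positivity) hle)
  rw [hk, hkj, show 6 / Q ^ 2 = 3 / Q ^ 2 + 3 / Q ^ 2 by ring]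
  linarith [(abs_le.1 hρ).1]

lemma cutIncrement_sub_eq_secondDiff (h : ChordSystem ρ S K c C) (hQ : 0 < Q)
    (hρ : |ρ (latticeVec k + latticeVec j) - ρ (latticeVec k)| ≤ 3 / Q ^ 2)
    (hge : -(6 / Q ^ 2) ≤ ρ (latticeVec k) - ρ (latticeVec k - latticeVec j)) :
    cutIncrement ρ (6 / Q ^ 2) j k - cutIncrement ρ (6 / Q ^ 2) j (k - j) =
      ρ (latticeVec k + latticeVec j) + ρ (latticeVec k - latticeVec j) -
        2 * ρ (latticeVec k) := by
  have hk : cutIncrement ρ (6 / Q ^ 2) j k =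
      ρ (latticeVec k + latticeVec j) - ρ (latticeVec k) :=
    cutoff_of_abs_le (hρ.trans (by gcongr; norm_num))
  have hkj : cutIncrement ρ (6 / Q ^ 2) j (k - j) =
      ρ (latticeVec k) - ρ (latticeVec k - latticeVec j) := by
    refine (cutIncrement_sub ρ _ j k).trans (cutoff_of_abs_le (abs_le.2 ⟨hge, ?_⟩))
    rw [show 6 / Q ^ 2 = 3 / Q ^ 2 + 3 / Q ^ 2 by ring]
    linarith [(abs_le.1 hρ).2, h.two_mul_le_add_add_sub (latticeVec k) (latticeVec j),
      show 0 < 3 / Q ^ 2 by positivity]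
  rw [hk, hkj]
  ring

lemma endMass_le_cutIncrement_sub (h : ChordSystem ρ S K c C) (hQ : 1 ≤ Q)
    (hQc : 3 / Q ^ 2 / c ≤ 1 / 2) {r : ℝ} (hr : 1 ≤ r) (hrk : r ≤ ‖k‖) (hj : j ≠ 0) (hjr : ‖j‖ ≤ r)
    (hρ : |ρ (latticeVec k + latticeVec j) - ρ (latticeVec k)| ≤ 3 / Q ^ 2) :
    endMass ρ S K Q r k ≤
      (K * Q ^ 2 + 2 * (2 * (C / c + 1)) * Q ^ 2 * √r / ‖j‖) *
          (cutIncrement ρ (6 / Q ^ 2) j k - cutIncrement ρ (6 / Q ^ 2) j (k - j)) +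
        (4 * (2 * (C / c + 1)) * √r / (Q ^ 2 * ‖j‖) + K / Q) := by
  have hK := h.K_nonneg
  have hc := h.c_pos
  have hC := h.C_pos
  have hk : k ≠ 0 := norm_pos_iff.1 (by linarith)
  have : 0 < ‖j‖ := norm_pos_iff.2 hj
  have : 0 < √r := Real.sqrt_pos.2 (by linarith)
  set D := 2 * (C / c + 1)
  have : 0 < D := by positivity
  have hmono := sub_nonneg.2 (h.cutIncrement_sub_le (6 / Q ^ 2) j k)
  set F := cutIncrement ρ (6 / Q ^ 2) j
  rcases le_total (ρ (latticeVec k) - ρ (latticeVec k - latticeVec j)) (-(6 / Q ^ 2)) with hle | hge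
  · have hgap : 3 / Q ^ 2 ≤ F k - F (k - j) :=
      three_div_sq_le_cutIncrement_sub (by linarith) hρ hle
    calc endMass ρ S K Q r k ≤ K * Q ^ 2 * (3 / Q ^ 2) := by
          refine (h.endMass_le hk hQ (by linarith) hrk).trans_eq ?_
          field_simp
      _ ≤ (K * Q ^ 2 + 2 * D * Q ^ 2 * √r / ‖j‖) * (F k - F (k - j)) := by
          gcongr
          exact le_add_of_nonneg_right (by positivity)
      _ ≤ _ := le_add_of_nonneg_right (by positivity)
  · set τ := tailSup (S k) (ρ (latticeVec k) - 1 / Q ^ 4)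
    have hτ : 0 ≤ τ := h.tailSup_nonneg hk (by linarith)
    have htail : τ * (r * ‖j‖) ≤ D * (F k - F (k - j) + 2 * (1 / Q ^ 4)) := by
      refine (mul_le_mul_of_nonneg_left (mul_le_mul_of_nonneg_right hrk (norm_nonneg j))
        hτ).trans ((h.tailSup_mul_norm_mul_norm_le hj (hjr.trans hrk) hQc (by positivity) hρ
          hτ).trans_eq ?_)
      rw [h.cutIncrement_sub_eq_secondDiff (by linarith) hρ hge]
    calc endMass ρ S K Q r k = 2 * Q ^ 2 * √r / ‖j‖ * (τ * (r * ‖j‖)) + K / Q := by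
          change 2 * Q ^ 2 * (r * √r) * τ + K / Q = _
          field_simp
      _ ≤ 2 * Q ^ 2 * √r / ‖j‖ * (D * (F k - F (k - j) + 2 * (1 / Q ^ 4))) + K / Q := by gcongr
      _ = 2 * D * Q ^ 2 * √r / ‖j‖ * (F k - F (k - j)) +
            (4 * D * √r / (Q ^ 2 * ‖j‖) + K / Q) := by
          field_simp
          ring
      _ ≤ _ := by
          gcongr
          exact le_add_of_nonneg_left (by positivity)

lemma sum_cutIncrement_sub_le (h : ChordSystem ρ S K c C) (Q : ℝ) {r : ℕ} (hr : 1 ≤ r)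
    (hjr : ‖j‖ ≤ r) {s : Finset (Fin 2 → ℤ)} (hs : s ⊆ intBox (Fin 2) (2 * r)) :
    ∑ k ∈ s, (cutIncrement ρ (6 / Q ^ 2) j k - cutIncrement ρ (6 / Q ^ 2) j (k - j)) ≤
      240 / Q ^ 2 * ‖j‖ * r := by
  obtain ⟨n, hn⟩ : ∃ n : ℕ, ‖j‖ = n := ⟨_, EisensteinSeries.norm_eq_max_natAbs j⟩
  have hnr : n ≤ r := Nat.cast_le.1 (hn ▸ hjr)
  refine (Finset.sum_le_sum_of_subset_of_nonneg hs
    fun k _ _ ↦ sub_nonneg.2 (h.cutIncrement_sub_le _ j k)).trans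
    ((sum_intBox_sub_translate_le (fun k ↦ abs_cutoff_le (by positivity) _)
      (by omega) hn.le).trans ?_)
  rw [Fintype.card_fin, hn]
  push_cast
  calc _ = 12 / Q ^ 2 * (4 * n * (4 * r + 1 - n)) := by ring
    _ ≤ 12 / Q ^ 2 * (4 * n * (5 * r)) := by
        have : (1 : ℝ) ≤ r := Nat.one_le_cast.2 hr
        gcongr
        linarith [n.cast_nonneg (α := ℝ)]
    _ = 240 / Q ^ 2 * n * r := by ring

/-- A large mass at `k` forces a large second difference of `ρ` in the direction `j`, and those
telescope. -/
lemma sum_endMass_le (h : ChordSystem ρ S K c C) (hQ : 1 ≤ Q) (hQc : 3 / Q ^ 2 / c ≤ 1 / 2) {r : ℕ}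
    (hr : 1 ≤ r) (hrQ : (r : ℝ) ≤ Q ^ 2) (hj : j ≠ 0) (hjr : ‖j‖ ≤ r) (s : Finset (Fin 2 → ℤ))
    (hs : ∀ k ∈ s, r ≤ ‖k‖ ∧ ‖k‖ ≤ 2 * r ∧
      |ρ (latticeVec k + latticeVec j) - ρ (latticeVec k)| ≤ 3 / Q ^ 2) :
    ∑ k ∈ s, endMass ρ S K Q r k ≤
      240 * K * ‖j‖ * r + (580 * (2 * (C / c + 1)) + 25 * K) * (r * √r) := by
  have hK := h.K_nonneg
  have hc := h.c_pos
  have hC := h.C_pos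
  have hr' : (1 : ℝ) ≤ r := Nat.one_le_cast.2 hr
  have hj₁ := one_le_norm_of_ne_zero hj
  have hsqrt : √(r : ℝ) ^ 2 = r := Real.sq_sqrt r.cast_nonneg
  have hsqrtQ : √(r : ℝ) ≤ Q := (Real.sqrt_le_left (by linarith)).2 hrQ
  set D := 2 * (C / c + 1)
  have hsub : s ⊆ intBox (Fin 2) (2 * r) := fun k hk ↦ by
    rw [mem_intBox]
    push_cast
    exact (hs k hk).2.1
  set F := cutIncrement ρ (6 / Q ^ 2) j
  have hsum : ∑ k ∈ s, (F k - F (k - j)) ≤ 240 / Q ^ 2 * ‖j‖ * r :=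
    h.sum_cutIncrement_sub_le Q hr hjr hsub
  have hcard := card_le_of_norm_le hr fun k hk ↦ (hs k hk).2.1
  calc ∑ k ∈ s, endMass ρ S K Q r k
      ≤ ∑ k ∈ s, ((K * Q ^ 2 + 2 * D * Q ^ 2 * √r / ‖j‖) * (F k - F (k - j)) +
          (4 * D * √r / (Q ^ 2 * ‖j‖) + K / Q)) := Finset.sum_le_sum fun k hk ↦
        h.endMass_le_cutIncrement_sub hQ hQc hr' (hs k hk).1 hj hjr (hs k hk).2.2
    _ = (K * Q ^ 2 + 2 * D * Q ^ 2 * √r / ‖j‖) * ∑ k ∈ s, (F k - F (k - j)) +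
          s.card * (4 * D * √r / (Q ^ 2 * ‖j‖) + K / Q) := by
        rw [Finset.sum_add_distrib, Finset.mul_sum, Finset.sum_const, nsmul_eq_mul]
    _ ≤ (K * Q ^ 2 + 2 * D * Q ^ 2 * √r / ‖j‖) * (240 / Q ^ 2 * ‖j‖ * r) +
          25 * (r : ℝ) ^ 2 * (4 * D * √r / (Q ^ 2 * ‖j‖) + K / Q) := by gcongr
    _ = 240 * K * ‖j‖ * r + 480 * D * (r * √r) + 100 * D * (r * √r) * (r / (Q ^ 2 * ‖j‖)) +
          25 * K * (r * (r / Q)) := by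
        field_simp
        ring
    _ ≤ 240 * K * ‖j‖ * r + 480 * D * (r * √r) + 100 * D * (r * √r) * 1 +
          25 * K * (r * √r) := by
        gcongr
        · exact (div_le_one (by positivity)).2 (by nlinarith)
        · rw [div_le_iff₀ (by linarith)]
          nlinarith [Real.sqrt_nonneg (r : ℝ)]
    _ = _ := by ring

end ChordSystem

/-! ### The mean square over a shell of frequencies -/

section Sum

lemma sq_norm_sum_le_sum_mul_sum_div {κ β E : Type*} [SeminormedAddCommGroup E] [DecidableEq β]
    {s : Finset κ} {I : Finset β} {cl : κ → β} (hcl : ∀ k ∈ s, cl k ∈ I) (f : κ → E) {w : β → ℝ}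
    (hw : ∀ i ∈ I, 0 < w i) :
    ‖∑ k ∈ s, f k‖ ^ 2 ≤ (∑ i ∈ I, w i) * ∑ i ∈ I, ‖∑ k ∈ s with cl k = i, f k‖ ^ 2 / w i := by
  rw [← Finset.sum_fiberwise_of_maps_to hcl]
  calc ‖∑ i ∈ I, ∑ k ∈ s with cl k = i, f k‖ ^ 2
      ≤ (∑ i ∈ I, ‖∑ k ∈ s with cl k = i, f k‖) ^ 2 := by
        gcongr
        exact norm_sum_le _ _
    _ ≤ _ := Finset.sum_sq_le_sum_mul_sum_of_sq_le_mul _ (fun i hi ↦ (hw i hi).le)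
        (fun i hi ↦ div_nonneg (sq_nonneg _) (hw i hi).le)
        fun i hi ↦ (mul_div_cancel₀ _ (hw i hi).ne').ge

lemma integral_sq_norm_sum_le_sum_mul_sum_div {κ β E : Type*} [SeminormedAddCommGroup E]
    [DecidableEq β] {s : Finset κ} {I : Finset β} {cl : κ → β} (hcl : ∀ k ∈ s, cl k ∈ I)
    {f : κ → ℝ → E} (hf : ∀ k ∈ s, Continuous (f k)) {a b : ℝ} (hab : a ≤ b) {w : β → ℝ}
    (hw : ∀ i ∈ I, 0 < w i) :
    ∫ t in a..b, ‖∑ k ∈ s, f k t‖ ^ 2 ≤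
      (∑ i ∈ I, w i) * ∑ i ∈ I, (∫ t in a..b, ‖∑ k ∈ s with cl k = i, f k t‖ ^ 2) / w i := by
  have hcont (U : Finset κ) (hU : U ⊆ s) : Continuous fun t ↦ ‖∑ k ∈ U, f k t‖ ^ 2 :=
    (continuous_finsetSum _ fun k hk ↦ hf k (hU hk)).norm.pow 2
  have hclass (i : β) : Continuous fun t ↦ ‖∑ k ∈ s with cl k = i, f k t‖ ^ 2 / w i :=
    (hcont _ (Finset.filter_subset _ _)).div_const _
  simp_rw [← intervalIntegral.integral_div]
  rw [← intervalIntegral.integral_finsetSum fun i _ ↦ (hclass i).intervalIntegrable _ _,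
    ← intervalIntegral.integral_const_mul]
  exact intervalIntegral.integral_mono_on hab ((hcont s subset_rfl).intervalIntegrable _ _)
    ((continuous_const.mul (continuous_finsetSum _ fun i _ ↦ hclass i)).intervalIntegrable _ _)
    fun t _ ↦ sq_norm_sum_le_sum_mul_sum_div hcl _ hw

lemma sum_eq_sum_translate {G M : Type*} [AddGroup G] [DecidableEq G] [AddCommMonoid M]
    {U B : Finset G} {k : G} (hB : ∀ l ∈ U, -k + l ∈ B) (F : G → M) :
    ∑ l ∈ U, F l = ∑ j ∈ B with k + j ∈ U, F (k + j) :=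
  Finset.sum_nbij' (fun l ↦ -k + l) (fun j ↦ k + j) (fun l hl ↦ by simpa [hl] using hB l hl)
    (fun j hj ↦ (Finset.mem_filter.1 hj).2) (by simp) (by simp) (by simp)

end Sum

lemma large_sieve_width_le {Q : ℝ} (hQ : 1 ≤ Q) :
    1 / Q ^ 2 + 1 / (2 * Q ^ 4) + 1 / Q ^ 2 ≤ 3 / Q ^ 2 := by
  have : 1 / (2 * Q ^ 4) ≤ 1 / Q ^ 2 :=
    one_div_le_one_div_of_le (by positivity) (by nlinarith [one_le_pow₀ hQ (n := 2)])
  linarith [show 3 / Q ^ 2 = 1 / Q ^ 2 + 1 / Q ^ 2 + 1 / Q ^ 2 by ring]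

/-- The part near the right end of the support of the second difference of `S k`, with step
`1 / (2 Q ^ 4)`. -/
def endPart (ρ : (Fin 2 → ℝ) → ℝ) (S : (Fin 2 → ℤ) → ℝ → ℝ) (Q : ℝ) (k : Fin 2 → ℤ) : ℝ → ℝ :=
  (Ioi (ρ (latticeVec k) - 1 / Q ^ 2)).indicator (secondDiff (S k) (1 / (2 * Q ^ 4)))

open Classical in
/-- The frequencies `k ∈ s` with `k + j ∈ s` at which `ρ` changes by at most `δ` under the shift
by `j`. -/
def nearShift (ρ : (Fin 2 → ℝ) → ℝ) (δ : ℝ) (s : Finset (Fin 2 → ℤ)) (j : Fin 2 → ℤ) :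
    Finset (Fin 2 → ℤ) :=
  {k ∈ s | k + j ∈ s ∧ |ρ (latticeVec k + latticeVec j) - ρ (latticeVec k)| ≤ δ}

lemma mem_nearShift {ρ : (Fin 2 → ℝ) → ℝ} {δ : ℝ} {s : Finset (Fin 2 → ℤ)} {j k : Fin 2 → ℤ} :
    k ∈ nearShift ρ δ s j ↔
      k ∈ s ∧ k + j ∈ s ∧ |ρ (latticeVec k + latticeVec j) - ρ (latticeVec k)| ≤ δ := by
  rw [nearShift, Finset.mem_filter]

/-- The correlation of the end masses of the frequencies in `s`, over the pairs that the large sieve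
does not separate: those at distance at most `J` on which `ρ` differs by at most `3 / Q ^ 2`. -/
def pairMass (ρ : (Fin 2 → ℝ) → ℝ) (S : (Fin 2 → ℤ) → ℝ → ℝ) (K Q r : ℝ) (J : ℕ)
    (s : Finset (Fin 2 → ℤ)) : ℝ :=
  ∑ j ∈ intBox (Fin 2) J, ∑ k ∈ nearShift ρ (3 / Q ^ 2) s j,
    endMass ρ S K Q r k * endMass ρ S K Q r (k + j)

namespace ChordSystem

variable {ρ : (Fin 2 → ℝ) → ℝ} {S : (Fin 2 → ℤ) → ℝ → ℝ} {K c C Q r γ : ℝ}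
  {s : Finset (Fin 2 → ℤ)} {a : (Fin 2 → ℤ) → ℂ} {k : Fin 2 → ℤ}

lemma integrable_endPart (h : ChordSystem ρ S K c C) (hk : k ≠ 0) (Q : ℝ) :
    Integrable (endPart ρ S Q k) :=
  (integrable_secondDiff (h.profile k hk).integrable _).indicator measurableSet_Ioi

lemma mem_Icc_of_endPart_ne_zero (h : ChordSystem ρ S K c C) (hk : k ≠ 0) (hQ : 0 < Q) {u : ℝ}
    (hu : endPart ρ S Q k u ≠ 0) :
    u ∈ Icc (ρ (latticeVec k) - 1 / Q ^ 2) (ρ (latticeVec k) + 1 / (2 * Q ^ 4)) := by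
  have hmem : u ∈ Ioi (ρ (latticeVec k) - 1 / Q ^ 2) := mem_of_indicator_ne_zero hu
  refine ⟨hmem.le, ?_⟩
  by_contra! hlt
  refine hu ?_
  rw [endPart, indicator_of_mem hmem]
  exact (h.profile k hk).secondDiff_eq_zero_of_ge (by positivity) hlt.le

lemma continuous_fourier_endPart (h : ChordSystem ρ S K c C) (hk : k ≠ 0) (Q : ℝ) :
    Continuous (𝓕 fun u ↦ (endPart ρ S Q k u : ℂ)) :=
  continuous_fourier_of_integrable (h.integrable_endPart hk Q).ofReal

open Classical in
lemma sum_sector_le (h : ChordSystem ρ S K c C) {N J : ℕ} (hN : 0 < N)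
    (hNJ : (8 * C / c + 4 + 2 / c) * (r / N + 3 / Q ^ 2) ≤ J) (hs₀ : ∀ k ∈ s, k ≠ 0)
    (hs : ∀ k ∈ s, ‖k‖ ≤ 2 * r) {y : (Fin 2 → ℤ) → ℝ} (hy : ∀ k ∈ s, 0 ≤ y k) {δ : ℝ}
    (hδ : δ ≤ 3 / Q ^ 2) (b : Bool × ℤ) :
    ∑ k ∈ s with sector N (latticeVec k) = b, ∑ l ∈ s with sector N (latticeVec l) = b,
        (if |ρ (latticeVec k) - ρ (latticeVec l)| < δ then y k * y l else 0) ≤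
      ∑ k ∈ s with sector N (latticeVec k) = b, ∑ j ∈ intBox (Fin 2) J,
        if k ∈ nearShift ρ (3 / Q ^ 2) s j then y k * y (k + j) else 0 := by
  refine Finset.sum_le_sum fun k hk ↦ ?_
  obtain ⟨hks, hkb⟩ := Finset.mem_filter.1 hk
  have hnear {l : Fin 2 → ℤ} (hl : l ∈ {l ∈ s | sector N (latticeVec l) = b ∧
      |ρ (latticeVec k) - ρ (latticeVec l)| < δ}) :
      l ∈ s ∧ |ρ (latticeVec k) - ρ (latticeVec l)| ≤ 3 / Q ^ 2 ∧ -k + l ∈ intBox (Fin 2) J := by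
    obtain ⟨hls, hlb, hlδ⟩ := Finset.mem_filter.1 hl
    refine ⟨hls, hlδ.le.trans hδ, ?_⟩
    have hclose := h.norm_sub_le_of_sector_eq (x := latticeVec k) (y := latticeVec l) (r := r) hN
      (by simpa [← norm_pos_iff, norm_latticeVec] using hs₀ k hks)
      (by simpa [← norm_pos_iff, norm_latticeVec] using hs₀ l hls)
      (by simpa [norm_latticeVec] using hs l hls) (hkb.trans hlb.symm) (hlδ.le.trans hδ)
    rw [mem_intBox, ← norm_latticeVec, latticeVec_add, latticeVec_neg, neg_add_eq_sub,
      norm_sub_rev]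
    exact hclose.trans hNJ
  rw [← Finset.sum_filter, ← Finset.sum_filter, Finset.filter_filter,
    sum_eq_sum_translate (fun l hl ↦ (hnear hl).2.2)]
  refine Finset.sum_le_sum_of_subset_of_nonneg (fun j hj ↦ ?_) fun j hj _ ↦ ?_
  · obtain ⟨hjJ, hj⟩ := Finset.mem_filter.1 hj
    obtain ⟨hls, hlδ, -⟩ := hnear hj
    rw [Finset.mem_filter, mem_nearShift, ← latticeVec_add, abs_sub_comm]
    exact ⟨hjJ, hks, hls, hlδ⟩
  · exact mul_nonneg (hy k hks) (hy _ (mem_nearShift.1 (Finset.mem_filter.1 hj).2).2.1)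

open Classical in
lemma integral_sq_norm_sum_sector_le (h : ChordSystem ρ S K c C) (hQ : 2 ≤ Q)
    (hQc : 1 / Q ^ 2 ≤ c) (hr : 0 < r) {N J : ℕ} (hN : 0 < N)
    (hNJ : (8 * C / c + 4 + 2 / c) * (r / N + 3 / Q ^ 2) ≤ J)
    (hs : ∀ k ∈ s, r ≤ ‖k‖ ∧ ‖k‖ ≤ 2 * r) (ha : ∀ k ∈ s, ‖a k‖ ≤ γ) (T₀ : ℝ) (b : Bool × ℤ) :
    ∫ T in (T₀ - Q ^ 2)..(T₀ + Q ^ 2), ‖∑ k ∈ s with sector N (latticeVec k) = b,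
        a k * 𝓕 (fun u ↦ (endPart ρ S Q k u : ℂ)) T‖ ^ 2 ≤
      largeSieveConst * Q ^ 2 * ((γ / (Q ^ 6 * (r * √r))) ^ 2 *
        ∑ k ∈ s with sector N (latticeVec k) = b, ∑ j ∈ intBox (Fin 2) J,
          if k ∈ nearShift ρ (3 / Q ^ 2) s j then
            endMass ρ S K Q r k * endMass ρ S K Q r (k + j) else 0) := by
  have hQ₀ : 0 < Q := by linarith
  have hs₀ (k) (hk : k ∈ s) : k ≠ 0 := norm_pos_iff.1 (hr.trans_le (hs k hk).1)
  have hmass (k) (hk : k ∈ s) : 0 ≤ endMass ρ S K Q r k := h.endMass_nonneg (hs₀ k hk) hQ₀ hr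
  have hcoeff (k) (hk : k ∈ s) : ‖a k‖ * (endMass ρ S K Q r k / (Q ^ 6 * (r * √r))) ≤
      γ / (Q ^ 6 * (r * √r)) * endMass ρ S K Q r k := by
    rw [mul_div_assoc', div_mul_eq_mul_div]
    have := hmass k hk
    gcongr
    exact ha k hk
  have hmem {k} (hk : k ∈ s.filter fun k ↦ sector N (latticeVec k) = b) : k ∈ s :=
    (Finset.mem_filter.1 hk).1
  refine (large_sieve (G := fun k u ↦ (endPart ρ S Q k u : ℂ))
    (fun k hk ↦ (h.integrable_endPart (hs₀ k (hmem hk)) Q).ofReal) a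
    (m := fun k ↦ endMass ρ S K Q r k / (Q ^ 6 * (r * √r))) (fun k hk ↦ ?_)
    (c := fun k ↦ ρ (latticeVec k)) (w := 1 / Q ^ 2) (p := 1 / (2 * Q ^ 4))
    (fun k hk u hu ↦ h.mem_Icc_of_endPart_ne_zero (hs₀ k (hmem hk)) hQ₀ (by simpa using hu))
    (by positivity) T₀).trans (mul_le_mul_of_nonneg_left ?_ ?_)
  · simp only [Complex.norm_real, Real.norm_eq_abs]
    exact h.integral_abs_indicator_Ioi_secondDiff_le (hs₀ k (hmem hk)) hQ hr
      (hs k (hmem hk)).1 hQc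
  · have hpairs := h.sum_sector_le hN hNJ hs₀ (fun k hk ↦ (hs k hk).2) hmass
      (large_sieve_width_le (by linarith)) b
    refine le_trans ?_ (mul_le_mul_of_nonneg_left hpairs (sq_nonneg (γ / (Q ^ 6 * (r * √r)))))
    rw [Finset.mul_sum]
    refine Finset.sum_le_sum fun k hk ↦ ?_
    rw [Finset.mul_sum]
    refine Finset.sum_le_sum fun l hl ↦ ?_
    rw [mul_ite, mul_zero, sq (γ / _), mul_mul_mul_comm (γ / _)]
    have := hmass k (hmem hk)
    have := hmass l (hmem hl)
    split_ifs
    · exact mul_le_mul (hcoeff k (hmem hk)) (hcoeff l (hmem hl)) (by positivity)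
        ((by positivity : (0 : ℝ) ≤ _).trans (hcoeff k (hmem hk)))
    · exact le_rfl
  · exact mul_nonneg largeSieveConst_nonneg (sq_nonneg Q)

lemma integral_sq_norm_sum_le_pairMass (h : ChordSystem ρ S K c C) (hQ : 2 ≤ Q)
    (hQc : 1 / Q ^ 2 ≤ c) (hr : 0 < r) {N J : ℕ} (hN : 0 < N)
    (hNJ : (8 * C / c + 4 + 2 / c) * (r / N + 3 / Q ^ 2) ≤ J)
    (hs : ∀ k ∈ s, r ≤ ‖k‖ ∧ ‖k‖ ≤ 2 * r) (ha : ∀ k ∈ s, ‖a k‖ ≤ γ) (T₀ : ℝ) :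
    ∫ T in (T₀ - Q ^ 2)..(T₀ + Q ^ 2),
        ‖∑ k ∈ s, a k * 𝓕 (fun u ↦ (endPart ρ S Q k u : ℂ)) T‖ ^ 2 ≤
      2 * (2 * N + 1) * (largeSieveConst * Q ^ 2 *
        ((γ / (Q ^ 6 * (r * √r))) ^ 2 * pairMass ρ S K Q r J s)) := by
  classical
  set I := (Finset.univ : Finset Bool) ×ˢ Finset.Icc (-(N : ℤ)) N
  have hI (k) (_ : k ∈ s) : sector N (latticeVec k) ∈ I := sector_mem N _
  have hcard : (I.card : ℝ) = 2 * (2 * N + 1) := by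
    rw [Finset.card_product, Int.card_Icc,
      show ((N : ℤ) + 1 - -(N : ℤ)).toNat = 2 * N + 1 by omega]
    simp
  have hs₀ (k) (hk : k ∈ s) : k ≠ 0 := norm_pos_iff.1 (hr.trans_le (hs k hk).1)
  have hpair : pairMass ρ S K Q r J s = ∑ b ∈ I, ∑ k ∈ s with sector N (latticeVec k) = b,
      ∑ j ∈ intBox (Fin 2) J, if k ∈ nearShift ρ (3 / Q ^ 2) s j then
        endMass ρ S K Q r k * endMass ρ S K Q r (k + j) else 0 := by
    rw [Finset.sum_fiberwise_of_maps_to hI, Finset.sum_comm]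
    refine Finset.sum_congr rfl fun j _ ↦ ?_
    rw [← Finset.sum_filter, Finset.filter_mem_eq_inter, Finset.inter_eq_right.2]
    exact fun k hk ↦ (mem_nearShift.1 hk).1
  refine (integral_sq_norm_sum_le_sum_mul_sum_div hI (fun k hk ↦ continuous_const.mul
    (h.continuous_fourier_endPart (hs₀ k hk) Q)) (by linarith [sq_nonneg Q])
    (w := fun _ ↦ 1) fun _ _ ↦ one_pos).trans ?_
  simp only [Finset.sum_const, nsmul_eq_mul, mul_one, div_one]
  rw [hcard, hpair, Finset.mul_sum _ _ ((γ / _) ^ 2), Finset.mul_sum _ _ (largeSieveConst * _)]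
  gcongr with b
  exact h.integral_sq_norm_sum_sector_le hQ hQc hr hN hNJ hs ha T₀ b

end ChordSystem

/-! ### Sums over pairs of nearby frequencies -/

/-- The constant in the bound for the correlation of the end masses over all admissible shifts. -/
def pairConst (K c C : ℝ) : ℝ :=
  2025 * K ^ 2 + 27 * K * (240 * K + (580 * (2 * (C / c + 1)) + 25 * K))

/-- The proportionality constant in the number of sectors into which the frequencies are split. -/
def sectorDensity (c C : ℝ) : ℕ := ⌈2 * (8 * C / c + 4 + 2 / c)⌉₊

namespace ChordSystem

variable {ρ : (Fin 2 → ℝ) → ℝ} {S : (Fin 2 → ℤ) → ℝ → ℝ} {K c C Q γ : ℝ} {r J : ℕ}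
  {s : Finset (Fin 2 → ℤ)} {a : (Fin 2 → ℤ) → ℂ} {j : Fin 2 → ℤ}

lemma pairConst_nonneg (h : ChordSystem ρ S K c C) : 0 ≤ pairConst K c C := by
  have := h.K_nonneg
  have := h.c_pos
  have := h.C_pos
  unfold pairConst
  positivity

lemma endMass_mul_le (h : ChordSystem ρ S K c C) (hQ : 1 ≤ Q) (hr : 1 ≤ r)
    (hs : ∀ k ∈ s, (r : ℝ) ≤ ‖k‖) {δ : ℝ} {k : Fin 2 → ℤ} (hk : k ∈ nearShift ρ δ s j) :
    endMass ρ S K Q r k * endMass ρ S K Q r (k + j) ≤ 3 * K * endMass ρ S K Q r k := by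
  have hr' : (0 : ℝ) < r := Nat.cast_pos.2 hr
  obtain ⟨hks, hkj, -⟩ := mem_nearShift.1 hk
  have hne {k : Fin 2 → ℤ} (hk : k ∈ s) : k ≠ 0 := norm_pos_iff.1 (hr'.trans_le (hs k hk))
  rw [mul_comm]
  exact mul_le_mul_of_nonneg_right (h.endMass_le (hne hkj) hQ hr' (hs _ hkj))
    (h.endMass_nonneg (hne hks) (by linarith) hr')

lemma sum_nearShift_le (h : ChordSystem ρ S K c C) (hQ : 1 ≤ Q) (hr : 1 ≤ r)
    (hs : ∀ k ∈ s, r ≤ ‖k‖ ∧ ‖k‖ ≤ 2 * r) (δ : ℝ) (j : Fin 2 → ℤ) :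
    ∑ k ∈ nearShift ρ δ s j, endMass ρ S K Q r k * endMass ρ S K Q r (k + j) ≤
      225 * K ^ 2 * r ^ 2 := by
  have hK := h.K_nonneg
  have hr' : (0 : ℝ) < r := Nat.cast_pos.2 hr
  have hmem {k} (hk : k ∈ nearShift ρ δ s j) : k ∈ s := (mem_nearShift.1 hk).1
  have hcard := card_le_of_norm_le hr fun k hk ↦ (hs k (hmem hk)).2
  calc _ ≤ ((nearShift ρ δ s j).card : ℝ) * (9 * K ^ 2) := by
        rw [← nsmul_eq_mul]
        refine Finset.sum_le_card_nsmul _ _ _ fun k hk ↦ ?_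
        have hle := h.endMass_le (norm_pos_iff.1 (hr'.trans_le (hs k (hmem hk)).1)) hQ hr'
          (hs k (hmem hk)).1
        nlinarith [h.endMass_mul_le hQ hr (fun k hk ↦ (hs k hk).1) hk]
    _ ≤ 25 * (r : ℝ) ^ 2 * (9 * K ^ 2) := by gcongr
    _ = _ := by ring

lemma pairMass_one_le (h : ChordSystem ρ S K c C) (hQ : 1 ≤ Q) (hr : 1 ≤ r)
    (hs : ∀ k ∈ s, r ≤ ‖k‖ ∧ ‖k‖ ≤ 2 * r) :
    pairMass ρ S K Q r 1 s ≤ 2025 * K ^ 2 * r ^ 2 := by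
  refine (Finset.sum_le_card_nsmul _ _ _ fun j _ ↦ h.sum_nearShift_le hQ hr hs _ j).trans_eq ?_
  rw [card_intBox, Fintype.card_fin, nsmul_eq_mul]
  push_cast
  ring

lemma sum_nearShift_le_of_ne_zero (h : ChordSystem ρ S K c C) (hQ : 1 ≤ Q)
    (hQc : 3 / Q ^ 2 / c ≤ 1 / 2) (hr : 1 ≤ r) (hrQ : (r : ℝ) ≤ Q ^ 2) (hj : j ≠ 0)
    (hjr : ‖j‖ ≤ r) (hs : ∀ k ∈ s, r ≤ ‖k‖ ∧ ‖k‖ ≤ 2 * r) :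
    ∑ k ∈ nearShift ρ (3 / Q ^ 2) s j, endMass ρ S K Q r k * endMass ρ S K Q r (k + j) ≤
      3 * K * (240 * K * ‖j‖ * r + (580 * (2 * (C / c + 1)) + 25 * K) * (r * √r)) := by
  have hK := h.K_nonneg
  refine (Finset.sum_le_sum fun k hk ↦ h.endMass_mul_le hQ hr (fun k hk ↦ (hs k hk).1) hk).trans ?_
  rw [← Finset.mul_sum]
  gcongr
  refine h.sum_endMass_le hQ hQc hr hrQ hj hjr _ fun k hk ↦ ?_
  obtain ⟨hks, -, hkρ⟩ := mem_nearShift.1 hk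
  exact ⟨(hs k hks).1, (hs k hks).2, hkρ⟩

/-- All shifts up to `r ^ (1 / 4)` together contribute no more than the diagonal. -/
lemma pairMass_le (h : ChordSystem ρ S K c C) (hQ : 1 ≤ Q) (hQc : 3 / Q ^ 2 / c ≤ 1 / 2)
    (hr : 1 ≤ r) (hrQ : (r : ℝ) ≤ Q ^ 2) (hJ : 1 ≤ J) (hJr : J ^ 4 ≤ r)
    (hs : ∀ k ∈ s, r ≤ ‖k‖ ∧ ‖k‖ ≤ 2 * r) :
    pairMass ρ S K Q r J s ≤ pairConst K c C * r ^ 2 := by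
  have hK := h.K_nonneg
  have hc := h.c_pos
  have hC := h.C_pos
  have hJ' : (1 : ℝ) ≤ J := Nat.one_le_cast.2 hJ
  have hJr' : (J : ℝ) ^ 4 ≤ r := by exact_mod_cast hJr
  have hJ₁ : (J : ℝ) ≤ r := (le_self_pow₀ hJ' (by norm_num)).trans hJr'
  have hJ₂ : (J : ℝ) ^ 2 ≤ √r := Real.le_sqrt_of_sq_le (by rwa [← pow_mul])
  have hJ₃ : (J : ℝ) ^ 3 ≤ r := (pow_le_pow_right₀ hJ' (by norm_num)).trans hJr'
  have hsqrt : √(r : ℝ) * √r = r := Real.mul_self_sqrt r.cast_nonneg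
  have hzero : (0 : Fin 2 → ℤ) ∈ intBox (Fin 2) J := by simp [mem_intBox]
  rw [pairMass, ← Finset.add_sum_erase _ _ hzero, pairConst, add_mul]
  set B := 580 * (2 * (C / c + 1)) + 25 * K
  have hcard : ((((intBox (Fin 2) J).erase 0).card : ℕ) : ℝ) ≤ 9 * J ^ 2 := by
    have hle := (Finset.card_erase_le (s := intBox (Fin 2) J) (a := 0)).trans_eq (card_intBox J)
    exact_mod_cast hle.trans (by rw [Fintype.card_fin]; nlinarith : _ ≤ 9 * J ^ 2)
  refine add_le_add ((h.sum_nearShift_le hQ hr hs _ 0).trans (by gcongr; norm_num)) ?_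
  calc _ ≤ ((((intBox (Fin 2) J).erase 0).card : ℕ) : ℝ) *
          (3 * K * (240 * K * J * r + B * (r * √r))) := by
        rw [← nsmul_eq_mul]
        refine Finset.sum_le_card_nsmul _ _ _ fun j hj ↦ ?_
        obtain ⟨hj₀, hjJ⟩ := Finset.mem_erase.1 hj
        rw [mem_intBox] at hjJ
        exact (h.sum_nearShift_le_of_ne_zero hQ hQc hr hrQ hj₀ (hjJ.trans hJ₁) hs).trans
          (by gcongr)
    _ ≤ 9 * (J : ℝ) ^ 2 * (3 * K * (240 * K * J * r + B * (r * √r))) := by gcongr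
    _ = 27 * K * (240 * K * ((J : ℝ) ^ 3 * r) + B * ((J : ℝ) ^ 2 * (r * √r))) := by ring
    _ ≤ 27 * K * (240 * K * (r * r) + B * (√r * (r * √r))) := by gcongr
    _ = 27 * K * (240 * K * (r * r) + B * (√r * √r * r)) := by ring
    _ = 27 * K * (240 * K + B) * (r : ℝ) ^ 2 := by
        rw [hsqrt]
        ring

/-- With `sectorDensity c C * (r / J)` sectors, the frequencies of size about `r` in a common sector
that the large sieve does not separate are within distance `J`. -/
lemma integral_sq_norm_sum_endPart_le (h : ChordSystem ρ S K c C) (hQ : 2 ≤ Q)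
    (hQc : 1 / Q ^ 2 ≤ c) (hr : 1 ≤ r) (hJr : J ∣ r)
    (hQB : (8 * C / c + 4 + 2 / c) * (3 / Q ^ 2) ≤ 1 / 2)
    (hs : ∀ k ∈ s, r ≤ ‖k‖ ∧ ‖k‖ ≤ 2 * r) (ha : ∀ k ∈ s, ‖a k‖ ≤ γ) {P : ℝ} (hP₀ : 0 ≤ P)
    (hP : pairMass ρ S K Q r J s ≤ P * r ^ 2) (T₀ : ℝ) :
    ∫ T in (T₀ - Q ^ 2)..(T₀ + Q ^ 2),
        ‖∑ k ∈ s, a k * 𝓕 (fun u ↦ (endPart ρ S Q k u : ℂ)) T‖ ^ 2 ≤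
      6 * sectorDensity c C * largeSieveConst * P * γ ^ 2 / (J * Q ^ 10) := by
  obtain ⟨m, rfl⟩ := hJr
  obtain ⟨hJ, hm⟩ : 0 < J ∧ 0 < m := CanonicallyOrderedAdd.mul_pos.1 hr
  have hJ' : (1 : ℝ) ≤ J := Nat.one_le_cast.2 hJ
  have hm' : (1 : ℝ) ≤ m := Nat.one_le_cast.2 hm
  have hr₀ : (0 : ℝ) < (J * m : ℕ) := Nat.cast_pos.2 hr
  have : 0 < Q := by linarith
  have hA := largeSieveConst_nonneg
  have hc := h.c_pos
  have hC := h.C_pos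
  have hB : 2 * (8 * C / c + 4 + 2 / c) ≤ sectorDensity c C := Nat.le_ceil _
  have hB₀ : 1 ≤ sectorDensity c C := Nat.ceil_pos.2 (by positivity)
  have hB' : (1 : ℝ) ≤ sectorDensity c C := Nat.one_le_cast.2 hB₀
  set B := sectorDensity c C
  set C₀ := 8 * C / c + 4 + 2 / c
  have hNJ : C₀ * ((J * m : ℕ) / (B * m : ℕ) + 3 / Q ^ 2) ≤ J := by
    have hratio : ((J * m : ℕ) : ℝ) / (B * m : ℕ) = J / B := by
      push_cast
      field_simp
    have hhalf : C₀ * (J / B) ≤ J / 2 := by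
      rw [← mul_div_assoc, div_le_div_iff₀ (by linarith) two_pos]
      nlinarith
    rw [hratio, mul_add]
    linarith
  have hsqrt : √((J * m : ℕ) : ℝ) ^ 2 = J * m := by
    rw [Real.sq_sqrt hr₀.le, Nat.cast_mul]
  calc _ ≤ 2 * (2 * ((B * m : ℕ) : ℝ) + 1) * (largeSieveConst * Q ^ 2 *
          ((γ / (Q ^ 6 * ((J * m : ℕ) * √(J * m : ℕ)))) ^ 2 *
            pairMass ρ S K Q (J * m : ℕ) J s)) :=
        h.integral_sq_norm_sum_le_pairMass hQ hQc hr₀ (Nat.mul_pos hB₀ hm) hNJ hs ha T₀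
    _ ≤ 2 * (2 * ((B * m : ℕ) : ℝ) + 1) * (largeSieveConst * Q ^ 2 *
          ((γ / (Q ^ 6 * ((J * m : ℕ) * √(J * m : ℕ)))) ^ 2 * (P * (J * m : ℕ) ^ 2))) := by gcongr
    _ ≤ 6 * (B * m) * (largeSieveConst * Q ^ 2 *
          ((γ / (Q ^ 6 * ((J * m : ℕ) * √(J * m : ℕ)))) ^ 2 * (P * (J * m : ℕ) ^ 2))) := by
        gcongr ?_ * _
        push_cast
        nlinarith
    _ = _ := by
        rw [div_pow, mul_pow, mul_pow, hsqrt]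
        push_cast
        field_simp

end ChordSystem

/-! ### Summation over dyadic shells -/

/-- The dyadic shell `2 ^ i ≤ ‖x‖ < 2 ^ (i + 1)` containing a vector of norm at least `1`. -/
def dyadicLevel {E : Type*} [Norm E] (x : E) : ℕ := Nat.log 2 ⌊‖x‖⌋₊

section dyadicLevel

variable {E : Type*} [Norm E] {x : E}

lemma two_pow_dyadicLevel_le_norm (hx : 1 ≤ ‖x‖) : ((2 ^ dyadicLevel x : ℕ) : ℝ) ≤ ‖x‖ :=
  (Nat.cast_le.2 (Nat.pow_log_le_self 2 (Nat.floor_pos.2 hx).ne')).trans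
    (Nat.floor_le (zero_le_one.trans hx))

lemma norm_le_two_mul_two_pow_dyadicLevel (x : E) :
    ‖x‖ ≤ 2 * ((2 ^ dyadicLevel x : ℕ) : ℝ) := by
  have hlt : ⌊‖x‖⌋₊ + 1 ≤ 2 ^ dyadicLevel x * 2 := by
    rw [← pow_succ]
    exact Nat.lt_pow_succ_log_self one_lt_two _
  calc ‖x‖ ≤ ((⌊‖x‖⌋₊ + 1 : ℕ) : ℝ) := by
        push_cast
        exact (Nat.lt_floor_add_one _).le
    _ ≤ ((2 ^ dyadicLevel x * 2 : ℕ) : ℝ) := Nat.cast_le.2 hlt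
    _ = _ := by
        push_cast
        ring

end dyadicLevel

/-- The weight of the `i`-th dyadic shell in the weighted Cauchy–Schwarz inequality. The first term
is the gain from correlating frequencies over shifts of size `2 ^ (i / 4)`, the second the decay of
the coefficients beyond the threshold `X`. -/
def dyadicWeight (X : ℝ) (i : ℕ) : ℝ :=
  2 * (15 / 16) ^ i + if X < 2 ^ i then X / 2 ^ i else 0

lemma half_pow_div_eight_le (i : ℕ) : ((1 : ℝ) / 2) ^ (i / 8) ≤ 2 * (15 / 16) ^ i := by
  have hmod : (1 : ℝ) / 2 ≤ (15 / 16) ^ (i % 8) :=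
    (by norm_num : (1 : ℝ) / 2 ≤ (15 / 16) ^ 8).trans
      (pow_le_pow_of_le_one (by norm_num) (by norm_num) (Nat.mod_lt _ (by norm_num)).le)
  have hdiv : ((1 : ℝ) / 2) ^ (i / 8) ≤ ((15 / 16) ^ 8) ^ (i / 8) := by
    gcongr
    norm_num
  calc ((1 : ℝ) / 2) ^ (i / 8) ≤ 2 * (((15 / 16) ^ 8) ^ (i / 8) * (1 / 2)) := by linarith
    _ ≤ 2 * (((15 / 16) ^ 8) ^ (i / 8) * (15 / 16) ^ (i % 8)) := by gcongr
    _ = 2 * (15 / 16) ^ i := by rw [← pow_mul, ← pow_add, Nat.div_add_mod]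

lemma half_pow_le_dyadicWeight {X : ℝ} (hX : 0 ≤ X) (i : ℕ) :
    ((1 : ℝ) / 2) ^ (i / 8) ≤ dyadicWeight X i := by
  refine (half_pow_div_eight_le i).trans (le_add_of_nonneg_right ?_)
  split_ifs <;> positivity

lemma dyadicWeight_pos {X : ℝ} (hX : 0 ≤ X) (i : ℕ) : 0 < dyadicWeight X i :=
  (by positivity : (0 : ℝ) < (1 / 2) ^ (i / 8)).trans_le (half_pow_le_dyadicWeight hX i)

lemma div_two_pow_le_dyadicWeight {X : ℝ} {i : ℕ} (hXi : X < 2 ^ i) :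
    X / 2 ^ i ≤ dyadicWeight X i := by
  rw [dyadicWeight, if_pos hXi]
  exact le_add_of_nonneg_left (by positivity)

lemma sum_ite_div_two_pow_le (X : ℝ) (n : ℕ) :
    ∑ i ∈ Finset.range n, (if X < 2 ^ i then X / 2 ^ i else 0) ≤ max 0 (2 - 2 * (X / 2 ^ n)) := by
  induction n with
  | zero => simp
  | succ n ih =>
    have hhalf : 2 * (X / 2 ^ (n + 1)) = X / 2 ^ n := by
      rw [pow_succ]
      field_simp
    rw [Finset.sum_range_succ, hhalf]
    split_ifs with hX
    · have hX' : X / 2 ^ n < 1 := (div_lt_one (by positivity)).2 hX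
      rw [max_eq_right (by linarith)] at ih
      exact le_max_of_le_right (by linarith)
    · have hX' : 1 ≤ X / 2 ^ n := (one_le_div (by positivity)).2 (not_lt.1 hX)
      rw [max_eq_left (by linarith)] at ih
      exact le_max_of_le_left (by linarith)

lemma sum_dyadicWeight_le {X : ℝ} (hX : 0 ≤ X) (n : ℕ) :
    ∑ i ∈ Finset.range n, dyadicWeight X i ≤ 34 := by
  have hgeom : ∑ i ∈ Finset.range n, ((15 : ℝ) / 16) ^ i ≤ 16 := by
    rw [geom_sum_eq (by norm_num), div_le_iff_of_neg (by norm_num)]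
    linarith [show (0 : ℝ) ≤ (15 / 16) ^ n by positivity]
  have htail : ∑ i ∈ Finset.range n, (if X < 2 ^ i then X / 2 ^ i else 0) ≤ 2 :=
    (sum_ite_div_two_pow_le X n).trans (max_le two_pos.le (sub_le_self _ (by positivity)))
  simp only [dyadicWeight, Finset.sum_add_distrib, ← Finset.mul_sum]
  linarith

/-- A lower bound on `Q` under which all smallness conditions on `Q⁻¹` hold. -/
def minScale (c C : ℝ) : ℝ := 2 + 6 * (8 * C / c + 4 + 2 / c) + 6 / c

/-- The constant in the mean square bound for the contribution of the right ends. -/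
def endPartConst (K c C γ : ℝ) : ℝ :=
  6 * sectorDensity c C * largeSieveConst * pairConst K c C * γ ^ 2

namespace ChordSystem

variable {ρ : (Fin 2 → ℝ) → ℝ} {S : (Fin 2 → ℤ) → ℝ → ℝ} {K c C Q γ : ℝ} {i : ℕ}
  {s : Finset (Fin 2 → ℤ)} {a : (Fin 2 → ℤ) → ℂ}

lemma endPartConst_nonneg (h : ChordSystem ρ S K c C) (γ : ℝ) : 0 ≤ endPartConst K c C γ := by
  have := h.pairConst_nonneg
  have := largeSieveConst_nonneg
  unfold endPartConst
  positivity

lemma two_le_of_minScale_le (h : ChordSystem ρ S K c C) (hQ : minScale c C ≤ Q) : 2 ≤ Q := by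
  have := h.c_pos
  have := h.C_pos
  have : 0 ≤ 6 * (8 * C / c + 4 + 2 / c) + 6 / c := by positivity
  unfold minScale at hQ
  linarith

lemma six_div_le_sq_of_minScale_le (h : ChordSystem ρ S K c C) (hQ : minScale c C ≤ Q) :
    6 / c ≤ Q ^ 2 := by
  have := h.c_pos
  have := h.C_pos
  have : 0 ≤ 6 * (8 * C / c + 4 + 2 / c) := by positivity
  have := h.two_le_of_minScale_le hQ
  unfold minScale at hQ
  nlinarith

lemma one_div_sq_le_of_minScale_le (h : ChordSystem ρ S K c C) (hQ : minScale c C ≤ Q) :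
    1 / Q ^ 2 ≤ c := by
  have hQ₂ := h.two_le_of_minScale_le hQ
  have hc := (div_le_iff₀ h.c_pos).1 (h.six_div_le_sq_of_minScale_le hQ)
  rw [div_le_iff₀ (by positivity)]
  linarith

lemma three_div_sq_div_le_of_minScale_le (h : ChordSystem ρ S K c C) (hQ : minScale c C ≤ Q) :
    3 / Q ^ 2 / c ≤ 1 / 2 := by
  have hQ₂ := h.two_le_of_minScale_le hQ
  have hc₀ := h.c_pos
  have hc := (div_le_iff₀ hc₀).1 (h.six_div_le_sq_of_minScale_le hQ)
  rw [div_div, div_le_div_iff₀ (by positivity) two_pos]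
  linarith

lemma mul_three_div_sq_le_of_minScale_le (h : ChordSystem ρ S K c C) (hQ : minScale c C ≤ Q) :
    (8 * C / c + 4 + 2 / c) * (3 / Q ^ 2) ≤ 1 / 2 := by
  have hQ₂ := h.two_le_of_minScale_le hQ
  have : 0 < 6 / c := div_pos (by norm_num) h.c_pos
  unfold minScale at hQ
  rw [← mul_div_assoc, div_le_div_iff₀ (by positivity) two_pos]
  nlinarith

/-- Beyond the threshold `Q²` the decay of the coefficients suffices. -/
lemma integral_sq_norm_sum_endPart_le_of_lt (h : ChordSystem ρ S K c C) (hQ : minScale c C ≤ Q)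
    (hi : Q ^ 2 < 2 ^ i) (hs : ∀ k ∈ s, (2 ^ i : ℕ) ≤ ‖k‖ ∧ ‖k‖ ≤ 2 * (2 ^ i : ℕ))
    (hγ : 0 ≤ γ) (ha : ∀ k ∈ s, ‖a k‖ ≤ γ * Q ^ 2 / ‖k‖) (T₀ : ℝ) :
    ∫ T in (T₀ - Q ^ 2)..(T₀ + Q ^ 2),
        ‖∑ k ∈ s, a k * 𝓕 (fun u ↦ (endPart ρ S Q k u : ℂ)) T‖ ^ 2 ≤
      endPartConst K c C γ / Q ^ 10 * dyadicWeight (Q ^ 2) i ^ 2 := by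
  have hQ₂ := h.two_le_of_minScale_le hQ
  have hpair : 2025 * K ^ 2 ≤ pairConst K c C := by
    have := h.K_nonneg
    have := h.c_pos
    have := h.C_pos
    unfold pairConst
    exact le_add_of_nonneg_right (by positivity)
  have ha' : ∀ k ∈ s, ‖a k‖ ≤ γ * Q ^ 2 / (2 ^ i : ℕ) := fun k hk ↦ (ha k hk).trans <| by
    gcongr
    exact (hs k hk).1
  calc _ ≤ 6 * sectorDensity c C * largeSieveConst * pairConst K c C *
          (γ * Q ^ 2 / (2 ^ i : ℕ)) ^ 2 / ((1 : ℕ) * Q ^ 10) :=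
        h.integral_sq_norm_sum_endPart_le hQ₂ (h.one_div_sq_le_of_minScale_le hQ)
          Nat.one_le_two_pow (one_dvd _) (h.mul_three_div_sq_le_of_minScale_le hQ) hs ha'
          h.pairConst_nonneg ((h.pairMass_one_le (by linarith) Nat.one_le_two_pow hs).trans
            (by gcongr)) T₀
    _ = endPartConst K c C γ / Q ^ 10 * (Q ^ 2 / 2 ^ i) ^ 2 := by
        unfold endPartConst
        push_cast
        field_simp
    _ ≤ _ := by
        have := h.endPartConst_nonneg γ
        gcongr
        exact div_two_pow_le_dyadicWeight hi

/-- Up to the threshold `Q²`, correlating over shifts of size `4 ^ (i / 8)` saves a power of the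
radius. -/
lemma integral_sq_norm_sum_endPart_le_of_le (h : ChordSystem ρ S K c C) (hQ : minScale c C ≤ Q)
    (hi : 2 ^ i ≤ Q ^ 2) (hs : ∀ k ∈ s, (2 ^ i : ℕ) ≤ ‖k‖ ∧ ‖k‖ ≤ 2 * (2 ^ i : ℕ))
    (ha : ∀ k ∈ s, ‖a k‖ ≤ γ) (T₀ : ℝ) :
    ∫ T in (T₀ - Q ^ 2)..(T₀ + Q ^ 2),
        ‖∑ k ∈ s, a k * 𝓕 (fun u ↦ (endPart ρ S Q k u : ℂ)) T‖ ^ 2 ≤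
      endPartConst K c C γ / Q ^ 10 * dyadicWeight (Q ^ 2) i ^ 2 := by
  have hQ₂ := h.two_le_of_minScale_le hQ
  have hfour (m : ℕ) : 4 ^ m = 2 ^ (2 * m) := by rw [pow_mul]; norm_num
  have hJr : (4 ^ (i / 8)) ^ 4 ≤ 2 ^ i := by
    rw [hfour, ← pow_mul]
    exact Nat.pow_le_pow_right two_pos (by lia)
  have hdvd : 4 ^ (i / 8) ∣ 2 ^ i := by
    rw [hfour]
    exact pow_dvd_pow 2 (by lia)
  calc _ ≤ 6 * sectorDensity c C * largeSieveConst * pairConst K c C * γ ^ 2 /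
          ((4 ^ (i / 8) : ℕ) * Q ^ 10) :=
        h.integral_sq_norm_sum_endPart_le hQ₂ (h.one_div_sq_le_of_minScale_le hQ)
          Nat.one_le_two_pow hdvd (h.mul_three_div_sq_le_of_minScale_le hQ) hs ha
          h.pairConst_nonneg (h.pairMass_le (by linarith)
            (h.three_div_sq_div_le_of_minScale_le hQ) Nat.one_le_two_pow (by exact_mod_cast hi)
            (Nat.one_le_pow _ _ (by norm_num)) hJr hs) T₀
    _ = endPartConst K c C γ / Q ^ 10 * ((1 / 2) ^ (i / 8)) ^ 2 := by
        rw [hfour, one_div_pow, one_div_pow, ← pow_mul, mul_comm (i / 8)]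
        unfold endPartConst
        push_cast
        field_simp
    _ ≤ _ := by
        have := h.endPartConst_nonneg γ
        gcongr
        exact half_pow_le_dyadicWeight (sq_nonneg Q) i

lemma integral_sq_norm_sum_endPart_le_of_ne_zero (h : ChordSystem ρ S K c C)
    (hQ : minScale c C ≤ Q) (hs : ∀ k ∈ s, k ≠ 0) (hγ : 0 ≤ γ) (ha : ∀ k ∈ s, ‖a k‖ ≤ γ)
    (ha' : ∀ k ∈ s, ‖a k‖ ≤ γ * Q ^ 2 / ‖k‖) (T₀ : ℝ) :
    ∫ T in (T₀ - Q ^ 2)..(T₀ + Q ^ 2),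
        ‖∑ k ∈ s, a k * 𝓕 (fun u ↦ (endPart ρ S Q k u : ℂ)) T‖ ^ 2 ≤
      34 ^ 2 * endPartConst K c C γ / Q ^ 10 := by
  have hE := h.endPartConst_nonneg γ
  have hshell (i : ℕ) : ∫ T in (T₀ - Q ^ 2)..(T₀ + Q ^ 2),
      ‖∑ k ∈ s with dyadicLevel k = i, a k * 𝓕 (fun u ↦ (endPart ρ S Q k u : ℂ)) T‖ ^ 2 ≤
        endPartConst K c C γ / Q ^ 10 * dyadicWeight (Q ^ 2) i ^ 2 := by
    have hnorm : ∀ k ∈ s.filter (dyadicLevel · = i),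
        (2 ^ i : ℕ) ≤ ‖k‖ ∧ ‖k‖ ≤ 2 * (2 ^ i : ℕ) := by
      intro k hk
      obtain ⟨hks, rfl⟩ := Finset.mem_filter.1 hk
      exact ⟨two_pow_dyadicLevel_le_norm (one_le_norm_of_ne_zero (hs k hks)),
        norm_le_two_mul_two_pow_dyadicLevel k⟩
    rcases lt_or_ge (Q ^ 2) (2 ^ i) with hi | hi
    · exact h.integral_sq_norm_sum_endPart_le_of_lt hQ hi hnorm hγ
        (fun k hk ↦ ha' k (Finset.mem_of_mem_filter k hk)) T₀
    · exact h.integral_sq_norm_sum_endPart_le_of_le hQ hi hnorm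
        (fun k hk ↦ ha k (Finset.mem_of_mem_filter k hk)) T₀
  have hlevel : ∀ k ∈ s, dyadicLevel k ∈ Finset.range (s.sup dyadicLevel + 1) := fun k hk ↦
    Finset.mem_range_succ_iff.2 (Finset.le_sup hk)
  have hw (i : ℕ) := dyadicWeight_pos (sq_nonneg Q) i
  set n := s.sup dyadicLevel + 1
  calc _ ≤ (∑ i ∈ Finset.range n, dyadicWeight (Q ^ 2) i) * ∑ i ∈ Finset.range n,
          (∫ T in (T₀ - Q ^ 2)..(T₀ + Q ^ 2), ‖∑ k ∈ s with dyadicLevel k = i,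
            a k * 𝓕 (fun u ↦ (endPart ρ S Q k u : ℂ)) T‖ ^ 2) / dyadicWeight (Q ^ 2) i :=
        integral_sq_norm_sum_le_sum_mul_sum_div hlevel (fun k hk ↦ continuous_const.mul
          (h.continuous_fourier_endPart (hs k hk) Q)) (by linarith [sq_nonneg Q]) fun i _ ↦ hw i
    _ ≤ (∑ i ∈ Finset.range n, dyadicWeight (Q ^ 2) i) * ∑ i ∈ Finset.range n,
          endPartConst K c C γ / Q ^ 10 * dyadicWeight (Q ^ 2) i := by
        gcongr with i
        · exact Finset.sum_nonneg fun i _ ↦ (hw i).le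
        · rw [div_le_iff₀ (hw i), mul_assoc, ← sq]
          exact hshell i
    _ = endPartConst K c C γ / Q ^ 10 * (∑ i ∈ Finset.range n, dyadicWeight (Q ^ 2) i) ^ 2 := by
        rw [← Finset.mul_sum]
        ring
    _ ≤ endPartConst K c C γ / Q ^ 10 * 34 ^ 2 := by
        gcongr
        · exact Finset.sum_nonneg fun i _ ↦ (hw i).le
        · exact sum_dyadicWeight_le (sq_nonneg Q) n
    _ = _ := by ring

end ChordSystem

/-! ### Sums over finitely many frequencies -/

lemma sum_min_sqrt_two_pow_le {Q : ℝ} (hQ : 0 < Q) (n : ℕ) :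
    ∑ i ∈ Finset.range n, min (√2 ^ i) (Q ^ 2 / √2 ^ i) ≤ 12 * Q := by
  have hsq : √2 ^ 2 = (2 : ℝ) := Real.sq_sqrt zero_le_two
  have hle : (1.4 : ℝ) ≤ √2 := Real.le_sqrt_of_sq_le (by norm_num)
  have hstep {b : ℝ} (hb : 0 < b) :
      min b (Q ^ 2 / b) ≤ 12 * Q * (√2 * b / (Q + √2 * b)) - 12 * Q * (b / (Q + b)) := by
    have hdiff : 12 * Q * (√2 * b / (Q + √2 * b)) - 12 * Q * (b / (Q + b)) =
        12 * (√2 - 1) * Q ^ 2 * b / ((Q + √2 * b) * (Q + b)) := by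
      field_simp
      ring
    rw [hdiff, le_div_iff₀ (by positivity)]
    rcases le_total b Q with hbQ | hbQ
    · have hden : (Q + √2 * b) * (Q + b) ≤ (Q + √2 * Q) * (Q + Q) := by gcongr
      calc _ ≤ b * ((Q + √2 * Q) * (Q + Q)) := by gcongr; exact min_le_left _ _
        _ ≤ _ := by nlinarith [mul_pos hb (pow_pos hQ 2)]
    · have hden : (Q + √2 * b) * (Q + b) ≤ (b + √2 * b) * (b + b) := by gcongr
      calc _ ≤ Q ^ 2 / b * ((b + √2 * b) * (b + b)) := by gcongr; exact min_le_right _ _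
        _ = 2 * (1 + √2) * (b * Q ^ 2) := by field_simp; ring
        _ ≤ _ := by nlinarith [mul_pos hb (pow_pos hQ 2)]
  have hsum : ∑ i ∈ Finset.range n, min (√2 ^ i) (Q ^ 2 / √2 ^ i) ≤
      12 * Q * (√2 ^ n / (Q + √2 ^ n)) := by
    induction n with
    | zero =>
      rw [Finset.sum_range_zero]
      positivity
    | succ n ih =>
      rw [Finset.sum_range_succ, pow_succ' √2]
      linarith [hstep (by positivity : 0 < √2 ^ n)]
  refine hsum.trans (mul_le_of_le_one_right (by positivity) ?_)
  exact (div_le_one (by positivity)).2 (le_add_of_nonneg_left hQ.le)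

lemma div_mul_sqrt_le_mul_min {x y b γ Q : ℝ} (hb : 0 < b) (hby : b ^ 2 ≤ y) (hx : 0 ≤ x)
    (hγ : 0 ≤ γ) (hxγ : x ≤ γ) (hxy : x ≤ γ * Q ^ 2 / y) :
    x / (y * √y) ≤ γ * min b (Q ^ 2 / b) / b ^ 4 := by
  have hy : 0 ≤ y := (sq_nonneg b).trans hby
  have hsqrt : b ≤ √y := Real.le_sqrt_of_sq_le hby
  calc x / (y * √y) ≤ x / (b ^ 2 * b) := by gcongr
    _ = x * b / b ^ 4 := by field_simp
    _ ≤ _ := by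
        gcongr ?_ / _
        rw [mul_min_of_nonneg _ _ hγ]
        refine le_min (by gcongr) ?_
        calc x * b ≤ γ * Q ^ 2 / b ^ 2 * b := by
              gcongr
              exact hxy.trans (by gcongr)
          _ = _ := by field_simp

lemma sum_norm_div_mul_sqrt_le {E : Type*} [SeminormedAddCommGroup E] {Q γ : ℝ} (hQ : 0 < Q)
    (hγ : 0 ≤ γ) {s : Finset (Fin 2 → ℤ)} (hs : ∀ k ∈ s, k ≠ 0) {a : (Fin 2 → ℤ) → E}
    (ha : ∀ k ∈ s, ‖a k‖ ≤ γ) (ha' : ∀ k ∈ s, ‖a k‖ ≤ γ * Q ^ 2 / ‖k‖) :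
    ∑ k ∈ s, ‖a k‖ / (‖k‖ * √‖k‖) ≤ 300 * γ * Q := by
  have hpow (i : ℕ) : (√2 ^ i) ^ 2 = (2 : ℝ) ^ i := by
    rw [pow_right_comm, Real.sq_sqrt zero_le_two]
  have hshell (i : ℕ) : ∑ k ∈ s with dyadicLevel k = i, ‖a k‖ / (‖k‖ * √‖k‖) ≤
      25 * γ * min (√2 ^ i) (Q ^ 2 / √2 ^ i) := by
    have hcard : (((s.filter (dyadicLevel · = i)).card : ℕ) : ℝ) ≤ 25 * (√2 ^ i) ^ 4 := by
      refine (card_le_of_norm_le (Nat.one_le_two_pow (n := i)) fun k hk ↦ ?_).trans_eq ?_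
      · rw [← (Finset.mem_filter.1 hk).2]
        exact norm_le_two_mul_two_pow_dyadicLevel k
      · rw [show (√2 ^ i) ^ 4 = ((√2 ^ i) ^ 2) ^ 2 by ring, hpow]
        push_cast
        rfl
    have hterm : ∀ k ∈ s.filter (dyadicLevel · = i), ‖a k‖ / (‖k‖ * √‖k‖) ≤
        γ * min (√2 ^ i) (Q ^ 2 / √2 ^ i) / (√2 ^ i) ^ 4 := by
      intro k hk
      obtain ⟨hks, rfl⟩ := Finset.mem_filter.1 hk
      refine div_mul_sqrt_le_mul_min (by positivity) ?_ (norm_nonneg _) hγ (ha k hks) (ha' k hks)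
      rw [hpow]
      exact_mod_cast two_pow_dyadicLevel_le_norm (one_le_norm_of_ne_zero (hs k hks))
    calc _ ≤ ((s.filter (dyadicLevel · = i)).card : ℝ) *
            (γ * min (√2 ^ i) (Q ^ 2 / √2 ^ i) / (√2 ^ i) ^ 4) := by
          rw [← nsmul_eq_mul]
          exact Finset.sum_le_card_nsmul _ _ _ hterm
      _ ≤ 25 * (√2 ^ i) ^ 4 * (γ * min (√2 ^ i) (Q ^ 2 / √2 ^ i) / (√2 ^ i) ^ 4) := by gcongr
      _ = _ := by field_simp
  rw [← Finset.sum_fiberwise_of_maps_to (g := dyadicLevel) fun k hk ↦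
    Finset.mem_range_succ_iff.2 (Finset.le_sup (f := dyadicLevel) hk)]
  calc _ ≤ ∑ i ∈ Finset.range (s.sup dyadicLevel + 1),
          25 * γ * min (√2 ^ i) (Q ^ 2 / √2 ^ i) := Finset.sum_le_sum fun i _ ↦ hshell i
    _ ≤ 25 * γ * (12 * Q) := by
        rw [← Finset.mul_sum]
        gcongr
        exact sum_min_sqrt_two_pow_le hQ _
    _ = _ := by ring

/-- The part of the second difference of `S k`, with step `1 / (2Q⁴)`, at distance at least `1 / Q²`
from both ends of its support. -/
def midPart (ρ : (Fin 2 → ℝ) → ℝ) (S : (Fin 2 → ℤ) → ℝ → ℝ) (Q : ℝ) (k : Fin 2 → ℤ) : ℝ → ℝ :=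
  (Icc (-ρ (-latticeVec k) + 1 / Q ^ 2) (ρ (latticeVec k) - 1 / Q ^ 2)).indicator
    (secondDiff (S k) (1 / (2 * Q ^ 4)))

/-- The constant in the mean square bound for sums over finitely many frequencies. -/
def spectralConst (K c C γ : ℝ) : ℝ :=
  3 * (2 * (34 ^ 2 * endPartConst K c C γ) + 2 * (300 * K * γ) ^ 2)

lemma add_add_sq_le (a b d : ℝ) : (a + b + d) ^ 2 ≤ 3 * (a ^ 2 + b ^ 2 + d ^ 2) := by
  linarith [sq_nonneg (a - b), sq_nonneg (b - d), sq_nonneg (a - d)]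

lemma two_mul_cos_sub_two_le {Q T : ℝ} (hQ : 2 ≤ Q)
    (hT : T ∈ Icc (Q ^ 4 + Q ^ 2 / 2 - Q ^ 2) (Q ^ 4 + Q ^ 2 / 2 + Q ^ 2)) :
    2 * Real.cos (2 * Real.pi * (1 / (2 * Q ^ 4) * T)) - 2 ≤ -1 := by
  have hsq : 4 ≤ Q ^ 2 := by nlinarith
  have hpow : 4 * Q ^ 2 ≤ Q ^ 4 := by nlinarith
  have harg : 2 * Real.pi * (1 / (2 * Q ^ 4) * T) = Real.pi * (T / Q ^ 4) := by field_simp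
  have hlo : 1 / 2 ≤ T / Q ^ 4 := by
    rw [le_div_iff₀ (by positivity)]
    linarith [hT.1]
  have hhi : T / Q ^ 4 ≤ 3 / 2 := by
    rw [div_le_iff₀ (by positivity)]
    linarith [hT.2]
  have hcos : Real.cos (2 * Real.pi * (1 / (2 * Q ^ 4) * T)) ≤ 0 := by
    rw [harg]
    exact Real.cos_nonpos_of_pi_div_two_le_of_le (by nlinarith [Real.pi_pos])
      (by nlinarith [Real.pi_pos])
  linarith

lemma continuous_sq_norm_sum_mul {X κ : Type*} [TopologicalSpace X] {s : Finset κ} (a : κ → ℂ)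
    {f : κ → X → ℂ} (hf : ∀ k ∈ s, Continuous (f k)) :
    Continuous fun x ↦ ‖∑ k ∈ s, a k * f k x‖ ^ 2 :=
  (continuous_finsetSum _ fun k hk ↦ continuous_const.mul (hf k hk)).norm.pow 2

namespace ChordSystem

variable {ρ : (Fin 2 → ℝ) → ℝ} {S : (Fin 2 → ℤ) → ℝ → ℝ} {K c C Q γ T : ℝ} {k : Fin 2 → ℤ}
  {s : Finset (Fin 2 → ℤ)} {a : (Fin 2 → ℤ) → ℂ}

lemma integrable_midPart (h : ChordSystem ρ S K c C) (hk : k ≠ 0) (Q : ℝ) :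
    Integrable (midPart ρ S Q k) :=
  (integrable_secondDiff (h.profile k hk).integrable _).indicator measurableSet_Icc

lemma two_mul_le_width (h : ChordSystem ρ S K c C) (hk : k ≠ 0) {w : ℝ} (hw : w ≤ c) :
    2 * w ≤ ρ (latticeVec k) - -ρ (-latticeVec k) := by
  have hpos := h.lower (latticeVec k)
  have hneg := h.lower (-latticeVec k)
  rw [norm_neg] at hneg
  rw [norm_latticeVec] at hpos hneg
  nlinarith [one_le_norm_of_ne_zero hk, h.c_pos]

lemma secondDiff_eq_endPart_add_midPart_add (h : ChordSystem ρ S K c C) (hk : k ≠ 0) (hQ : 0 < Q)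
    (hQc : 1 / Q ^ 2 ≤ c) (u : ℝ) :
    secondDiff (S k) (1 / (2 * Q ^ 4)) u =
      endPart ρ S Q k u + midPart ρ S Q k u + endPart ρ S Q (-k) (-u) := by
  have hwidth := h.two_mul_le_width hk hQc
  have : 0 < 1 / Q ^ 2 := by positivity
  have hrefl : secondDiff (S (-k)) (1 / (2 * Q ^ 4)) (-u) =
      secondDiff (S k) (1 / (2 * Q ^ 4)) u := by
    rw [funext (h.neg k), secondDiff_comp_neg, neg_neg]
  simp only [endPart, midPart, indicator_apply, mem_Ioi, mem_Icc, latticeVec_neg, hrefl]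
  by_cases hright : ρ (latticeVec k) - 1 / Q ^ 2 < u
  · rw [if_pos hright, if_neg (fun hmid ↦ hmid.2.not_gt hright), if_neg (by linarith)]
    ring
  by_cases hleft : u < -ρ (-latticeVec k) + 1 / Q ^ 2
  · rw [if_neg hright, if_neg (fun hmid ↦ hmid.1.not_gt hleft), if_pos (by linarith)]
    ring
  · rw [if_neg hright, if_pos ⟨not_lt.1 hleft, not_lt.1 hright⟩, if_neg (by linarith)]
    ring

lemma fourier_secondDiff_eq (h : ChordSystem ρ S K c C) (hk : k ≠ 0) (hQ : 0 < Q)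
    (hQc : 1 / Q ^ 2 ≤ c) (T : ℝ) :
    𝓕 (fun u ↦ (secondDiff (S k) (1 / (2 * Q ^ 4)) u : ℂ)) T =
      𝓕 (fun u ↦ (endPart ρ S Q k u : ℂ)) T + 𝓕 (fun u ↦ (midPart ρ S Q k u : ℂ)) T +
        conj (𝓕 (fun u ↦ (endPart ρ S Q (-k) u : ℂ)) T) := by
  have hend : Integrable fun u ↦ (endPart ρ S Q k u : ℂ) := (h.integrable_endPart hk Q).ofReal
  have hmid : Integrable fun u ↦ (midPart ρ S Q k u : ℂ) := (h.integrable_midPart hk Q).ofReal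
  have hsum : Integrable fun u ↦ (endPart ρ S Q k u + midPart ρ S Q k u : ℂ) := hend.add hmid
  have hend' : Integrable fun u ↦ (endPart ρ S Q (-k) (-u) : ℂ) :=
    (h.integrable_endPart (neg_ne_zero.2 hk) Q).comp_neg.ofReal
  have hconj : conj (𝓕 (fun u ↦ (endPart ρ S Q (-k) u : ℂ)) T) =
      𝓕 (fun u ↦ (endPart ρ S Q (-k) (-u) : ℂ)) T := by
    rw [conj_fourier, fourier_comp_neg (fun u ↦ (endPart ρ S Q (-k) u : ℂ))]
    simp only [Complex.conj_ofReal]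
  rw [hconj, ← fourier_add_apply hend hmid, ← fourier_add_apply hsum hend']
  simp only [h.secondDiff_eq_endPart_add_midPart_add hk hQ hQc, Complex.ofReal_add]

lemma norm_fourier_midPart_le (h : ChordSystem ρ S K c C) (hk : k ≠ 0) (hQ : 2 ≤ Q)
    (hQc : 1 / Q ^ 2 ≤ c) (T : ℝ) :
    ‖𝓕 (fun u ↦ (midPart ρ S Q k u : ℂ)) T‖ ≤ K / Q ^ 7 * (1 / (‖k‖ * √‖k‖)) := by
  have hK := h.K_nonneg
  have hpw : 2 * (1 / (2 * Q ^ 4)) ≤ 1 / Q ^ 2 := by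
    rw [← mul_div_assoc, div_le_div_iff₀ (by positivity) (by positivity)]
    nlinarith [sq_nonneg (Q ^ 2), one_le_pow₀ (by linarith : 1 ≤ Q) (n := 2)]
  have hsqrt : 1 / (2 * Q) ≤ √(1 / Q ^ 2 / 2) := by
    apply Real.le_sqrt_of_sq_le
    rw [div_pow, div_div, div_le_div_iff₀ (by positivity) (by positivity)]
    nlinarith [sq_nonneg Q]
  calc _ ≤ ∫ u, |midPart ρ S Q k u| := by
        simpa only [Complex.norm_real, Real.norm_eq_abs] using
          norm_fourier_le_integral_norm (fun u ↦ (midPart ρ S Q k u : ℂ)) T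
    _ ≤ 2 * ((1 / (2 * Q ^ 4)) ^ 2 * (K / (‖k‖ * √‖k‖)) / √(1 / Q ^ 2 / 2)) :=
        (h.profile k hk).integral_abs_indicator_Icc_secondDiff_le (by positivity) hpw
          (h.two_mul_le_width hk hQc)
    _ ≤ 2 * ((1 / (2 * Q ^ 4)) ^ 2 * (K / (‖k‖ * √‖k‖)) / (1 / (2 * Q))) := by
        have : 0 < 1 / (2 * Q) := by positivity
        gcongr
    _ = _ := by field_simp

lemma norm_sum_fourier_midPart_le (h : ChordSystem ρ S K c C) (hQ : 2 ≤ Q)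
    (hQc : 1 / Q ^ 2 ≤ c) (hs : ∀ k ∈ s, k ≠ 0) (hγ : 0 ≤ γ) (ha : ∀ k ∈ s, ‖a k‖ ≤ γ)
    (ha' : ∀ k ∈ s, ‖a k‖ ≤ γ * Q ^ 2 / ‖k‖) (T : ℝ) :
    ‖∑ k ∈ s, a k * 𝓕 (fun u ↦ (midPart ρ S Q k u : ℂ)) T‖ ≤ 300 * K * γ / Q ^ 6 := by
  have hK := h.K_nonneg
  calc _ ≤ ∑ k ∈ s, K / Q ^ 7 * (‖a k‖ / (‖k‖ * √‖k‖)) := by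
        refine norm_sum_le_of_le _ fun k hk ↦ ?_
        calc _ ≤ ‖a k‖ * (K / Q ^ 7 * (1 / (‖k‖ * √‖k‖))) := by
              rw [norm_mul]
              gcongr
              exact h.norm_fourier_midPart_le (hs k hk) hQ hQc T
          _ = _ := by ring
    _ ≤ K / Q ^ 7 * (300 * γ * Q) := by
        rw [← Finset.mul_sum]
        gcongr
        exact sum_norm_div_mul_sqrt_le (by linarith) hγ hs ha ha'
    _ = _ := by field_simp

/-- For `T` near `Q⁴` the second difference multiplies the transform by a factor near `-4`. -/
lemma sq_norm_sum_fourier_le (h : ChordSystem ρ S K c C) (hQ : 2 ≤ Q) (hQc : 1 / Q ^ 2 ≤ c)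
    (hs : ∀ k ∈ s, k ≠ 0) (hγ : 0 ≤ γ) (ha : ∀ k ∈ s, ‖a k‖ ≤ γ)
    (ha' : ∀ k ∈ s, ‖a k‖ ≤ γ * Q ^ 2 / ‖k‖)
    (hT : T ∈ Icc (Q ^ 4 + Q ^ 2 / 2 - Q ^ 2) (Q ^ 4 + Q ^ 2 / 2 + Q ^ 2)) :
    ‖∑ k ∈ s, a k * 𝓕 (fun u ↦ (S k u : ℂ)) T‖ ^ 2 ≤
      3 * (‖∑ k ∈ s, a k * 𝓕 (fun u ↦ (endPart ρ S Q k u : ℂ)) T‖ ^ 2 +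
        ‖∑ k ∈ s, a k * conj (𝓕 (fun u ↦ (endPart ρ S Q (-k) u : ℂ)) T)‖ ^ 2 +
        (300 * K * γ) ^ 2 / Q ^ 12) := by
  have hmid := h.norm_sum_fourier_midPart_le hQ hQc hs hγ ha ha' T
  have hfactor := two_mul_cos_sub_two_le hQ hT
  set κ : ℝ := 2 * Real.cos (2 * Real.pi * (1 / (2 * Q ^ 4) * T)) - 2
  have hsplit : (κ : ℂ) * ∑ k ∈ s, a k * 𝓕 (fun u ↦ (S k u : ℂ)) T =
      ∑ k ∈ s, a k * 𝓕 (fun u ↦ (endPart ρ S Q k u : ℂ)) T +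
        ∑ k ∈ s, a k * 𝓕 (fun u ↦ (midPart ρ S Q k u : ℂ)) T +
        ∑ k ∈ s, a k * conj (𝓕 (fun u ↦ (endPart ρ S Q (-k) u : ℂ)) T) := by
    rw [Finset.mul_sum, ← Finset.sum_add_distrib, ← Finset.sum_add_distrib]
    refine Finset.sum_congr rfl fun k hk ↦ ?_
    rw [mul_left_comm, ← fourier_secondDiff (h.profile k (hs k hk)).integrable,
      h.fourier_secondDiff_eq (hs k hk) (by linarith) hQc, mul_add, mul_add]
  have hκ : 1 ≤ ‖(κ : ℂ)‖ := by
    rw [Complex.norm_real, Real.norm_eq_abs, abs_of_neg (by linarith)]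
    linarith
  have htri : ‖∑ k ∈ s, a k * 𝓕 (fun u ↦ (S k u : ℂ)) T‖ ≤ _ :=
    ((le_mul_of_one_le_left (norm_nonneg _) hκ).trans_eq
      ((norm_mul _ _).symm.trans (congrArg norm hsplit))).trans norm_add₃_le
  generalize ‖∑ k ∈ s, a k * 𝓕 (fun u ↦ (endPart ρ S Q k u : ℂ)) T‖ = x at htri ⊢
  generalize ‖∑ k ∈ s, a k * 𝓕 (fun u ↦ (midPart ρ S Q k u : ℂ)) T‖ = y at htri hmid
  generalize ‖∑ k ∈ s, a k * conj (𝓕 (fun u ↦ (endPart ρ S Q (-k) u : ℂ)) T)‖ = z at htri ⊢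
  have := h.K_nonneg
  calc _ ≤ (x + z + 300 * K * γ / Q ^ 6) ^ 2 := by gcongr; linarith
    _ ≤ 3 * (x ^ 2 + z ^ 2 + (300 * K * γ / Q ^ 6) ^ 2) := add_add_sq_le _ _ _
    _ = _ := by ring

lemma integral_sq_norm_sum_conj_endPart_le (h : ChordSystem ρ S K c C) (hQ : minScale c C ≤ Q)
    (hs : ∀ k ∈ s, k ≠ 0) (hγ : 0 ≤ γ) (ha : ∀ k ∈ s, ‖a k‖ ≤ γ)
    (ha' : ∀ k ∈ s, ‖a k‖ ≤ γ * Q ^ 2 / ‖k‖) (T₀ : ℝ) :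
    ∫ T in (T₀ - Q ^ 2)..(T₀ + Q ^ 2),
        ‖∑ k ∈ s, a k * conj (𝓕 (fun u ↦ (endPart ρ S Q (-k) u : ℂ)) T)‖ ^ 2 ≤
      34 ^ 2 * endPartConst K c C γ / Q ^ 10 := by
  have hmem {k : Fin 2 → ℤ} (hk : k ∈ -s) : -k ∈ s := Finset.mem_neg'.1 hk
  have hrefl (T : ℝ) : ‖∑ k ∈ s, a k * conj (𝓕 (fun u ↦ (endPart ρ S Q (-k) u : ℂ)) T)‖ =
      ‖∑ k ∈ -s, conj (a (-k)) * 𝓕 (fun u ↦ (endPart ρ S Q k u : ℂ)) T‖ := by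
    rw [← RCLike.norm_conj, map_sum, Finset.sum_neg_index]
    simp only [map_mul, Complex.conj_conj, neg_neg]
  simp only [hrefl]
  exact h.integral_sq_norm_sum_endPart_le_of_ne_zero hQ
    (fun k hk ↦ neg_ne_zero.1 (hs _ (hmem hk))) hγ
    (fun k hk ↦ (RCLike.norm_conj _).trans_le (ha _ (hmem hk)))
    (fun k hk ↦ (RCLike.norm_conj _).trans_le ((ha' _ (hmem hk)).trans_eq (by rw [norm_neg]))) T₀

lemma integral_sq_norm_sum_fourier_le (h : ChordSystem ρ S K c C) (hQ : minScale c C ≤ Q)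
    (hs : ∀ k ∈ s, k ≠ 0) (hγ : 0 ≤ γ) (ha : ∀ k ∈ s, ‖a k‖ ≤ γ)
    (ha' : ∀ k ∈ s, ‖a k‖ ≤ γ * Q ^ 2 / ‖k‖) :
    ∫ T in (Q ^ 4 + Q ^ 2 / 2 - Q ^ 2)..(Q ^ 4 + Q ^ 2 / 2 + Q ^ 2),
        ‖∑ k ∈ s, a k * 𝓕 (fun u ↦ (S k u : ℂ)) T‖ ^ 2 ≤ spectralConst K c C γ / Q ^ 10 := by
  have hQ₂ := h.two_le_of_minScale_le hQ
  set T₀ := Q ^ 4 + Q ^ 2 / 2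
  have hright : Continuous fun T ↦
      ‖∑ k ∈ s, a k * 𝓕 (fun u ↦ (endPart ρ S Q k u : ℂ)) T‖ ^ 2 :=
    continuous_sq_norm_sum_mul a fun k hk ↦ h.continuous_fourier_endPart (hs k hk) Q
  have hleft : Continuous fun T ↦
      ‖∑ k ∈ s, a k * conj (𝓕 (fun u ↦ (endPart ρ S Q (-k) u : ℂ)) T)‖ ^ 2 :=
    continuous_sq_norm_sum_mul a fun k hk ↦
      Complex.continuous_conj.comp (h.continuous_fourier_endPart (neg_ne_zero.2 (hs k hk)) Q)
  have hfull : Continuous fun T ↦ ‖∑ k ∈ s, a k * 𝓕 (fun u ↦ (S k u : ℂ)) T‖ ^ 2 :=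
    continuous_sq_norm_sum_mul a fun k hk ↦
      continuous_fourier_of_integrable (h.profile k (hs k hk)).integrable.ofReal
  have hends : Continuous fun T ↦
      ‖∑ k ∈ s, a k * 𝓕 (fun u ↦ (endPart ρ S Q k u : ℂ)) T‖ ^ 2 +
        ‖∑ k ∈ s, a k * conj (𝓕 (fun u ↦ (endPart ρ S Q (-k) u : ℂ)) T)‖ ^ 2 :=
    hright.add hleft
  calc _ ≤ ∫ T in (T₀ - Q ^ 2)..(T₀ + Q ^ 2),
          3 * (‖∑ k ∈ s, a k * 𝓕 (fun u ↦ (endPart ρ S Q k u : ℂ)) T‖ ^ 2 +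
            ‖∑ k ∈ s, a k * conj (𝓕 (fun u ↦ (endPart ρ S Q (-k) u : ℂ)) T)‖ ^ 2 +
            (300 * K * γ) ^ 2 / Q ^ 12) :=
        intervalIntegral.integral_mono_on (by linarith [sq_nonneg Q])
          (hfull.intervalIntegrable _ _)
          ((continuous_const.mul (hends.add continuous_const)).intervalIntegrable _ _) fun T ↦
          h.sq_norm_sum_fourier_le hQ₂ (h.one_div_sq_le_of_minScale_le hQ) hs hγ ha ha'
    _ = 3 * ((∫ T in (T₀ - Q ^ 2)..(T₀ + Q ^ 2),
            ‖∑ k ∈ s, a k * 𝓕 (fun u ↦ (endPart ρ S Q k u : ℂ)) T‖ ^ 2) +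
          (∫ T in (T₀ - Q ^ 2)..(T₀ + Q ^ 2),
            ‖∑ k ∈ s, a k * conj (𝓕 (fun u ↦ (endPart ρ S Q (-k) u : ℂ)) T)‖ ^ 2) +
          2 * (300 * K * γ) ^ 2 / Q ^ 10) := by
        rw [intervalIntegral.integral_const_mul,
          intervalIntegral.integral_add (hends.intervalIntegrable _ _)
            (continuous_const.intervalIntegrable _ _),
          intervalIntegral.integral_add (hright.intervalIntegrable _ _)
            (hleft.intervalIntegrable _ _), intervalIntegral.integral_const, smul_eq_mul]
        field_simp
        ring
    _ ≤ 3 * (34 ^ 2 * endPartConst K c C γ / Q ^ 10 + 34 ^ 2 * endPartConst K c C γ / Q ^ 10 +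
          2 * (300 * K * γ) ^ 2 / Q ^ 10) := by
        gcongr
        · exact h.integral_sq_norm_sum_endPart_le_of_ne_zero hQ hs hγ ha ha' T₀
        · exact h.integral_sq_norm_sum_conj_endPart_le hQ hs hγ ha ha' T₀
    _ = _ := by
        unfold spectralConst
        ring

end ChordSystem

/-! ### From the Fourier series to the lattice rest -/

lemma norm_sub_sum_le_of_hasSum {ι E : Type*} [SeminormedAddCommGroup E] {f : ι → E} {x : E}
    (hf : HasSum f x) {b : ι → ℝ} {δ : ℝ} {s : Finset ι} (hb : ∀ i ∉ s, ‖f i‖ ≤ b i)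
    (hs : ∀ t, Disjoint t s → ∑ i ∈ t, b i ≤ δ) : ‖x - ∑ i ∈ s, f i‖ ≤ δ := by
  classical
  refine le_of_tendsto (Filter.Tendsto.sub_const hf _).norm ?_
  filter_upwards [Filter.eventually_ge_atTop s] with u hu
  rw [← Finset.sum_sdiff hu, add_sub_cancel_right]
  exact (norm_sum_le_of_le _ fun i hi ↦ hb i (Finset.mem_sdiff.1 hi).2).trans
    (hs _ Finset.sdiff_disjoint)

lemma exists_finset_sum_div_norm_pow_three_le (M : ℝ) {δ : ℝ} (hδ : 0 < δ) :
    ∃ s : Finset (Fin 2 → ℤ), 0 ∈ s ∧ ∀ t, Disjoint t s → ∑ k ∈ t, M / ‖k‖ ^ 3 ≤ δ := by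
  have hsummable : Summable fun k : Fin 2 → ℤ ↦ M / ‖k‖ ^ 3 := by
    refine ((EisensteinSeries.summable_one_div_norm_rpow (k := 3) (by norm_num)).mul_left M).congr
      fun k ↦ ?_
    rw [Real.rpow_neg (norm_nonneg _), div_eq_mul_inv]
    norm_cast
  obtain ⟨s, hs⟩ := summable_iff_vanishing_norm.1 hsummable δ hδ
  exact ⟨insert 0 s, Finset.mem_insert_self _ _, fun t ht ↦ (le_abs_self _).trans
    (hs t (ht.mono_right (Finset.subset_insert _ _))).le⟩

/-- The coefficients of the frequencies in the Fourier series of the number of lattice points of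
`tΩ`, averaged over translations by `εΩ`. -/
def averagingCoeff (Ω : Set E2) (ε : ℝ) (k : Fin 2 → ℤ) : ℂ :=
  conj (indicatorFourier Ω (ε • ek k)) / volume.real Ω

/-- The Fourier series of the averaged lattice rest, restricted to the frequencies in `s` and
normalised by the factor `T²` of the dilation. -/
def frequencySum (Ω : Set E2) (s : Finset (Fin 2 → ℤ)) (ε T : ℝ) : ℂ :=
  ∑ k ∈ s, averagingCoeff Ω ε k * 𝓕 (fun u ↦ (chordLen Ω (ek k) u : ℂ)) T

/-- The support function and the chord lengths of `Ω` form a chord system with constants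
`K`, `c`, `C`. -/
abbrev HasChordBounds (Ω : Set E2) (K c C : ℝ) : Prop :=
  ChordSystem (fun x ↦ suppFn Ω (WithLp.toLp 2 x)) (fun k ↦ chordLen Ω (ek k)) K c C

namespace IsConvexDomain

variable {Ω : Set E2} {K c C Q ε t t' T : ℝ} {k : Fin 2 → ℤ} {s : Finset (Fin 2 → ℤ)}

lemma smul_subset_smul (h : IsConvexDomain Ω) (ht : 0 < t) (htt' : t ≤ t') : t • Ω ⊆ t' • Ω := by
  have ht' : 0 < t' := ht.trans_le htt'
  rintro _ ⟨x, hx, rfl⟩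
  refine ⟨(t / t') • x, h.convex.smul_mem_of_zero_mem h.zero_mem hx
    ⟨by positivity, (div_le_one ht').2 htt'⟩, ?_⟩
  simp only [smul_smul, mul_div_cancel₀ _ ht'.ne']

lemma monotoneOn_latticeCount_smul (h : IsConvexDomain Ω) :
    MonotoneOn (fun t : ℝ ↦ (latticeCount (t • Ω) : ℝ)) (Ioi 0) := fun _ ht t' _ htt' ↦
  Nat.cast_le.2 (latticeCount_mono (h.isBounded.smul₀ t') (h.smul_subset_smul ht htt'))

lemma intervalIntegrable_sq_latticeRest (h : IsConvexDomain Ω) (ht : 0 < t) (ht' : 0 < t') :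
    IntervalIntegrable (fun t ↦ latticeRest Ω t ^ 2) volume t t' := by
  have hmono : MonotoneOn (fun t : ℝ ↦ (latticeCount (t • Ω) : ℝ)) (uIcc t t') :=
    h.monotoneOn_latticeCount_smul.mono fun _ hx ↦ (lt_inf_iff.2 ⟨ht, ht'⟩).trans_le hx.1
  have hmono_sq : MonotoneOn (fun t : ℝ ↦ (latticeCount (t • Ω) : ℝ) ^ 2) (uIcc t t') :=
    fun _ hx _ hy hxy ↦ pow_le_pow_left₀ (Nat.cast_nonneg _) (hmono hx hy hxy) 2
  have hcross := hmono.intervalIntegrable (μ := volume) |>.mul_continuousOn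
    (g := fun t ↦ 2 * (t ^ 2 * volume.real Ω)) (by fun_prop)
  have hmain : Continuous fun t : ℝ ↦ (t ^ 2 * volume.real Ω) ^ 2 := by fun_prop
  refine ((hmono_sq.intervalIntegrable.sub hcross).add (hmain.intervalIntegrable _ _)).congr
    fun t _ ↦ ?_
  simp only [latticeRest, Measure.real]
  ring

lemma norm_indicatorFourier_smul_le (h : IsConvexDomain Ω) (H : HasChordBounds Ω K c C)
    (hk : k ≠ 0) (hT : 0 < T) :
    ‖indicatorFourier Ω (T • ek k)‖ ≤ K / (‖k‖ * √‖k‖) / (T * √T) := by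
  rw [indicatorFourier, h.fourier_indicator_smul (ek_ne_zero hk)]
  exact (H.profile k hk).norm_fourier_le hT

lemma averagingCoeff_zero (h : IsConvexDomain Ω) (ε : ℝ) : averagingCoeff Ω ε 0 = 1 := by
  rw [averagingCoeff, ek_zero, smul_zero, indicatorFourier_zero h.isOpen.measurableSet,
    Complex.conj_ofReal, div_self (Complex.ofReal_ne_zero.2 h.volume_real_pos.ne')]

lemma norm_averagingCoeff (Ω : Set E2) (ε : ℝ) (k : Fin 2 → ℤ) :
    ‖averagingCoeff Ω ε k‖ = ‖indicatorFourier Ω (|ε| • ek k)‖ / volume.real Ω := by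
  rw [averagingCoeff, norm_div, RCLike.norm_conj, Complex.norm_real, Real.norm_eq_abs,
    abs_of_nonneg measureReal_nonneg]
  rcases abs_choice ε with habs | habs <;> rw [habs]
  rw [neg_smul, indicatorFourier_neg, RCLike.norm_conj]

lemma norm_averagingCoeff_le_one (h : IsConvexDomain Ω) (ε : ℝ) (k : Fin 2 → ℤ) :
    ‖averagingCoeff Ω ε k‖ ≤ 1 := by
  rw [norm_averagingCoeff]
  exact (div_le_one h.volume_real_pos).2 (norm_indicatorFourier_le h.isOpen.measurableSet _)

lemma norm_averagingCoeff_le (h : IsConvexDomain Ω) (H : HasChordBounds Ω K c C)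
    (hk : k ≠ 0) (hQ : 0 < Q) (hε : |ε| = 1 / Q ^ 2) :
    ‖averagingCoeff Ω ε k‖ ≤ K / volume.real Ω * Q ^ 3 / (‖k‖ * √‖k‖) := by
  have hsqrt : √(1 / Q ^ 2) = 1 / Q := by
    rw [Real.sqrt_div zero_le_one, Real.sqrt_one, Real.sqrt_sq hQ.le]
  have hdecay := h.norm_indicatorFourier_smul_le H hk (T := 1 / Q ^ 2) (by positivity)
  rw [hsqrt] at hdecay
  rw [norm_averagingCoeff, hε]
  calc _ ≤ K / (‖k‖ * √‖k‖) / (1 / Q ^ 2 * (1 / Q)) / volume.real Ω := by gcongr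
    _ = _ := by field_simp

lemma norm_averagingCoeff_le_div_norm (h : IsConvexDomain Ω) (H : HasChordBounds Ω K c C)
    (hk : k ≠ 0) (hQ : 0 < Q) (hε : |ε| = 1 / Q ^ 2) :
    ‖averagingCoeff Ω ε k‖ ≤ (1 + K / volume.real Ω) * Q ^ 2 / ‖k‖ := by
  have hnorm : 0 < ‖k‖ := norm_pos_iff.2 hk
  have hratio : 0 ≤ K / volume.real Ω := div_nonneg H.K_nonneg h.volume_real_pos.le
  rcases le_or_gt (Q ^ 2) ‖k‖ with hlarge | hsmall
  · have hsqrt : Q ≤ √‖k‖ := Real.le_sqrt_of_sq_le hlarge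
    calc _ ≤ K / volume.real Ω * Q ^ 3 / (‖k‖ * √‖k‖) := h.norm_averagingCoeff_le H hk hQ hε
      _ ≤ K / volume.real Ω * Q ^ 3 / (‖k‖ * Q) := by gcongr
      _ = K / volume.real Ω * Q ^ 2 / ‖k‖ := by field_simp
      _ ≤ _ := by gcongr; linarith
  · refine (h.norm_averagingCoeff_le_one ε k).trans ((le_div_iff₀ hnorm).2 ?_)
    nlinarith [sq_nonneg Q]

lemma norm_sq_mul_indicatorFourier_mul_averagingCoeff_le (h : IsConvexDomain Ω)
    (H : HasChordBounds Ω K c C) (hk : k ≠ 0) (hQ : 0 < Q) (hε : |ε| = 1 / Q ^ 2) (hT : 1 ≤ T) :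
    ‖(T : ℂ) ^ 2 * indicatorFourier Ω (T • ek k) * averagingCoeff Ω ε k‖ ≤
      T * K * (K / volume.real Ω * Q ^ 3) / ‖k‖ ^ 3 := by
  have hK := H.K_nonneg
  have hvol := h.volume_real_pos
  have hnorm : 0 < ‖k‖ := norm_pos_iff.2 hk
  have : 0 < √‖k‖ := Real.sqrt_pos.2 hnorm
  rw [norm_mul, norm_mul, norm_pow, Complex.norm_real, Real.norm_eq_abs, sq_abs]
  calc _ ≤ T ^ 2 * (K / (‖k‖ * √‖k‖) / (T * √T)) *
          (K / volume.real Ω * Q ^ 3 / (‖k‖ * √‖k‖)) := by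
        gcongr
        · exact h.norm_indicatorFourier_smul_le H hk (by linarith)
        · exact h.norm_averagingCoeff_le H hk hQ hε
    _ ≤ T ^ 2 * (K / (‖k‖ * √‖k‖) / (T * 1)) *
          (K / volume.real Ω * Q ^ 3 / (‖k‖ * √‖k‖)) := by
        gcongr
        exact Real.one_le_sqrt.2 hT
    _ = T * K * (K / volume.real Ω * Q ^ 3) / (‖k‖ ^ 2 * √‖k‖ ^ 2) := by field_simp
    _ = _ := by
        rw [Real.sq_sqrt hnorm.le]
        ring

lemma exists_finset_abs_average_sub_le (h : IsConvexDomain Ω) (H : HasChordBounds Ω K c C)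
    (hQ : 0 < Q) (T₀ : ℝ) : ∃ s : Finset (Fin 2 → ℤ), (∀ k ∈ s, k ≠ 0) ∧
      ∀ ε T : ℝ, |ε| = 1 / Q ^ 2 → 1 ≤ T → T ≤ T₀ →
        |(⨍ y in ε • Ω, (latticeCount ((y + ·) ⁻¹' (T • Ω)) : ℝ)) - T ^ 2 * volume.real Ω| ≤
          1 + T ^ 2 * ‖frequencySum Ω s ε T‖ := by
  have hK := H.K_nonneg
  have hvol := h.volume_real_pos
  obtain ⟨s, hs₀, hs⟩ := exists_finset_sum_div_norm_pow_three_le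
    (T₀ * K * (K / volume.real Ω * Q ^ 3)) one_pos
  refine ⟨s.erase 0, fun k hk ↦ Finset.ne_of_mem_erase hk, fun ε T hε hT hTT₀ ↦ ?_⟩
  have hε₀ : ε ≠ 0 := abs_pos.1 (hε ▸ by positivity)
  have hseries : HasSum
      (fun k ↦ (T : ℂ) ^ 2 * indicatorFourier Ω (T • ek k) * averagingCoeff Ω ε k) _ :=
    h.hasSum_average_latticeCount (by linarith) hε₀
  have htail := norm_sub_sum_le_of_hasSum hseries
    (fun k hk ↦ (h.norm_sq_mul_indicatorFourier_mul_averagingCoeff_le H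
      (ne_of_mem_of_not_mem hs₀ hk).symm hQ hε hT).trans (by gcongr)) hs
  have hsum : ∑ k ∈ s, (T : ℂ) ^ 2 * indicatorFourier Ω (T • ek k) * averagingCoeff Ω ε k =
      ((T ^ 2 * volume.real Ω : ℝ) : ℂ) + (T : ℂ) ^ 2 * frequencySum Ω (s.erase 0) ε T := by
    rw [← Finset.add_sum_erase s _ hs₀, h.averagingCoeff_zero, ek_zero, smul_zero,
      indicatorFourier_zero h.isOpen.measurableSet, frequencySum, Finset.mul_sum]
    push_cast
    refine congr_arg₂ _ (mul_one _) (Finset.sum_congr rfl fun k hk ↦ ?_)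
    rw [indicatorFourier, h.fourier_indicator_smul (ek_ne_zero (Finset.ne_of_mem_erase hk))]
    ring
  rw [hsum, ← sub_sub, ← Complex.ofReal_sub] at htail
  rw [← Real.norm_eq_abs, ← Complex.norm_real]
  refine (norm_le_norm_sub_add _ _).trans (add_le_add htail (le_of_eq ?_))
  rw [norm_mul, norm_pow, Complex.norm_real, Real.norm_eq_abs, sq_abs]

lemma abs_latticeRest_le_of_abs_average_sub_le (h : IsConvexDomain Ω) (hε : 0 < ε) (hεt : ε < t)
    {B₁ B₂ : ℝ}
    (h₁ : |(⨍ y in ε • Ω, (latticeCount ((y + ·) ⁻¹' ((t + ε) • Ω)) : ℝ)) -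
      (t + ε) ^ 2 * volume.real Ω| ≤ B₁)
    (h₂ : |(⨍ y in (-ε) • Ω, (latticeCount ((y + ·) ⁻¹' ((t - ε) • Ω)) : ℝ)) -
      (t - ε) ^ 2 * volume.real Ω| ≤ B₂) :
    |latticeRest Ω t| ≤ B₁ + B₂ + (2 * t + ε) * ε * volume.real Ω := by
  have hupper := h.latticeCount_le_average (hε.trans hεt) hε
  have hlower := h.average_le_latticeCount hε hεt
  have hvol := h.volume_real_pos
  have : 0 ≤ ε ^ 2 * volume.real Ω := by positivity
  have : 0 ≤ t * ε * volume.real Ω := mul_nonneg (mul_nonneg (by linarith) hε.le) hvol.le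
  rw [latticeRest, ← Measure.real, abs_le]
  constructor <;> linarith [le_of_abs_le h₁, neg_le_of_abs_le h₂, (abs_nonneg _).trans h₁,
    (abs_nonneg _).trans h₂]

lemma sq_latticeRest_le (h : IsConvexDomain Ω) (hQ : 2 ≤ Q) (ht : t ∈ Icc (Q ^ 4) (Q ^ 4 + Q ^ 2))
    (hs : ∀ ε T : ℝ, |ε| = 1 / Q ^ 2 → 1 ≤ T → T ≤ 2 * Q ^ 4 →
      |(⨍ y in ε • Ω, (latticeCount ((y + ·) ⁻¹' (T • Ω)) : ℝ)) - T ^ 2 * volume.real Ω| ≤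
        1 + T ^ 2 * ‖frequencySum Ω s ε T‖) :
    latticeRest Ω t ^ 2 ≤ 3 * ((4 * volume.real Ω + 1) ^ 2 * Q ^ 4 +
      16 * Q ^ 16 * ‖frequencySum Ω s (1 / Q ^ 2) (t + 1 / Q ^ 2)‖ ^ 2 +
      16 * Q ^ 16 * ‖frequencySum Ω s (-(1 / Q ^ 2)) (t + -(1 / Q ^ 2))‖ ^ 2) := by
  have hvol := h.volume_real_pos
  have hsq : 4 ≤ Q ^ 2 := by nlinarith
  have hfourth : 4 * Q ^ 2 ≤ Q ^ 4 := by nlinarith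
  obtain ⟨ht₁, ht₂⟩ := ht
  have hεQ : 1 / Q ^ 2 * Q ^ 2 = 1 := by field_simp
  have hε₀ : 0 < 1 / Q ^ 2 := by positivity
  generalize 1 / Q ^ 2 = ε at hs hεQ hε₀ ⊢
  have hε₁ : ε ≤ 1 / 4 := by nlinarith
  have hplus := hs ε (t + ε) (abs_of_pos hε₀) (by linarith) (by linarith)
  have hminus := hs (-ε) (t - ε) ((abs_neg ε).trans (abs_of_pos hε₀)) (by linarith) (by linarith)
  have hrest := h.abs_latticeRest_le_of_abs_average_sub_le hε₀ (by linarith) hplus hminus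
  rw [← sub_eq_add_neg]
  have hx := norm_nonneg (frequencySum Ω s ε (t + ε))
  have hy := norm_nonneg (frequencySum Ω s (-ε) (t - ε))
  generalize ‖frequencySum Ω s ε (t + ε)‖ = x at hx hrest ⊢
  generalize ‖frequencySum Ω s (-ε) (t - ε)‖ = y at hy hrest ⊢
  have hshift : (2 * t + ε) * ε ≤ 4 * Q ^ 2 := by
    calc _ ≤ (2 * (Q ^ 4 + Q ^ 2) + ε) * ε := by gcongr
      _ = 2 * Q ^ 2 * (ε * Q ^ 2) + 2 * (ε * Q ^ 2) + ε ^ 2 := by ring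
      _ ≤ _ := by rw [hεQ]; nlinarith
  have hbound : |latticeRest Ω t| ≤
      (4 * volume.real Ω + 1) * Q ^ 2 + 4 * Q ^ 8 * x + 4 * Q ^ 8 * y := by
    calc _ ≤ 1 + (t + ε) ^ 2 * x + (1 + (t - ε) ^ 2 * y) + (2 * t + ε) * ε * volume.real Ω := hrest
      _ ≤ 1 + (2 * Q ^ 4) ^ 2 * x + (1 + (2 * Q ^ 4) ^ 2 * y) + 4 * Q ^ 2 * volume.real Ω := by
          gcongr <;> linarith
      _ ≤ _ := by linarith
  calc _ ≤ ((4 * volume.real Ω + 1) * Q ^ 2 + 4 * Q ^ 8 * x + 4 * Q ^ 8 * y) ^ 2 := by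
        rw [← sq_abs]
        gcongr
    _ ≤ 3 * (((4 * volume.real Ω + 1) * Q ^ 2) ^ 2 + (4 * Q ^ 8 * x) ^ 2 +
          (4 * Q ^ 8 * y) ^ 2) := add_add_sq_le _ _ _
    _ = _ := by ring

lemma continuous_frequencySum (H : HasChordBounds Ω K c C) (hs : ∀ k ∈ s, k ≠ 0) (ε : ℝ) :
    Continuous (frequencySum Ω s ε) :=
  continuous_finsetSum _ fun k hk ↦ continuous_const.mul
    (continuous_fourier_of_integrable (H.profile k (hs k hk)).integrable.ofReal)

lemma integral_sq_norm_frequencySum_le (h : IsConvexDomain Ω) (H : HasChordBounds Ω K c C)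
    (hQ : minScale c C ≤ Q) (hs : ∀ k ∈ s, k ≠ 0) (hε : |ε| = 1 / Q ^ 2) :
    ∫ t in (Q ^ 4)..(Q ^ 4 + Q ^ 2), ‖frequencySum Ω s ε (t + ε)‖ ^ 2 ≤
      spectralConst K c C (1 + K / volume.real Ω) / Q ^ 10 := by
  have hQ₂ := H.two_le_of_minScale_le hQ
  have hratio : 0 ≤ K / volume.real Ω := div_nonneg H.K_nonneg h.volume_real_pos.le
  have hε₁ : |ε| ≤ Q ^ 2 / 2 := by
    rw [hε, div_le_div_iff₀ (by positivity) two_pos]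
    nlinarith [mul_self_nonneg (Q ^ 2 - 4)]
  obtain ⟨hεl, hεu⟩ := abs_le.1 hε₁
  rw [intervalIntegral.integral_comp_add_right (fun T ↦ ‖frequencySum Ω s ε T‖ ^ 2)]
  calc _ ≤ ∫ T in (Q ^ 4 + Q ^ 2 / 2 - Q ^ 2)..(Q ^ 4 + Q ^ 2 / 2 + Q ^ 2),
          ‖frequencySum Ω s ε T‖ ^ 2 :=
        intervalIntegral.integral_mono_interval (by linarith) (by linarith [sq_nonneg Q])
          (by linarith) (.of_forall fun T ↦ sq_nonneg _)
          (((continuous_frequencySum H hs ε).norm.pow 2).intervalIntegrable _ _)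
    _ ≤ _ := H.integral_sq_norm_sum_fourier_le hQ hs (by linarith)
        (fun k _ ↦ (h.norm_averagingCoeff_le_one ε k).trans (by linarith))
        fun k hk ↦ h.norm_averagingCoeff_le_div_norm H (hs k hk) (by linarith) hε

lemma integral_sq_latticeRest_le_of_minScale_le (h : IsConvexDomain Ω)
    (H : HasChordBounds Ω K c C) (hQ : minScale c C ≤ Q) :
    ∫ t in (Q ^ 4)..(Q ^ 4 + Q ^ 2), latticeRest Ω t ^ 2 ≤
      3 * ((4 * volume.real Ω + 1) ^ 2 + 32 * spectralConst K c C (1 + K / volume.real Ω)) *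
        Q ^ 6 := by
  have hQ₂ := H.two_le_of_minScale_le hQ
  obtain ⟨s, hs, happrox⟩ := h.exists_finset_abs_average_sub_le H (by linarith) (2 * Q ^ 4)
  have hcont (ε : ℝ) : Continuous fun t ↦ 16 * Q ^ 16 * ‖frequencySum Ω s ε (t + ε)‖ ^ 2 :=
    continuous_const.mul
      (((continuous_frequencySum H hs ε).comp (continuous_add_const ε)).norm.pow 2)
  have hint (ε : ℝ) := (hcont ε).intervalIntegrable (μ := volume) (Q ^ 4) (Q ^ 4 + Q ^ 2)
  have hconst := intervalIntegrable_const (μ := volume) (a := Q ^ 4) (b := Q ^ 4 + Q ^ 2)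
    (c := (4 * volume.real Ω + 1) ^ 2 * Q ^ 4)
  set ε := 1 / Q ^ 2
  have habs : |ε| = ε := abs_of_nonneg (by positivity)
  calc _ ≤ ∫ t in (Q ^ 4)..(Q ^ 4 + Q ^ 2), 3 * ((4 * volume.real Ω + 1) ^ 2 * Q ^ 4 +
          16 * Q ^ 16 * ‖frequencySum Ω s ε (t + ε)‖ ^ 2 +
          16 * Q ^ 16 * ‖frequencySum Ω s (-ε) (t + -ε)‖ ^ 2) :=
        intervalIntegral.integral_mono_on (by linarith [sq_nonneg Q])
          (h.intervalIntegrable_sq_latticeRest (by positivity) (by positivity))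
          (((hconst.add (hint ε)).add (hint (-ε))).const_mul 3)
          fun t ht ↦ h.sq_latticeRest_le hQ₂ ht happrox
    _ = 3 * ((4 * volume.real Ω + 1) ^ 2 * Q ^ 6 +
          16 * Q ^ 16 * (∫ t in (Q ^ 4)..(Q ^ 4 + Q ^ 2), ‖frequencySum Ω s ε (t + ε)‖ ^ 2) +
          16 * Q ^ 16 *
            ∫ t in (Q ^ 4)..(Q ^ 4 + Q ^ 2), ‖frequencySum Ω s (-ε) (t + -ε)‖ ^ 2) := by
        rw [intervalIntegral.integral_const_mul,
          intervalIntegral.integral_add (hconst.add (hint ε)) (hint (-ε)),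
          intervalIntegral.integral_add hconst (hint ε), intervalIntegral.integral_const,
          intervalIntegral.integral_const_mul, intervalIntegral.integral_const_mul, smul_eq_mul]
        ring
    _ ≤ 3 * ((4 * volume.real Ω + 1) ^ 2 * Q ^ 6 +
          16 * Q ^ 16 * (spectralConst K c C (1 + K / volume.real Ω) / Q ^ 10) +
          16 * Q ^ 16 * (spectralConst K c C (1 + K / volume.real Ω) / Q ^ 10)) := by
        gcongr
        · exact h.integral_sq_norm_frequencySum_le H hQ hs habs
        · exact h.integral_sq_norm_frequencySum_le H hQ hs ((abs_neg ε).trans habs)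
    _ = _ := by field_simp; ring

end IsConvexDomain

/-! ### From short intervals to all intervals -/

section ShortIntervals

variable {f : ℝ → ℝ} {D R h x : ℝ}

lemma integral_add_sqrt_le_of_le (hf : ∀ t, 0 ≤ f t)
    (hint : ∀ x y, 0 < x → 0 < y → IntervalIntegrable f volume x y) (hD : 0 ≤ D)
    (hshort : ∀ x, 2 ≤ x → ∫ t in x..(x + √x), f t ≤ D * (x * √x))
    (hR : 2 ≤ R) (hRx : R ≤ x) (hx : x ≤ 3 * R) :
    ∫ t in x..(x + √R), f t ≤ 6 * D * (R * √R) := by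
  have hsqrt : √x ≤ 2 * √R := by
    rw [Real.sqrt_le_left (by positivity), mul_pow, Real.sq_sqrt (by linarith)]
    linarith
  have hx₀ : 0 < x := by linarith
  calc _ ≤ ∫ t in x..(x + √x), f t :=
        intervalIntegral.integral_mono_interval le_rfl (le_add_of_nonneg_right (Real.sqrt_nonneg _))
          (by gcongr) (.of_forall hf) (hint _ _ hx₀ (by positivity))
    _ ≤ D * (x * √x) := hshort x (hR.trans hRx)
    _ ≤ D * (3 * R * (2 * √R)) := by gcongr
    _ = _ := by ring

lemma integral_add_le_of_forall_integral_add_sqrt_le (hf : ∀ t, 0 ≤ f t)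
    (hint : ∀ x y, 0 < x → 0 < y → IntervalIntegrable f volume x y) (hD : 0 ≤ D)
    (hshort : ∀ x, 2 ≤ x → ∫ t in x..(x + √x), f t ≤ D * (x * √x))
    (hR : 2 ≤ R) (hRh : √R ≤ h) (hhR : h ≤ R) :
    ∫ t in R..(R + h), f t ≤ 12 * D * h * R := by
  have hsqrt : 0 < √R := Real.sqrt_pos.2 (by linarith)
  have hh : 0 < h := hsqrt.trans_le hRh
  set n := ⌈h / √R⌉₊
  have hcover : h ≤ n * √R := (div_le_iff₀ hsqrt).1 (Nat.le_ceil _)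
  have hexcess : n * √R ≤ h + √R := by
    calc _ ≤ (h / √R + 1) * √R := by gcongr; exact (Nat.ceil_lt_add_one (by positivity)).le
      _ = _ := by field_simp
  have hpos (i : ℕ) : 0 < R + i * √R := by positivity
  have hstep : ∀ i ∈ Finset.range n,
      ∫ t in (R + i * √R)..(R + (i + 1 : ℕ) * √R), f t ≤ 6 * D * (R * √R) := by
    intro i hi
    have hin : (i : ℝ) * √R ≤ n * √R := by gcongr; exact (Finset.mem_range.1 hi).le
    rw [Nat.cast_succ, add_one_mul, ← add_assoc]
    exact integral_add_sqrt_le_of_le hf hint hD hshort hR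
      (le_add_of_nonneg_right (by positivity)) (by linarith)
  calc _ ≤ ∫ t in (R + (0 : ℕ) * √R)..(R + n * √R), f t :=
        intervalIntegral.integral_mono_interval (by simp) (by linarith) (by linarith)
          (.of_forall hf) (hint _ _ (hpos 0) (hpos n))
    _ = ∑ i ∈ Finset.range n, ∫ t in (R + i * √R)..(R + (i + 1 : ℕ) * √R), f t :=
        (intervalIntegral.sum_integral_adjacent_intervals (a := fun i : ℕ ↦ R + i * √R)
          fun i _ ↦ hint _ _ (hpos i) (hpos (i + 1))).symm
    _ ≤ n • (6 * D * (R * √R)) := Finset.sum_le_card_nsmul _ _ _ hstep |>.trans_eq (by simp)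
    _ = 6 * D * R * (n * √R) := by rw [nsmul_eq_mul]; ring
    _ ≤ 6 * D * R * (2 * h) := mul_le_mul_of_nonneg_left (by linarith) (by positivity)
    _ = _ := by ring

end ShortIntervals

namespace IsConvexDomain

variable {Ω : Set E2} {t T R : ℝ}

lemma abs_latticeRest_le (h : IsConvexDomain Ω) (ht : 0 < t) (htT : t ≤ T) :
    |latticeRest Ω t| ≤ latticeCount (T • Ω) + T ^ 2 * volume.real Ω := by
  have hcount := h.monotoneOn_latticeCount_smul ht (ht.trans_le htT) htT
  have harea : t ^ 2 * volume.real Ω ≤ T ^ 2 * volume.real Ω := by gcongr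
  have : 0 ≤ t ^ 2 * volume.real Ω := by positivity
  have : (0 : ℝ) ≤ latticeCount (t • Ω) := Nat.cast_nonneg _
  rw [latticeRest, ← Measure.real, abs_le]
  constructor <;> linarith

lemma integral_sq_latticeRest_le_of_le (h : IsConvexDomain Ω) (hR : 1 ≤ R) (hRT : 2 * R ≤ T) :
    ∫ t in R..(R + √R), latticeRest Ω t ^ 2 ≤
      (latticeCount (T • Ω) + T ^ 2 * volume.real Ω) ^ 2 * (R * √R) := by
  have hsqrt : √R ≤ R := (Real.sqrt_le_left (by linarith)).2 (by nlinarith)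
  calc _ ≤ ∫ _ in R..(R + √R), (latticeCount (T • Ω) + T ^ 2 * volume.real Ω) ^ 2 := by
        refine intervalIntegral.integral_mono_on (by linarith [Real.sqrt_nonneg R])
          (h.intervalIntegrable_sq_latticeRest (by linarith) (by positivity))
          intervalIntegrable_const fun t ht ↦ ?_
        rw [← sq_abs]
        gcongr
        exact h.abs_latticeRest_le (by linarith [ht.1]) (by linarith [ht.2])
    _ = (latticeCount (T • Ω) + T ^ 2 * volume.real Ω) ^ 2 * (1 * √R) := by
        rw [intervalIntegral.integral_const, add_sub_cancel_left, smul_eq_mul]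
        ring
    _ ≤ _ := by gcongr

lemma exists_integral_sq_latticeRest_le (h : IsConvexDomain Ω) (hcurv : CurvBddBelow Ω) :
    ∃ D, 0 ≤ D ∧ ∀ R, 2 ≤ R → ∫ t in R..(R + √R), latticeRest Ω t ^ 2 ≤ D * (R * √R) := by
  obtain ⟨K, c, C, H⟩ := h.exists_chordSystem hcurv
  set D := 3 * ((4 * volume.real Ω + 1) ^ 2 + 32 * spectralConst K c C (1 + K / volume.real Ω))
  set T := 2 * minScale c C ^ 4
  set D' := (latticeCount (T • Ω) + T ^ 2 * volume.real Ω) ^ 2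
  refine ⟨max D D', le_max_of_le_right (sq_nonneg _), fun R hR ↦ ?_⟩
  rcases le_or_gt (minScale c C ^ 4) R with hlarge | hsmall
  · have hsq : √(√R) ^ 2 = √R := Real.sq_sqrt (Real.sqrt_nonneg _)
    have hfourth : √(√R) ^ 4 = R := by
      rw [show √(√R) ^ 4 = (√(√R) ^ 2) ^ 2 by ring, hsq, Real.sq_sqrt (by linarith)]
    have hscale : minScale c C ≤ √(√R) :=
      le_of_pow_le_pow_left₀ four_ne_zero (Real.sqrt_nonneg _) (hlarge.trans_eq hfourth.symm)
    have hmain := h.integral_sq_latticeRest_le_of_minScale_le H hscale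
    rw [show √(√R) ^ 6 = √(√R) ^ 4 * √(√R) ^ 2 by ring, hfourth, hsq] at hmain
    exact hmain.trans (by gcongr; exact le_max_left _ _)
  · exact (h.integral_sq_latticeRest_le_of_le (T := T) (by linarith) (by linarith)).trans
      (by gcongr; exact le_max_right _ _)

end IsConvexDomain

/-- Theorem 1.2: if `Ω` is a bounded open convex planar domain containing the
origin, with curvature bounded below in the generalized sense
`sup_{θ∈S¹} sup_{δ>0} δ^{-1/2} μ(θ,δ) < ∞`, then `𝒢_Ω(R,h) ≤ C_Ω √R` for `√R ≤ h ≤ R`,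
`R ≥ 2`. -/
theorem statement1 (Ω : Set E2) (hconv : Convex ℝ Ω) (hopen : IsOpen Ω)
    (hbdd : Bornology.IsBounded Ω) (h0 : (0 : E2) ∈ Ω) (hcurv : CurvBddBelow Ω) :
    ∃ C : ℝ, ∀ R h : ℝ, 2 ≤ R → Real.sqrt R ≤ h → h ≤ R →
      meanSquare Ω R h ≤ C * Real.sqrt R := by
  have hΩ : IsConvexDomain Ω := ⟨hconv, hopen, hbdd, h0⟩
  obtain ⟨D, hD, hshort⟩ := hΩ.exists_integral_sq_latticeRest_le hcurv
  refine ⟨√(12 * D), fun R h hR hRh hhR ↦ ?_⟩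
  have hh : 0 < h := (Real.sqrt_pos.2 (by linarith)).trans_le hRh
  have hlong := integral_add_le_of_forall_integral_add_sqrt_le (fun t ↦ sq_nonneg (latticeRest Ω t))
    (fun _ _ ↦ hΩ.intervalIntegrable_sq_latticeRest) hD hshort hR hRh hhR
  rw [meanSquare, ← Real.sqrt_mul (by positivity)]
  refine Real.sqrt_le_sqrt ?_
  calc (1 / h) * ∫ t in R..(R + h), latticeRest Ω t ^ 2 ≤ (1 / h) * (12 * D * h * R) := by gcongr
    _ = 12 * D * R := by field_simp

end
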